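/- Let a_1,…,a_k ∈ H have polynomial growth with lim_{t→+∞} |a_i(t)|/log t = +∞ for every 1 ≤ i ≤ k and lim_{t→+∞} |a_i(t) − a_j(t)|/log t = +∞ for all i ≠ j. Then for every weak-mixing measure-preserving system (X,μ,T) and all f_1,…,f_k ∈ L^∞(μ), the averages (1/N)∑_{n=1}^N ∏_{i=1}^k f_i∘T^{⌊a_i(n)⌋} converge in L²(μ), as N → ∞, to the constant function ∏_{i=1}^k ∫ f_i dμ. -/

import Mathlib

/-!
The averages are controlled by a decorrelation property `SC` of tuples of integer sequences:
correlations of a fixed mean-zero function with products of shifts of arbitrary bounded functions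
are small on average, uniformly in the bounded functions. The uniformity makes the property stable
under changing the sequences by bounded amounts (`SC.of_map`), so integer parts do no harm, and
under van der Corput's inequality (`SC.of_double`).

Averages over `n ∈ [N, 2N)` are replaced by averages over pairs `(n, Q)` with `n ∈ [N, 2N)` and
`Q` of size about `N ^ η`, for a small exponent `η`. Under the shift `n ↦ n + e Q`, Taylor
expansion turns a function `b` of the Hardy field into a finite sum `∑ j, Q ^ j e ^ j b^{(j)}(n) / j!`
up to bounded errors. Formal Taylor sums `∑ j, Q ^ j x_j^{(j)}(n)` thus play the role of polynomials
(`hardySys`): differencing lowers their degree, and the usual induction on complexity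
(`DegSys.induct`, `SC.of_degSys`) reduces the claim to sums of degree one, i.e. bounded differences.

For such sums `η` is taken generic (`Gen`), so that the speeds in `n` of the different terms of a sum
have different orders of magnitude. The sums of speed greater than `1 / n` are eliminated,
fastest first, by shifts of `n` by about the inverse of the speed (`SC.peel`); there all members of
the tuple move by bounded amounts, and weak mixing enters through the decay on average of
correlations (`WM.corr`, `SC.of_linear`). In a sum which is not of this kind the term of index `0`
vanishes, by the growth condition with respect to `log`, and the other terms converge fast enough for
the sum to be a polynomial in `Q` up to a bounded error (`Fam.slow_poly`); tuples of polynomials are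
treated by the same induction in the variable `Q` (`SC.poly`).

Together these give `Fam.decorrelate`. If one of the functions has mean zero, invariance of the
measure rewrites the `L²` norm of the average as a correlation with that function along the
differences of the sequences (`Av_zero`); the uniformity in `SC` allows the average itself to be one
of the bounded functions. Replacing the functions by their means one at a time gives the theorem.
-/

open Filter MeasureTheory Topology

noncomputable section

/-- A (simplified) Hardy field: a set of real functions, identified up to eventual equality
at `+∞`, that forms a field of germs closed under differentiation, contains all
logarithmico-exponential functions (generated by constants, the identity, field operations,
`exp` and `log`), and is closed under composition and compositional inversion of functions
tending to `+∞`. -/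
structure HardyField : Type where
  carrier : Set (ℝ → ℝ)
  mem_congr : ∀ {f g : ℝ → ℝ}, f ∈ carrier → f =ᶠ[atTop] g → g ∈ carrier
  smooth : ∀ f ∈ carrier, ∃ a : ℝ, ContDiffOn ℝ (⊤ : ℕ∞) f (Set.Ioi a)
  zero_mem : (0 : ℝ → ℝ) ∈ carrier
  one_mem : (1 : ℝ → ℝ) ∈ carrier
  add_mem : ∀ {f g : ℝ → ℝ}, f ∈ carrier → g ∈ carrier → f + g ∈ carrier
  neg_mem : ∀ {f : ℝ → ℝ}, f ∈ carrier → -f ∈ carrier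
  mul_mem : ∀ {f g : ℝ → ℝ}, f ∈ carrier → g ∈ carrier → f * g ∈ carrier
  inv_mem : ∀ {f : ℝ → ℝ}, f ∈ carrier → ¬f =ᶠ[atTop] (0 : ℝ → ℝ) →
    ∃ g ∈ carrier, f * g =ᶠ[atTop] (1 : ℝ → ℝ)
  deriv_mem : ∀ {f : ℝ → ℝ}, f ∈ carrier → deriv f ∈ carrier
  id_mem : (fun x : ℝ => x) ∈ carrier
  const_mem : ∀ c : ℝ, (fun _ : ℝ => c) ∈ carrier
  exp_comp_mem : ∀ {f : ℝ → ℝ}, f ∈ carrier → (fun x => Real.exp (f x)) ∈ carrier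
  log_comp_mem : ∀ {f : ℝ → ℝ}, f ∈ carrier → Tendsto f atTop atTop →
    (fun x => Real.log (f x)) ∈ carrier
  comp_mem : ∀ {f g : ℝ → ℝ}, f ∈ carrier → g ∈ carrier → Tendsto g atTop atTop →
    (f ∘ g) ∈ carrier
  compInv_mem : ∀ {g : ℝ → ℝ}, g ∈ carrier → Tendsto g atTop atTop →
    ∃ h ∈ carrier, Tendsto h atTop atTop ∧ (fun x => g (h x)) =ᶠ[atTop] fun x : ℝ => x

/-- `f` has polynomial growth: `f(t)/t^d → 0` as `t → +∞` for some positive integer `d`. -/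
def PolynomialGrowth (f : ℝ → ℝ) : Prop :=
  ∃ d : ℕ, 0 < d ∧ Tendsto (fun t => f t / t ^ d) atTop (𝓝 0)

/-! ### Averages over finite sets -/

/-- The average of `φ` over a finite set. -/
def av {Ω : Type*} (s : Finset Ω) (φ : Ω → ℝ) : ℝ := (∑ ω ∈ s, φ ω) / (s.card : ℝ)

section Averages
variable {Ω : Type*} {s : Finset Ω}

lemma av_mono {φ ψ : Ω → ℝ} (h : ∀ ω ∈ s, φ ω ≤ ψ ω) : av s φ ≤ av s ψ :=
  div_le_div_of_nonneg_right (Finset.sum_le_sum h) (Nat.cast_nonneg _)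

lemma av_nonneg {φ : Ω → ℝ} (h : ∀ ω ∈ s, 0 ≤ φ ω) : 0 ≤ av s φ :=
  div_nonneg (Finset.sum_nonneg h) (Nat.cast_nonneg _)

lemma av_const_le (c : ℝ) (hc : 0 ≤ c) : av s (fun _ => c) ≤ c := by
  unfold av
  rcases s.eq_empty_or_nonempty with rfl | hs
  · simpa using hc
  · have : (s.card : ℝ) ≠ 0 := by exact_mod_cast hs.card_pos.ne'
    simp [this]

lemma av_le_of_le {φ : Ω → ℝ} {c : ℝ} (hc : 0 ≤ c) (h : ∀ ω ∈ s, φ ω ≤ c) : av s φ ≤ c :=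
  (av_mono h).trans (av_const_le c hc)

lemma av_add (φ ψ : Ω → ℝ) : av s (fun ω => φ ω + ψ ω) = av s φ + av s ψ := by
  simp [av, Finset.sum_add_distrib, add_div]

lemma av_mul_left (c : ℝ) (φ : Ω → ℝ) : av s (fun ω => c * φ ω) = c * av s φ := by
  rw [av, av, ← Finset.mul_sum, mul_div_assoc]

lemma av_sum {ι : Type*} (E : Finset ι) (ψ : ι → Ω → ℝ) :
    av s (fun ω => ∑ e ∈ E, ψ e ω) = ∑ e ∈ E, av s (ψ e) := by
  simp only [av, Finset.sum_div]
  rw [Finset.sum_comm]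

lemma av_le_sum {ι : Type*} (E : Finset ι) {φ : Ω → ℝ} {ψ : ι → Ω → ℝ}
    (hψ : ∀ e ω, 0 ≤ ψ e ω) (h : ∀ ω ∈ s, ∃ e ∈ E, φ ω ≤ ψ e ω) :
    av s φ ≤ ∑ e ∈ E, av s (ψ e) := by
  rw [← av_sum]
  refine av_mono fun ω hω => ?_
  obtain ⟨e, he, hle⟩ := h ω hω
  exact hle.trans (Finset.single_le_sum (f := fun e => ψ e ω) (fun e _ => hψ e ω) he)

/-- An injective map that moves few points out of `s` almost preserves averages over `s`. -/
lemma av_shift [DecidableEq Ω] {τ : Ω → Ω} (hτ : Function.Injective τ) {κ : ℝ} (hκ0 : 0 ≤ κ)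
    (hκ : (((s.filter fun ω => τ ω ∉ s).card : ℕ) : ℝ) ≤ κ * s.card)
    {φ : Ω → ℝ} (hφ : ∀ ω, |φ ω| ≤ 1) :
    |av s φ - av s (fun ω => φ (τ ω))| ≤ 2 * κ := by
  rcases s.eq_empty_or_nonempty with rfl | hs
  · simpa [av] using hκ0
  have hc : (0 : ℝ) < s.card := by exact_mod_cast hs.card_pos
  have h1 := Finset.sum_filter_add_sum_filter_not s (fun ω => τ ω ∈ s) (fun ω => φ (τ ω))
  set A := s.filter fun ω => τ ω ∈ s with hA
  have hAi : A.image τ ⊆ s := by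
    intro y hy
    obtain ⟨x, hx, rfl⟩ := Finset.mem_image.1 hy
    exact (Finset.mem_filter.1 hx).2
  have h2 : ∑ ω ∈ A, φ (τ ω) = ∑ ω ∈ A.image τ, φ ω :=
    (Finset.sum_image (fun x _ y _ h => hτ h)).symm
  have h3 := Finset.sum_sdiff (f := φ) hAi
  have hcard : A.card + (s.filter fun ω => τ ω ∉ s).card = s.card :=
    Finset.card_filter_add_card_filter_not _
  have hc2 : (s \ A.image τ).card = (s.filter fun ω => τ ω ∉ s).card := by
    rw [Finset.card_sdiff_of_subset hAi, Finset.card_image_of_injective _ hτ]; omega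
  have hb : ∀ (t : Finset Ω) (g : Ω → ℝ), (∀ ω, |g ω| ≤ 1) → |∑ ω ∈ t, g ω| ≤ t.card := by
    intro t g hg
    calc |∑ ω ∈ t, g ω| ≤ ∑ ω ∈ t, |g ω| := Finset.abs_sum_le_sum_abs _ _
      _ ≤ ∑ ω ∈ t, 1 := Finset.sum_le_sum fun ω _ => hg ω
      _ = t.card := by simp
  have hb1 := hb (s \ A.image τ) φ hφ
  have hb2 := hb (s.filter fun ω => τ ω ∉ s) (fun ω => φ (τ ω)) (fun ω => hφ _)
  rw [hc2] at hb1
  unfold av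
  rw [← sub_div, abs_div, abs_of_pos hc, div_le_iff₀ hc]
  have : ∑ ω ∈ s, φ ω - ∑ ω ∈ s, φ (τ ω) = ∑ ω ∈ s \ A.image τ, φ ω
      - ∑ ω ∈ s.filter (fun ω => τ ω ∉ s), φ (τ ω) := by
    rw [← h1, ← h3, h2]; ring
  rw [this]
  have := abs_sub (∑ ω ∈ s \ A.image τ, φ ω) (∑ ω ∈ s.filter (fun ω => τ ω ∉ s), φ (τ ω))
  linarith

end Averages

/-! ### Bounded functions and the van der Corput inequality -/

/-- Measurable functions bounded by `1` in absolute value. -/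
def Adm {X : Type*} [MeasurableSpace X] (f : X → ℝ) : Prop :=
  Measurable f ∧ ∀ x, |f x| ≤ 1

/-- The dynamical assumptions: `T` is an action of `ℤ` by measure-preserving maps, and the
product of `T 1` with itself is ergodic. -/
structure WM {X : Type*} [MeasurableSpace X] (μ : Measure X) (T : ℤ → X → X) : Prop where
  mp : ∀ n : ℤ, MeasurePreserving (T n) μ μ
  zero : T 0 = id
  add : ∀ m n : ℤ, T (m + n) = T m ∘ T n
  erg : Ergodic (fun p : X × X => (T 1 p.1, T 1 p.2)) (μ.prod μ)

section Dynamics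
variable {X : Type*} [MeasurableSpace X]

lemma adm_one : Adm (fun _ : X => (1 : ℝ)) := ⟨measurable_const, by simp⟩

lemma Adm.mul {f g : X → ℝ} (hf : Adm f) (hg : Adm g) : Adm (fun x => f x * g x) :=
  ⟨hf.1.mul hg.1, fun x => by
    rw [abs_mul]; exact mul_le_one₀ (hf.2 x) (abs_nonneg _) (hg.2 x)⟩

lemma Adm.prod {ι : Type*} {R : Finset ι} {F : ι → X → ℝ} (hF : ∀ i ∈ R, Adm (F i)) :
    Adm (fun x => ∏ i ∈ R, F i x) :=
  ⟨Finset.measurable_prod _ fun i hi => (hF i hi).1, fun x => by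
    rw [Finset.abs_prod]
    exact Finset.prod_le_one (fun i _ => abs_nonneg _) fun i hi => (hF i hi).2 x⟩

lemma Adm.comp {f : X → ℝ} (hf : Adm f) {S : X → X} (hS : Measurable S) :
    Adm (fun x => f (S x)) := ⟨hf.1.comp hS, fun _ => hf.2 _⟩

lemma Adm.smul {f : X → ℝ} (hf : Adm f) {c : ℝ} (hc : |c| ≤ 1) : Adm (fun x => c * f x) :=
  ⟨hf.1.const_mul c, fun x => by
    rw [abs_mul]; exact mul_le_one₀ hc (abs_nonneg _) (hf.2 x)⟩

variable {μ : Measure X} [IsProbabilityMeasure μ]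

lemma Adm.integrable {f : X → ℝ} (hf : Adm f) : Integrable f μ :=
  Integrable.of_bound hf.1.aestronglyMeasurable 1 (ae_of_all _ hf.2)

lemma Adm.abs_integral_le {f : X → ℝ} (hf : Adm f) : |∫ x, f x ∂μ| ≤ 1 := by
  have := norm_integral_le_of_norm_le_const (μ := μ) (f := f) (C := 1) (ae_of_all μ (fun x => hf.2 x))
  simpa using this

lemma sq_integral_le {f : X → ℝ} (hf : Adm f) : (∫ x, f x ∂μ) ^ 2 ≤ ∫ x, f x ^ 2 ∂μ := by
  have h2 : Integrable (fun x => f x ^ 2) μ := by simpa [sq] using (hf.mul hf).integrable (μ := μ)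
  set m := ∫ x, f x ∂μ
  have h : 0 ≤ ∫ x, (f x - m) ^ 2 ∂μ := integral_nonneg fun x => sq_nonneg _
  have e : ∫ x, (f x - m) ^ 2 ∂μ = ∫ x, (f x ^ 2 + (-2 * m) * f x) + m ^ 2 ∂μ := by
    congr 1; ext x; ring
  have h3 : Integrable (fun x => (-2 * m) * f x) μ := hf.integrable.const_mul _
  have h4 : Integrable (fun x => f x ^ 2 + (-2 * m) * f x) μ := h2.add h3
  rw [e, integral_add h4 (integrable_const _),
    integral_add h2 h3, integral_const_mul] at h
  simp at h
  nlinarith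

lemma sum_dist_le (a : ℕ → ℝ) (ha : ∀ e, 0 ≤ a e) (H d : ℕ) (hd : d < H) :
    ∑ d' ∈ Finset.range H, a (max d d' - min d d') ≤ 2 * ∑ e ∈ Finset.range H, a e := by
  have h1 : ∑ d' ∈ Finset.range H, a (max d d' - min d d') ≤
      ∑ d' ∈ Finset.range H, ((if d' ≤ d then a (d - d') else 0) +
        if d ≤ d' then a (d' - d) else 0) := by
    refine Finset.sum_le_sum fun d' _ => ?_
    rcases le_total d d' with h | h
    · rw [max_eq_right h, min_eq_left h, if_pos h]
      have : 0 ≤ (if d' ≤ d then a (d - d') else 0) := by split_ifs <;> simp [ha]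
      linarith
    · rw [max_eq_left h, min_eq_right h, if_pos h]
      have : 0 ≤ (if d ≤ d' then a (d' - d) else 0) := by split_ifs <;> simp [ha]
      linarith
  rw [Finset.sum_add_distrib, ← Finset.sum_filter, ← Finset.sum_filter] at h1
  have key : ∀ (g : ℕ → ℕ) (A : Finset ℕ), Set.InjOn g A → (∀ x ∈ A, g x < H) →
      ∑ x ∈ A, a (g x) ≤ ∑ e ∈ Finset.range H, a e := by
    intro g A hg hA
    rw [← Finset.sum_image (f := a) (fun x hx y hy h => hg hx hy h)]
    refine Finset.sum_le_sum_of_subset_of_nonneg ?_ fun e _ _ => ha e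
    intro y hy
    obtain ⟨x, hx, rfl⟩ := Finset.mem_image.1 hy
    exact Finset.mem_range.2 (hA x hx)
  have k1 := key (fun d' => d - d') ((Finset.range H).filter fun d' => d' ≤ d)
    (by
      intro x hx y hy h
      simp only [Finset.coe_filter, Finset.mem_range, Set.mem_ofPred_eq] at hx hy h
      omega) (by intro x hx; simp at hx ⊢; omega)
  have k2 := key (fun d' => d' - d) ((Finset.range H).filter fun d' => d ≤ d')
    (by
      intro x hx y hy h
      simp only [Finset.coe_filter, Finset.mem_range, Set.mem_ofPred_eq] at hx hy h
      omega) (by intro x hx; simp at hx ⊢; omega)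
  linarith

/-- Van der Corput's inequality for correlations of a fixed function `G` with a family `U`
indexed by a finite set `s` that is almost invariant under the shifts `τ d`, `d < H`. -/
lemma vdc_core {Ω : Type*} [DecidableEq Ω] {s : Finset Ω} {τ : ℕ → Ω → Ω}
    (hadd : ∀ d e ω, τ (d + e) ω = τ e (τ d ω))
    (hinj : ∀ d, Function.Injective (τ d)) {H : ℕ} (hH : 0 < H) {κ δ : ℝ} (hκ0 : 0 ≤ κ)
    (hδ : 0 < δ)
    (hκ : ∀ d < H, (((s.filter fun ω => τ d ω ∉ s).card : ℕ) : ℝ) ≤ κ * s.card)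
    {G : X → ℝ} (hG : Adm G) {U : Ω → X → ℝ} (hU : ∀ ω, Adm (U ω))
    (hle : 2 / H * ∑ e ∈ Finset.range H, av s (fun ω => |∫ x, U ω x * U (τ e ω) x ∂μ|) + 2 * κ
      ≤ δ ^ 2) :
    av s (fun ω => |∫ x, G x * U ω x ∂μ|) ≤ 2 * κ + δ := by
  have hH' : (0 : ℝ) < H := by exact_mod_cast hH
  -- the signs of the correlations are absorbed into the family
  set θ : Ω → ℝ := fun ω => SignType.sign (∫ x, G x * U ω x ∂μ) with hθ
  have hθ1 : ∀ ω, |θ ω| ≤ 1 := by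
    intro ω
    simp only [hθ]
    rcases lt_trichotomy (∫ x, G x * U ω x ∂μ) 0 with h | h | h <;> simp [h]
  set V : Ω → X → ℝ := fun ω x => θ ω * U ω x with hV
  have hVA : ∀ ω, Adm (V ω) := fun ω => (hU ω).smul (hθ1 ω)
  have hVint : ∀ ω, ∫ x, G x * V ω x ∂μ = |∫ x, G x * U ω x ∂μ| := by
    intro ω
    have : (fun x => G x * V ω x) = fun x => θ ω * (G x * U ω x) := by
      ext x; simp only [hV]; ring
    rw [this, integral_const_mul]
    exact sign_mul_self _
  set φ : Ω → ℝ := fun ω => ∫ x, G x * V ω x ∂μ with hφ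
  have hφ1 : ∀ ω, |φ ω| ≤ 1 := fun ω => (hG.mul (hVA ω)).abs_integral_le
  set W : Ω → X → ℝ := fun ω x => (H : ℝ)⁻¹ * ∑ d ∈ Finset.range H, V (τ d ω) x with hW
  have hWA : ∀ ω, Adm (W ω) := by
    intro ω
    refine ⟨(Finset.measurable_sum _ fun d _ => (hVA _).1).const_mul _, fun x => ?_⟩
    simp only [hW]
    rw [abs_mul, abs_of_pos (inv_pos.2 hH'), inv_mul_le_iff₀ hH', mul_one]
    calc |∑ d ∈ Finset.range H, V (τ d ω) x| ≤ ∑ d ∈ Finset.range H, |V (τ d ω) x| :=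
          Finset.abs_sum_le_sum_abs _ _
      _ ≤ ∑ d ∈ Finset.range H, 1 := Finset.sum_le_sum fun d _ => (hVA _).2 x
      _ = H := by simp
  have hWint : ∀ ω, ∫ x, G x * W ω x ∂μ = (H : ℝ)⁻¹ * ∑ d ∈ Finset.range H, φ (τ d ω) := by
    intro ω
    simp only [hφ]
    rw [← integral_finsetSum _ (fun d _ => (hG.mul (hVA _)).integrable), ← integral_const_mul]
    congr 1; ext x; simp only [hW, Finset.mul_sum]
    refine Finset.sum_congr rfl fun d _ => by ring
  -- first step: replace the average by one over shifted points
  have step1 : av s φ ≤ 2 * κ + av s (fun ω => ∫ x, G x * W ω x ∂μ) := by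
    have h1 : ∀ d ∈ Finset.range H, av s φ ≤ 2 * κ + av s (fun ω => φ (τ d ω)) := by
      intro d hd
      have := (abs_le.1 (av_shift (hinj d) hκ0 (hκ d (Finset.mem_range.1 hd)) hφ1)).2
      linarith
    have h2 := Finset.sum_le_sum h1
    rw [Finset.sum_add_distrib, Finset.sum_const, Finset.sum_const, Finset.card_range,
      nsmul_eq_mul, nsmul_eq_mul, ← av_sum] at h2
    simp only [hWint]
    rw [av_mul_left]
    have h3 := mul_le_mul_of_nonneg_left h2 (inv_pos.2 hH').le
    have e1 : (H : ℝ)⁻¹ * (H * av s φ) = av s φ := by field_simp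
    have e2 : (H : ℝ)⁻¹ * (H * (2 * κ) + av s fun ω => ∑ e ∈ Finset.range H, φ (τ e ω)) =
      2 * κ + (H : ℝ)⁻¹ * av s fun ω => ∑ e ∈ Finset.range H, φ (τ e ω) := by field_simp
    rw [e1, e2] at h3
    exact h3
  -- second step: the mean square of the smoothed family
  set ψ : ℕ → Ω → ℝ := fun e ω => ∫ x, V ω x * V (τ e ω) x ∂μ with hψ
  have hψ1 : ∀ e ω, |ψ e ω| ≤ 1 := fun e ω => ((hVA ω).mul (hVA _)).abs_integral_le
  have hψU : ∀ e ω, ψ e ω ≤ |∫ x, U ω x * U (τ e ω) x ∂μ| := by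
    intro e ω
    refine (le_abs_self _).trans ?_
    have : (fun x => V ω x * V (τ e ω) x) = fun x => (θ ω * θ (τ e ω)) *
        (U ω x * U (τ e ω) x) := by ext x; simp only [hV]; ring
    simp only [hψ]
    rw [this, integral_const_mul, abs_mul, abs_mul]
    exact mul_le_of_le_one_left (abs_nonneg _) (mul_le_one₀ (hθ1 _) (abs_nonneg _) (hθ1 _))
  set a : ℕ → ℝ := fun e => av s (fun ω => |∫ x, U ω x * U (τ e ω) x ∂μ|) with ha
  have ha0 : ∀ e, 0 ≤ a e := fun e => av_nonneg fun ω _ => abs_nonneg _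
  have pair : ∀ d < H, ∀ d' < H, av s (fun ω => ∫ x, V (τ d ω) x * V (τ d' ω) x ∂μ) ≤
      a (max d d' - min d d') + 2 * κ := by
    have main : ∀ d < H, ∀ d' < H, d ≤ d' →
        av s (fun ω => ∫ x, V (τ d ω) x * V (τ d' ω) x ∂μ) ≤ a (d' - d) + 2 * κ := by
      intro d hd d' hd' hdd
      have e1 : (fun ω => ∫ x, V (τ d ω) x * V (τ d' ω) x ∂μ) = fun ω => ψ (d' - d) (τ d ω) := by
        ext ω
        simp only [hψ]
        rw [← hadd, Nat.add_sub_cancel' hdd]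
      rw [e1]
      have := (abs_le.1 (av_shift (hinj d) hκ0 (hκ d hd) (hψ1 (d' - d)))).1
      have h2 : av s (ψ (d' - d)) ≤ a (d' - d) := av_mono fun ω _ => hψU _ _
      linarith
    intro d hd d' hd'
    rcases le_total d d' with h | h
    · rw [max_eq_right h, min_eq_left h]; exact main d hd d' hd' h
    · rw [max_eq_left h, min_eq_right h]
      have := main d' hd' d hd h
      simpa only [mul_comm] using this
  have hsq : av s (fun ω => ∫ x, W ω x ^ 2 ∂μ) ≤ δ ^ 2 := by
    have e1 : (fun ω => ∫ x, W ω x ^ 2 ∂μ) = fun ω => ((H : ℝ)⁻¹) ^ 2 *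
        ∑ d ∈ Finset.range H, ∑ d' ∈ Finset.range H, ∫ x, V (τ d ω) x * V (τ d' ω) x ∂μ := by
      ext ω
      have : (fun x => W ω x ^ 2) = fun x => ((H : ℝ)⁻¹) ^ 2 *
          ∑ d ∈ Finset.range H, ∑ d' ∈ Finset.range H, V (τ d ω) x * V (τ d' ω) x := by
        ext x
        simp only [hW]
        rw [mul_pow, sq (∑ d ∈ Finset.range H, _), Finset.sum_mul_sum]
      rw [this, integral_const_mul, integral_finsetSum]
      · congr 1
        refine Finset.sum_congr rfl fun d _ => ?_
        rw [integral_finsetSum]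
        exact fun d' _ => ((hVA _).mul (hVA _)).integrable
      · exact fun d _ => integrable_finsetSum _ fun d' _ => ((hVA _).mul (hVA _)).integrable
    rw [e1, av_mul_left, av_sum]
    have h1 : ∑ d ∈ Finset.range H, av s (fun ω => ∑ d' ∈ Finset.range H,
        ∫ x, V (τ d ω) x * V (τ d' ω) x ∂μ) ≤
        ∑ d ∈ Finset.range H, (2 * ∑ e ∈ Finset.range H, a e + H * (2 * κ)) := by
      refine Finset.sum_le_sum fun d hd => ?_
      rw [av_sum]
      have h2 : ∑ d' ∈ Finset.range H, av s (fun ω => ∫ x, V (τ d ω) x * V (τ d' ω) x ∂μ) ≤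
          ∑ d' ∈ Finset.range H, (a (max d d' - min d d') + 2 * κ) :=
        Finset.sum_le_sum fun d' hd' => pair d (Finset.mem_range.1 hd) d' (Finset.mem_range.1 hd')
      rw [Finset.sum_add_distrib, Finset.sum_const, Finset.card_range, nsmul_eq_mul] at h2
      have := sum_dist_le a ha0 H d (Finset.mem_range.1 hd)
      linarith
    rw [Finset.sum_const, Finset.card_range, nsmul_eq_mul] at h1
    refine le_trans ?_ hle
    calc ((H : ℝ)⁻¹) ^ 2 * _ ≤ ((H : ℝ)⁻¹) ^ 2 *
          (H * (2 * ∑ e ∈ Finset.range H, a e + H * (2 * κ))) :=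
          mul_le_mul_of_nonneg_left h1 (by positivity)
      _ = _ := by field_simp
  have step2 : av s (fun ω => ∫ x, G x * W ω x ∂μ) ≤ δ := by
    have hb : ∀ ω, (∫ x, G x * W ω x ∂μ) ^ 2 ≤ ∫ x, W ω x ^ 2 ∂μ := by
      intro ω
      refine (sq_integral_le (hG.mul (hWA ω))).trans ?_
      refine integral_mono ?_ ?_ fun x => ?_
      · simpa [sq] using ((hG.mul (hWA ω)).mul (hG.mul (hWA ω))).integrable (μ := μ)
      · simpa [sq] using ((hWA ω).mul (hWA ω)).integrable (μ := μ)
      · show (G x * W ω x) ^ 2 ≤ W ω x ^ 2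
        rw [mul_pow]
        have : G x ^ 2 ≤ 1 := by
          have := hG.2 x
          rw [← sq_abs]; exact pow_le_one₀ (abs_nonneg _) this
        nlinarith [sq_nonneg (W ω x)]
    have : av s (fun ω => ∫ x, G x * W ω x ∂μ) ≤
        av s (fun ω => (1 / (2 * δ)) * (∫ x, W ω x ^ 2 ∂μ) + δ / 2) := by
      refine av_mono fun ω _ => ?_
      have h1 := hb ω
      have h2 := sq_nonneg ((∫ x, G x * W ω x ∂μ) - δ)
      have h3 : ∫ x, G x * W ω x ∂μ ≤ (1 / (2 * δ)) * ((∫ x, G x * W ω x ∂μ) ^ 2 + δ ^ 2) := by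
        rw [one_div, inv_mul_eq_div, le_div_iff₀ (by positivity)]
        nlinarith
      have h4 : (1 / (2 * δ)) * ((∫ x, G x * W ω x ∂μ) ^ 2 + δ ^ 2) ≤
          (1 / (2 * δ)) * ((∫ x, W ω x ^ 2 ∂μ) + δ ^ 2) := by gcongr
      have h5 : (1 / (2 * δ)) * δ ^ 2 = δ / 2 := by field_simp
      linarith
    rw [av_add, av_mul_left] at this
    have h6 := av_const_le (s := s) (δ / 2) (by positivity)
    have h7 : (1 / (2 * δ)) * av s (fun ω => ∫ x, W ω x ^ 2 ∂μ) ≤ (1 / (2 * δ)) * δ ^ 2 := by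
      gcongr
    have h5 : (1 / (2 * δ)) * δ ^ 2 = δ / 2 := by field_simp
    linarith
  have : av s (fun ω => |∫ x, G x * U ω x ∂μ|) = av s φ := by
    congr 1; ext ω; exact (hVint ω).symm
  rw [this]; linarith

end Dynamics

/-! ### Uniform decorrelation along a family of sequences -/

/-- Uniform decorrelation of a tuple of integer-valued functions `ρ i`, `i ∈ R`, on the blocks
`S N`: correlations of a fixed function of mean zero with products of shifts of arbitrary
bounded functions tend to zero on average, uniformly in these bounded functions. -/
def SC {X : Type*} [MeasurableSpace X] (μ : Measure X) (T : ℤ → X → X) {Ω ι : Type*}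
    (S : ℕ → Finset Ω) (ρ : ι → Ω → ℤ) (R : Finset ι) : Prop :=
  ∀ f : X → ℝ, Adm f → ∫ x, f x ∂μ = 0 → ∀ ε > 0, ∀ᶠ N in atTop, ∀ F : ι → X → ℝ,
    (∀ i, Adm (F i)) →
      av (S N) (fun ω => |∫ x, f x * ∏ i ∈ R, F i (T (ρ i ω) x) ∂μ|) ≤ ε

/-- `τ e` (`e = 0, 1, …`) are the iterates of an injective map of `Ω` which almost preserves
the block `S N` as `N → ∞`. -/
structure Shift {Ω : Type*} [DecidableEq Ω] (S : ℕ → Finset Ω) (τ : ℕ → Ω → Ω) : Prop where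
  add : ∀ d e ω, τ (d + e) ω = τ e (τ d ω)
  inj : ∀ d, Function.Injective (τ d)
  small : ∀ d, ∀ κ > (0 : ℝ), ∀ᶠ N in atTop,
    ((((S N).filter fun ω => τ d ω ∉ S N).card : ℕ) : ℝ) ≤ κ * (S N).card

section Framework
variable {X : Type*} [MeasurableSpace X] {μ : Measure X} [IsProbabilityMeasure μ]
  {T : ℤ → X → X} {Ω ι ι' : Type*} {S : ℕ → Finset Ω}

lemma WM.meas (hT : WM μ T) (n : ℤ) : Measurable (T n) := (hT.mp n).measurable

lemma WM.comp_apply (hT : WM μ T) (m n : ℤ) (x : X) : T m (T n x) = T (m + n) x := by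
  rw [hT.add]; rfl

lemma WM.integral_comp (hT : WM μ T) (n : ℤ) {g : X → ℝ} (hg : Measurable g) :
    ∫ x, g (T n x) ∂μ = ∫ x, g x ∂μ := by
  have h := (hT.mp n).map_eq
  conv_rhs => rw [← h]
  rw [integral_map (hT.meas n).aemeasurable hg.aestronglyMeasurable]

lemma SC.empty (ρ : ι → Ω → ℤ) : SC μ T S ρ ∅ := by
  intro f _ hf0 ε hε
  refine Eventually.of_forall fun N F _ => ?_
  refine av_le_of_le hε.le fun ω _ => ?_
  simp [hf0, hε.le]

/-- Decorrelation passes from `(ρ i)_{i ∈ R}` to a tuple whose members are at bounded distance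
from members of it. -/
lemma SC.of_map (hT : WM μ T) {ρ : ι → Ω → ℤ} {R : Finset ι} {ρ' : ι' → Ω → ℤ}
    {R' : Finset ι'} (φ : ι' → ι) (hφ : ∀ i ∈ R', φ i ∈ R)
    (hb : ∀ i ∈ R', ∃ C : ℕ, ∀ᶠ N in atTop, ∀ ω ∈ S N, |ρ' i ω - ρ (φ i) ω| ≤ C)
    (h : SC μ T S ρ R) : SC μ T S ρ' R' := by
  classical
  intro f hf hf0 ε hε
  have hb' : ∀ i : R', ∃ C : ℕ, ∀ᶠ N in atTop, ∀ ω ∈ S N, |ρ' i ω - ρ (φ i) ω| ≤ C :=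
    fun i => hb i i.2
  choose C hC using hb'
  set E : Finset (R' → ℤ) := Fintype.piFinset fun i => Finset.Icc (-(C i : ℤ)) (C i) with hE
  have hε' : 0 < ε / (E.card + 1) := by positivity
  filter_upwards [h f hf hf0 _ hε', eventually_all.2 hC] with N hN hCN F hF
  set G : (R' → ℤ) → ι → X → ℝ := fun e j x => ∏ i : R', if φ i = j then F i (T (e i) x) else 1
    with hG
  have hGA : ∀ e j, Adm (G e j) := by
    intro e j
    refine Adm.prod fun i _ => ?_
    split_ifs
    · exact (hF i).comp (hT.meas _)
    · exact adm_one
  refine (av_le_sum E (ψ := fun e ω => |∫ x, f x * ∏ j ∈ R, G e j (T (ρ j ω) x) ∂μ|)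
    (fun _ _ => abs_nonneg _) fun ω hω => ?_).trans ?_
  · refine ⟨fun i => ρ' i ω - ρ (φ i) ω, ?_, ?_⟩
    · rw [hE, Fintype.mem_piFinset]
      exact fun i => Finset.mem_Icc.2 (abs_le.1 (hCN i ω hω))
    · refine le_of_eq ?_
      congr 2; ext x; congr 1
      simp only [hG]
      rw [Finset.prod_comm, ← Finset.prod_coe_sort]
      refine Finset.prod_congr rfl fun i _ => ?_
      rw [Finset.prod_ite_eq, if_pos (hφ i i.2), hT.comp_apply]
      congr 2; ring
  · calc _ ≤ ∑ e ∈ E, ε / (E.card + 1) := Finset.sum_le_sum fun e _ => hN _ (hGA e)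
      _ = E.card * (ε / (E.card + 1)) := by simp
      _ ≤ ε := by
        rw [mul_div_assoc', div_le_iff₀ (by positivity)]
        nlinarith

lemma SC.subset (hT : WM μ T) [DecidableEq ι] {ρ : ι → Ω → ℤ} {R R' : Finset ι} (h : R' ⊆ R)
    (hR : SC μ T S ρ R) : SC μ T S ρ R' :=
  hR.of_map hT id h fun i _ => ⟨0, Eventually.of_forall fun N ω _ => by simp⟩

variable [DecidableEq Ω]

/-- The van der Corput step: the member `q` of the tuple is eliminated at the cost of
doubling the others. -/
lemma SC.of_step (hT : WM μ T) [DecidableEq ι] {ρ : ι → Ω → ℤ} {R : Finset ι} {q : ι} (hq : q ∉ R)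
    {τ : ℕ → Ω → Ω} (hτ : Shift S τ)
    (h : ∀ f : X → ℝ, Adm f → ∫ x, f x ∂μ = 0 → ∀ ε > 0, ∃ H : ℕ, 0 < H ∧ ∀ᶠ N in atTop,
      ∀ F : ι → X → ℝ, (∀ i, Adm (F i)) → ∑ e ∈ Finset.range H, av (S N) (fun ω =>
        |∫ x, f x * (f (T (ρ q ω - ρ q (τ e ω)) x) * ((∏ i ∈ R, F i (T (ρ i ω) x)) *
          ∏ i ∈ R, F i (T (ρ i (τ e ω) - ρ q (τ e ω) + ρ q ω) x))) ∂μ|) ≤ ε * H) :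
    SC μ T S ρ (insert q R) := by
  intro f hf hf0 ε hε
  set δ := ε / 2 with hδ
  have hδ0 : 0 < δ := by positivity
  set κ := min (ε / 4) (δ ^ 2 / 4) with hκ
  have hκ0 : 0 < κ := by positivity
  obtain ⟨H, hH, hev⟩ := h f hf hf0 (δ ^ 2 / 4) (by positivity)
  have hH' : (0 : ℝ) < H := by exact_mod_cast hH
  have hsm : ∀ᶠ N in atTop, ∀ d ∈ Finset.range H,
      ((((S N).filter fun ω => τ d ω ∉ S N).card : ℕ) : ℝ) ≤ κ * (S N).card :=
    (Finset.eventually_all _).2 fun d _ => hτ.small d κ hκ0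
  filter_upwards [hev, hsm] with N hN hs F hF
  have hU : ∀ ω, Adm (fun x => f (T (-ρ q ω) x) * ∏ i ∈ R, F i (T (ρ i ω - ρ q ω) x)) :=
    fun ω => (hf.comp (hT.meas _)).mul (Adm.prod fun i _ => (hF i).comp (hT.meas _))
  have hmain := vdc_core (μ := μ) (s := S N) hτ.add hτ.inj hH hκ0.le hδ0
    (fun d hd => hs d (Finset.mem_range.2 hd)) (hF q) hU (by
      have h1 := hN F hF
      have h2 : ∑ e ∈ Finset.range H, av (S N) (fun ω =>
          |∫ x, (f (T (-ρ q ω) x) * ∏ i ∈ R, F i (T (ρ i ω - ρ q ω) x)) *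
            (f (T (-ρ q (τ e ω)) x) * ∏ i ∈ R, F i (T (ρ i (τ e ω) - ρ q (τ e ω)) x)) ∂μ|)
          ≤ δ ^ 2 / 4 * H := by
        refine le_trans (le_of_eq ?_) h1
        refine Finset.sum_congr rfl fun e _ => ?_
        congr 1; ext ω; congr 1
        rw [← hT.integral_comp (ρ q ω) ((hU ω).mul (hU (τ e ω))).1]
        congr 1; ext x
        simp only [hT.comp_apply, neg_add_cancel, hT.zero, id_eq, sub_add_cancel]
        rw [neg_add_eq_sub]; ring
      calc _ ≤ 2 / (H : ℝ) * (δ ^ 2 / 4 * H) + 2 * κ := by gcongr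
        _ = δ ^ 2 / 2 + 2 * κ := by field_simp; ring
        _ ≤ δ ^ 2 := by
          have : κ ≤ δ ^ 2 / 4 := min_le_right _ _
          linarith)
  have hk : κ ≤ ε / 4 := min_le_left _ _
  refine le_trans (le_of_eq ?_) (hmain.trans (by linarith))
  congr 1; ext ω; congr 1
  rw [← hT.integral_comp (ρ q ω) ((hF q).mul (hU ω)).1]
  congr 1; ext x
  simp only [hT.comp_apply, neg_add_cancel, hT.zero, id_eq, sub_add_cancel]
  rw [Finset.prod_insert hq]; ring

/-- The members of the tuple produced by a van der Corput step with pivot `q` and shift `e`. -/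
def dbl (ρ : ι → Ω → ℤ) (τ : ℕ → Ω → Ω) (q : ι) (e : ℕ) : Option (ι ⊕ ι) → Ω → ℤ
  | none => fun ω => ρ q ω - ρ q (τ e ω)
  | some (.inl i) => ρ i
  | some (.inr i) => fun ω => ρ i (τ e ω) - ρ q (τ e ω) + ρ q ω

/-- If for all but finitely many shifts the doubled tuple is decorrelated, so is the original
one. -/
lemma SC.of_double (hT : WM μ T) [DecidableEq ι] {ρ : ι → Ω → ℤ} {R : Finset ι} {q : ι} (hq : q ∉ R)
    {τ : ℕ → Ω → Ω} (hτ : Shift S τ) (B : Finset ℕ)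
    (hSC : ∀ e ∉ B, SC μ T S (dbl ρ τ q e) (Finset.insertNone (R.disjSum R))) :
    SC μ T S ρ (insert q R) := by
  refine SC.of_step hT hq hτ fun f hf hf0 ε hε => ?_
  obtain ⟨H, hH⟩ := exists_nat_gt ((B.card : ℝ) / (ε / 2))
  have hH0 : (0 : ℝ) < H := lt_of_le_of_lt (by positivity) hH
  refine ⟨H, by exact_mod_cast hH0, ?_⟩
  have hev : ∀ᶠ N in atTop, ∀ e ∈ Finset.range H, e ∉ B → ∀ F : Option (ι ⊕ ι) → X → ℝ,
      (∀ i, Adm (F i)) → av (S N) (fun ω => |∫ x, f x *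
        ∏ i ∈ Finset.insertNone (R.disjSum R), F i (T (dbl ρ τ q e i ω) x) ∂μ|) ≤ ε / 2 := by
    refine (Finset.eventually_all _).2 fun e _ => ?_
    by_cases he : e ∈ B
    · simp [he]
    · filter_upwards [hSC e he f hf hf0 (ε / 2) (by positivity)] with N hN _ using hN
  filter_upwards [hev] with N hN F hF
  have key : ∀ e ∈ Finset.range H, av (S N) (fun ω =>
        |∫ x, f x * (f (T (ρ q ω - ρ q (τ e ω)) x) * ((∏ i ∈ R, F i (T (ρ i ω) x)) *
          ∏ i ∈ R, F i (T (ρ i (τ e ω) - ρ q (τ e ω) + ρ q ω) x))) ∂μ|) ≤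
        ε / 2 + if e ∈ B then 1 else 0 := by
    intro e he
    split_ifs with hB
    · have : (1 : ℝ) ≤ ε / 2 + 1 := by linarith
      refine le_trans (av_le_of_le zero_le_one fun ω _ => ?_) this
      exact (hf.mul ((hf.comp (hT.meas _)).mul ((Adm.prod fun i _ => (hF i).comp (hT.meas _)).mul
        (Adm.prod fun i _ => (hF i).comp (hT.meas _))))).abs_integral_le
    · rw [add_zero]
      refine le_trans (le_of_eq ?_) (hN e he hB
        (fun i => i.elim f (Sum.elim F F)) ?_)
      · congr 1; ext ω; congr 2; ext x
        rw [Finset.prod_insertNone, Finset.prod_disjSum]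
        rfl
      · rintro (_ | i | i)
        · exact hf
        · exact hF i
        · exact hF i
  refine (Finset.sum_le_sum key).trans ?_
  rw [Finset.sum_add_distrib, Finset.sum_const, Finset.card_range, nsmul_eq_mul,
    Finset.sum_ite, Finset.sum_const_zero, add_zero, Finset.sum_const, nsmul_eq_mul, mul_one]
  have hc : (((Finset.range H).filter fun e => e ∈ B).card : ℝ) ≤ B.card := by
    exact_mod_cast Finset.card_le_card fun e he => (Finset.mem_filter.1 he).2
  rw [div_lt_iff₀ (by positivity)] at hH
  nlinarith

end Framework

/-! ### Decay of correlations on average -/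

lemma ergodic_corr {Y : Type*} [MeasurableSpace Y] {ν : Measure Y} [IsProbabilityMeasure ν]
    {S : Y → Y} (hS : Ergodic S ν) {g : Y → ℝ} (hg : Adm g) (hg0 : ∫ y, g y ∂ν = 0) :
    Tendsto (fun n : ℕ => (n : ℝ)⁻¹ * ∑ m ∈ Finset.range n, ∫ y, g y * g (S^[m] y) ∂ν)
      atTop (𝓝 0) := by
  have hmp : MeasurePreserving S ν ν := hS.toMeasurePreserving
  have hgL : MemLp g 2 ν := MemLp.of_bound hg.1.aestronglyMeasurable 1 (ae_of_all _ hg.2)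
  let U : Lp ℝ 2 ν →ₗᵢ[ℝ] Lp ℝ 2 ν := Lp.compMeasurePreservingₗᵢ ℝ S hmp
  let G : Lp ℝ 2 ν := hgL.toLp g
  have hU : ‖U.toContinuousLinearMap‖ ≤ 1 := U.norm_toContinuousLinearMap_le
  have hlim := ContinuousLinearMap.tendsto_birkhoffAverage_orthogonalProjection
    U.toContinuousLinearMap hU G
  have hperp : G ∈ (LinearMap.eqLocus (U.toContinuousLinearMap : Lp ℝ 2 ν →ₗ[ℝ] Lp ℝ 2 ν)
      ((1 : Lp ℝ 2 ν →L[ℝ] Lp ℝ 2 ν) : Lp ℝ 2 ν →ₗ[ℝ] Lp ℝ 2 ν))ᗮ := by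
    rw [Submodule.mem_orthogonal]
    intro h hh
    have hh' : Lp.compMeasurePreserving S hmp h = h := hh
    have hinv : (h : Y → ℝ) ∘ S =ᵐ[ν] h := by
      have := Lp.coeFn_compMeasurePreserving h hmp
      rw [hh'] at this
      exact this.symm
    obtain ⟨c, hc⟩ := hS.ae_eq_const_of_ae_eq_comp_ae (Lp.aestronglyMeasurable h) hinv
    rw [L2.inner_def]
    have : ∫ a, inner ℝ (h a) (G a) ∂ν = ∫ a, c * g a ∂ν := by
      refine integral_congr_ae ?_
      filter_upwards [hc, hgL.coeFn_toLp] with a h1 h2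
      rw [h1, h2]
      simp [mul_comm]
    rw [this, integral_const_mul, hg0, mul_zero]
  have hz : ((LinearMap.eqLocus (U.toContinuousLinearMap : Lp ℝ 2 ν →ₗ[ℝ] Lp ℝ 2 ν)
      ((1 : Lp ℝ 2 ν →L[ℝ] Lp ℝ 2 ν) : Lp ℝ 2 ν →ₗ[ℝ] Lp ℝ 2 ν)).orthogonalProjectionOnto G : Lp ℝ 2 ν) = 0 := by
    rw [Submodule.orthogonalProjectionOnto_eq_zero_iff.2 hperp]; rfl
  rw [hz] at hlim
  have h2 : Tendsto (fun n => inner ℝ G (birkhoffAverage ℝ U.toContinuousLinearMap id n G))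
      atTop (𝓝 (inner ℝ G (0 : Lp ℝ 2 ν))) := tendsto_const_nhds.inner hlim
  rw [inner_zero_right] at h2
  refine h2.congr fun n => ?_
  rw [birkhoffAverage, birkhoffSum, inner_smul_right, inner_sum]
  congr 1
  refine Finset.sum_congr rfl fun m _ => ?_
  have e1 : U.toContinuousLinearMap^[m] G =
      (hgL.comp_measurePreserving (hmp.iterate m)).toLp _ := by
    have : (U.toContinuousLinearMap : Lp ℝ 2 ν → Lp ℝ 2 ν) = Lp.compMeasurePreserving S hmp := rfl
    rw [this, Lp.compMeasurePreserving_iterate]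
    rfl
  rw [id, e1, L2.inner_def]
  refine integral_congr_ae ?_
  filter_upwards [hgL.coeFn_toLp, (hgL.comp_measurePreserving (hmp.iterate m)).coeFn_toLp]
    with a h1 h2
  rw [h1, h2]
  simp [mul_comm]

section
variable {X : Type*} [MeasurableSpace X] {μ : Measure X} [IsProbabilityMeasure μ]
  {T : ℤ → X → X}

lemma WM.iterate (hT : WM μ T) (m : ℕ) (x : X) : (T 1)^[m] x = T m x := by
  induction m with
  | zero => simp [hT.zero]
  | succ m ih => rw [Function.iterate_succ_apply', ih, hT.comp_apply]; push_cast; ring_nf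

lemma WM.corr_nat (hT : WM μ T) {f : X → ℝ} (hf : Adm f) (hf0 : ∫ x, f x ∂μ = 0) :
    Tendsto (fun n : ℕ => (n : ℝ)⁻¹ * ∑ m ∈ Finset.range n, (∫ x, f x * f (T m x) ∂μ) ^ 2)
      atTop (𝓝 0) := by
  have hg : Adm (fun p : X × X => f p.1 * f p.2) :=
    Adm.mul ⟨hf.1.comp measurable_fst, fun p => hf.2 _⟩ ⟨hf.1.comp measurable_snd, fun p => hf.2 _⟩
  have h := ergodic_corr hT.erg hg (by rw [integral_prod_mul, hf0, mul_zero])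
  refine h.congr fun n => ?_
  congr 1
  refine Finset.sum_congr rfl fun m _ => ?_
  rw [sq, ← integral_prod_mul]
  congr 1; ext p
  have : (fun p : X × X => (T 1 p.1, T 1 p.2))^[m] p = (T m p.1, T m p.2) := by
    have : (fun p : X × X => (T 1 p.1, T 1 p.2)) = Prod.map (T 1) (T 1) := rfl
    rw [this, Prod.map_iterate, Prod.map_apply, hT.iterate, hT.iterate]
  rw [this]; ring

lemma WM.corr_neg (hT : WM μ T) {f : X → ℝ} (hf : Adm f) (m : ℤ) :
    ∫ x, f x * f (T (-m) x) ∂μ = ∫ x, f x * f (T m x) ∂μ := by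
  rw [← hT.integral_comp m (hf.mul (hf.comp (hT.meas (-m)))).1]
  congr 1; ext x
  simp only [hT.comp_apply, neg_add_cancel, hT.zero, id_eq]
  ring

/-- In a weak-mixing system the correlations of a function of mean zero tend to zero
on average. -/
lemma WM.corr (hT : WM μ T) {f : X → ℝ} (hf : Adm f) (hf0 : ∫ x, f x ∂μ = 0) {ε : ℝ} (hε : 0 < ε) :
    ∀ᶠ n : ℕ in atTop, ∑ m ∈ Finset.Icc (-(n : ℤ)) n, |∫ x, f x * f (T m x) ∂μ| ≤ ε * (n + 1) := by
  have h1 := (tendsto_order.1 (hT.corr_nat hf hf0)).2 ((ε / 2) ^ 2) (by positivity)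
  have h2 := (tendsto_add_atTop_nat 1).eventually h1
  filter_upwards [h2] with n hn
  set c : ℤ → ℝ := fun m => |∫ x, f x * f (T m x) ∂μ| with hc
  have hc0 : ∀ m, 0 ≤ c m := fun m => abs_nonneg _
  have hcn : ∀ m, c (-m) = c m := fun m => by simp only [hc, hT.corr_neg hf]
  have hA : ∑ m ∈ Finset.range (n + 1), c m ≤ ε / 2 * (n + 1) := by
    have hcs := sq_sum_le_card_mul_sum_sq (s := Finset.range (n + 1)) (f := fun m : ℕ => c m)
    rw [Finset.card_range] at hcs
    have e : ∑ m ∈ Finset.range (n + 1), c m ^ 2 =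
        ∑ m ∈ Finset.range (n + 1), (∫ x, f x * f (T m x) ∂μ) ^ 2 :=
      Finset.sum_congr rfl fun m _ => sq_abs _
    rw [e] at hcs
    have hn1 : (0 : ℝ) < ((n + 1 : ℕ) : ℝ) := by positivity
    rw [inv_mul_lt_iff₀ hn1] at hn
    have : (∑ m ∈ Finset.range (n + 1), c m) ^ 2 ≤ (ε / 2 * (n + 1)) ^ 2 := by
      push_cast at hn hcs
      nlinarith
    exact (abs_le_of_sq_le_sq' this (by positivity)).2
  have hsub : Finset.Icc (-(n : ℤ)) n ⊆ (Finset.range (n + 1)).image (fun m : ℕ => (m : ℤ)) ∪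
      (Finset.range (n + 1)).image (fun m : ℕ => -(m : ℤ)) := by
    intro m hm
    rw [Finset.mem_Icc] at hm
    simp only [Finset.mem_union, Finset.mem_image, Finset.mem_range]
    rcases le_total 0 m with h | h
    · exact Or.inl ⟨m.toNat, by omega, by omega⟩
    · exact Or.inr ⟨(-m).toNat, by omega, by omega⟩
  calc ∑ m ∈ Finset.Icc (-(n : ℤ)) n, c m ≤ _ :=
        Finset.sum_le_sum_of_subset_of_nonneg hsub fun m _ _ => hc0 m
    _ ≤ ∑ m ∈ (Finset.range (n + 1)).image (fun m : ℕ => (m : ℤ)), c m +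
        ∑ m ∈ (Finset.range (n + 1)).image (fun m : ℕ => -(m : ℤ)), c m := by
      rw [← Finset.sum_union_inter]
      have : 0 ≤ ∑ x ∈ (Finset.range (n + 1)).image (fun m : ℕ => (m : ℤ)) ∩
        (Finset.range (n + 1)).image (fun m : ℕ => -(m : ℤ)), c x :=
        Finset.sum_nonneg fun m _ => hc0 m
      linarith
    _ = ∑ m ∈ Finset.range (n + 1), c m + ∑ m ∈ Finset.range (n + 1), c m := by
      rw [Finset.sum_image (by intro a _ b _ h; simpa using h),
        Finset.sum_image (by intro a _ b _ h; simpa using h)]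
      simp only [hcn]
    _ ≤ ε * (n + 1) := by linarith

variable {Ω ι : Type*} {S : ℕ → Finset Ω} [DecidableEq Ω]

/-- Elimination of a member `q` of the tuple by shifts under which all members move by a
bounded amount, while `q` moves at a definite speed. -/
lemma SC.of_linear (hT : WM μ T) [DecidableEq ι] {ρ : ι → Ω → ℤ} {R : Finset ι} {q : ι} (hq : q ∉ R)
    {τ : ℕ → Ω → Ω} (hτ : Shift S τ) (hR : SC μ T S ρ R)
    (hb : ∀ i ∈ R, ∀ e, ∃ C : ℕ, ∀ᶠ N in atTop, ∀ ω ∈ S N, |ρ i (τ e ω) - ρ i ω| ≤ C)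
    (L : ℕ) (hL : ∀ e : ℕ, ∀ᶠ N in atTop, ∀ ω ∈ S N, |ρ q ω - ρ q (τ e ω)| ≤ L * (e + 1))
    (hinj : ∀ e e' : ℕ, e < e' → ∀ᶠ N in atTop, ∀ ω ∈ S N, ρ q (τ e ω) ≠ ρ q (τ e' ω)) :
    SC μ T S ρ (insert q R) := by
  refine SC.of_step hT hq hτ fun f hf hf0 ε hε => ?_
  -- the number of shifts is chosen by decay of correlations of `f`
  obtain ⟨H, hH1, hHc⟩ : ∃ H : ℕ, 0 < H ∧ ∑ m ∈ Finset.Icc (-((L * H : ℕ) : ℤ)) (L * H : ℕ),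
      |∫ x, f x * f (T m x) ∂μ| ≤ ε / 2 * H := by
    have h1 := hT.corr hf hf0 (ε := ε / 2 / (L + 1)) (by positivity)
    rw [eventually_atTop] at h1
    obtain ⟨n0, hn0⟩ := h1
    rcases Nat.eq_zero_or_pos L with rfl | hLpos
    · obtain ⟨H, hH⟩ := exists_nat_gt (1 / (ε / 2))
      have hH0 : (0 : ℝ) < H := lt_of_le_of_lt (by positivity) hH
      refine ⟨H, by exact_mod_cast hH0, ?_⟩
      simp only [zero_mul, Nat.cast_zero, neg_zero, Finset.Icc_self, Finset.sum_singleton]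
      rw [div_lt_iff₀ (by positivity)] at hH
      refine ((hf.mul (hf.comp (hT.meas _))).abs_integral_le).trans ?_
      linarith
    · refine ⟨n0 + 1, Nat.succ_pos _, (hn0 (L * (n0 + 1)) ?_).trans ?_⟩
      · nlinarith
      · rw [div_mul_eq_mul_div, div_le_iff₀ (by positivity)]
        have : (1 : ℝ) ≤ ((n0 + 1 : ℕ) : ℝ) := by exact_mod_cast Nat.succ_pos n0
        push_cast at this ⊢
        nlinarith
  refine ⟨H, hH1, ?_⟩
  have hH' : (0 : ℝ) < H := by exact_mod_cast hH1
  set c : ℤ → ℝ := fun m => ∫ x, f x * f (T m x) ∂μ with hc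
  set h : ℤ → X → ℝ := fun m x => (1 / 2) * (f x * f (T m x) - c m) with hh
  have hfm : ∀ m, Adm (fun x => f x * f (T m x)) := fun m => hf.mul (hf.comp (hT.meas m))
  have hc1 : ∀ m, |c m| ≤ 1 := fun m => (hfm m).abs_integral_le
  have hhA : ∀ m, Adm (h m) := by
    intro m
    refine ⟨((hfm m).1.sub_const _).const_mul _, fun x => ?_⟩
    simp only [hh]
    rw [abs_mul, abs_of_pos (by norm_num : (0 : ℝ) < 1 / 2)]
    have h1 := abs_sub (f x * f (T m x)) (c m)
    have h2 := (hfm m).2 x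
    have h3 := hc1 m
    simp only at h2
    linarith
  have hh0 : ∀ m, ∫ x, h m x ∂μ = 0 := by
    intro m
    simp only [hh]
    rw [integral_const_mul, integral_sub (hfm m).integrable (integrable_const _)]
    simp [hc]
  set I : Finset ℤ := Finset.Icc (-((L * H : ℕ) : ℤ)) (L * H : ℕ) with hI
  set η := ε / 2 / (2 * (I.card + 1)) with hη
  have hη0 : 0 < η := by positivity
  -- decorrelation of the doubled tuple without the member `q`
  have hdb : ∀ e, SC μ T S (fun i : ι ⊕ ι => dbl ρ τ q e (some i)) (R.disjSum R) := by
    intro e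
    refine hR.of_map hT (Sum.elim id id) ?_ ?_
    · rintro (i | i) hi <;> simpa using hi
    · rintro (i | i) hi
      · exact ⟨0, Eventually.of_forall fun N ω _ => by simp [dbl]⟩
      · have hi' : i ∈ R := by simpa using hi
        obtain ⟨C, hC⟩ := hb i hi' e
        refine ⟨C + L * (e + 1), ?_⟩
        filter_upwards [hC, hL e] with N h1 h2 ω hω
        have h1 := h1 ω hω
        have h2 := h2 ω hω
        simp only [dbl, Sum.elim_inr, id]
        rw [abs_le] at *
        push_cast at *
        constructor <;> linarith
  have hev : ∀ᶠ N in atTop, ∀ e ∈ Finset.range H, ∀ m ∈ I, ∀ F : ι ⊕ ι → X → ℝ,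
      (∀ i, Adm (F i)) → av (S N) (fun ω => |∫ x, h m x *
        ∏ i ∈ R.disjSum R, F i (T (dbl ρ τ q e (some i) ω) x) ∂μ|) ≤ η :=
    (Finset.eventually_all _).2 fun e _ => (Finset.eventually_all _).2 fun m _ =>
      hdb e (h m) (hhA m) (hh0 m) η hη0
  have hL' := (Finset.eventually_all (Finset.range H)).2 fun e _ => hL e
  have hinj' := (Finset.eventually_all (Finset.range H)).2 fun e _ =>
    (Finset.eventually_all (Finset.range H)).2 fun e' _ => (show ∀ᶠ N in atTop, e < e' →
      ∀ ω ∈ S N, ρ q (τ e ω) ≠ ρ q (τ e' ω) by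
        by_cases hlt : e < e'
        · filter_upwards [hinj e e' hlt] with N hN _ using hN
        · simp [hlt])
  filter_upwards [hev, hL', hinj'] with N hN hLN hiN F hF
  have hmI : ∀ e ∈ Finset.range H, ∀ ω ∈ S N, ρ q ω - ρ q (τ e ω) ∈ I := by
    intro e he ω hω
    have h1 := hLN e he ω hω
    have h2 : (e : ℤ) + 1 ≤ H := by have := Finset.mem_range.1 he; omega
    have h3 : (L : ℤ) * (e + 1) ≤ L * H := by gcongr
    rw [hI, Finset.mem_Icc, ← abs_le]
    push_cast
    exact h1.trans h3
  have key : ∀ e ∈ Finset.range H, av (S N) (fun ω =>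
        |∫ x, f x * (f (T (ρ q ω - ρ q (τ e ω)) x) * ((∏ i ∈ R, F i (T (ρ i ω) x)) *
          ∏ i ∈ R, F i (T (ρ i (τ e ω) - ρ q (τ e ω) + ρ q ω) x))) ∂μ|) ≤
        av (S N) (fun ω => |c (ρ q ω - ρ q (τ e ω))|) + ε / 2 := by
    intro e he
    set W : Ω → X → ℝ := fun ω x =>
      ∏ i ∈ R.disjSum R, (Sum.elim F F) i (T (dbl ρ τ q e (some i) ω) x) with hW
    have hFA : ∀ i, Adm (Sum.elim F F i) := by rintro (i | i) <;> exact hF i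
    have hWA : ∀ ω, Adm (W ω) := fun ω => Adm.prod fun i _ => (hFA i).comp (hT.meas _)
    have h1 : av (S N) (fun ω =>
        |∫ x, f x * (f (T (ρ q ω - ρ q (τ e ω)) x) * ((∏ i ∈ R, F i (T (ρ i ω) x)) *
          ∏ i ∈ R, F i (T (ρ i (τ e ω) - ρ q (τ e ω) + ρ q ω) x))) ∂μ|) ≤
        av (S N) (fun ω => |c (ρ q ω - ρ q (τ e ω))| +
          2 * ∑ m ∈ I, |∫ x, h m x * W ω x ∂μ|) := by
      refine av_mono fun ω hω => ?_
      set m := ρ q ω - ρ q (τ e ω) with hm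
      have e1 : ∀ x, f x * (f (T m x) * ((∏ i ∈ R, F i (T (ρ i ω) x)) *
          ∏ i ∈ R, F i (T (ρ i (τ e ω) - ρ q (τ e ω) + ρ q ω) x))) =
          c m * W ω x + 2 * (h m x * W ω x) := by
        intro x
        have : W ω x = (∏ i ∈ R, F i (T (ρ i ω) x)) *
          ∏ i ∈ R, F i (T (ρ i (τ e ω) - ρ q (τ e ω) + ρ q ω) x) := by
          simp only [hW]
          rw [Finset.prod_disjSum]
          rfl
        rw [← this]
        simp only [hh]
        ring
      simp_rw [e1]
      rw [integral_add ((hWA ω).integrable.const_mul _)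
        ((((hhA m).mul (hWA ω)).integrable).const_mul 2), integral_const_mul, integral_const_mul]
      refine (abs_add_le _ _).trans (add_le_add ?_ ?_)
      · rw [abs_mul]
        exact mul_le_of_le_one_right (abs_nonneg _) (hWA ω).abs_integral_le
      · rw [abs_mul, abs_two]
        gcongr
        exact Finset.single_le_sum (f := fun m => |∫ x, h m x * W ω x ∂μ|)
          (fun m _ => abs_nonneg _) (hmI e he ω hω)
    refine h1.trans ?_
    rw [av_add, av_mul_left, av_sum]
    have h2 : ∑ m ∈ I, av (S N) (fun ω => |∫ x, h m x * W ω x ∂μ|) ≤ ∑ m ∈ I, η :=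
      Finset.sum_le_sum fun m hm => hN e he m hm _ hFA
    rw [Finset.sum_const, nsmul_eq_mul] at h2
    have h3 : 2 * ((I.card : ℝ) * η) ≤ ε / 2 := by
      rw [hη]
      rw [← mul_assoc, mul_div_assoc', div_le_iff₀ (by positivity)]
      nlinarith
    linarith
  refine (Finset.sum_le_sum key).trans ?_
  rw [Finset.sum_add_distrib, Finset.sum_const, Finset.card_range, nsmul_eq_mul, ← av_sum]
  have h4 : av (S N) (fun ω => ∑ e ∈ Finset.range H, |c (ρ q ω - ρ q (τ e ω))|) ≤ ε / 2 * H := by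
    refine av_le_of_le (by positivity) fun ω hω => le_trans ?_ hHc
    have hio : Set.InjOn (fun e => ρ q ω - ρ q (τ e ω)) (Finset.range H : Set ℕ) := by
      intro a ha b hb hab
      simp only [sub_right_inj] at hab
      rcases lt_trichotomy a b with hlt | rfl | hlt
      · exact absurd hab (hiN a ha b hb hlt ω hω)
      · rfl
      · exact absurd hab.symm (hiN b hb a ha hlt ω hω)
    rw [← Finset.sum_image (f := fun m => |c m|) hio]
    refine Finset.sum_le_sum_of_subset_of_nonneg ?_ fun _ _ _ => abs_nonneg _
    intro m hm
    obtain ⟨e, he, rfl⟩ := Finset.mem_image.1 hm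
    exact hmI e he ω hω
  nlinarith

end

/-! ### Induction on the complexity of a tuple -/

/-- A group `V` of formal sequences with shift operators `σ e` and a filtration `G` by degree:
differencing lowers the degree, and only elements of degree at most `1` have two distinct shifts
that agree up to degree `0`. -/
structure DegSys (V : Type*) [AddCommGroup V] where
  σ : ℕ → V →+ V
  G : ℕ → AddSubgroup V
  mono : Monotone G
  σ_zero : ∀ v, σ 0 v = v
  der : ∀ e r v, v ∈ G (r + 1) → σ e v - v ∈ G r
  sep : ∀ e e' u, e ≠ e' → σ e u - σ e' u ∈ G 0 → u ∈ G 1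

namespace DegSys
variable {V : Type*} [AddCommGroup V] [DecidableEq V] (A : DegSys V)

/-- The new member obtained from `v` in a van der Corput step with pivot `q` and shift `e`. -/
def phi (q : V) (e : ℕ) (v : V) : V := A.σ e (v - q) + q

/-- The tuple produced by a van der Corput step with pivot `q` and shift `e`. -/
def stp (q : V) (e : ℕ) (R : Finset V) : Finset V := R ∪ (insert 0 R).image (A.phi q e)

lemma phi_sub_mem {q v : V} {e r : ℕ} (h : v - q ∈ A.G (r + 1)) : A.phi q e v - v ∈ A.G r := by
  have := A.der e r _ h
  have e1 : A.phi q e v - v = A.σ e (v - q) - (v - q) := by unfold phi; abel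
  rwa [e1]

/-- All but one of the shifts keep the degree of `phi q e v` positive. -/
lemma phi_bad {q v : V} (hv : v ∉ A.G 0) : ∃ B : Finset ℕ, ∀ e ∉ B, A.phi q e v ∉ A.G 0 := by
  by_cases h : ∃ e, A.phi q e v ∈ A.G 0
  · obtain ⟨e, he⟩ := h
    refine ⟨{e}, fun e' hne he' => hv ?_⟩
    have hne : e' ≠ e := by simpa using hne
    have h1 : A.σ e' (v - q) - A.σ e (v - q) ∈ A.G 0 := by
      have := (A.G 0).sub_mem he' he
      unfold phi at this
      simpa using this
    have h2 := A.phi_sub_mem (e := e) (A.sep _ _ _ hne h1)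
    have := (A.G 0).sub_mem he h2
    simpa using this
  · push Not at h
    exact ⟨∅, fun e _ => h e⟩

/-- Elimination of a whole class `C` of members which agree with `a` up to degree `r`, for a
family `E` of tuples stable under steps with pivots in this class. -/
lemma class_elim {P : Finset V → Prop}
    (merge : ∀ (a : V) (R C : Finset V), (∀ c ∈ C, c - a ∈ A.G 0) → P (insert a R) → P (R ∪ C))
    (step : ∀ (q : V) (R : Finset V) (B : Finset ℕ), (∀ e ∉ B, P (A.stp q e R)) → P (insert q R))
    (r : ℕ) : ∀ (a : V) (E : Finset V → Prop),
    (∀ R, E R → P R) →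
    (∀ R, E R → ∀ q, q - a ∈ A.G r → ∃ B : Finset ℕ, ∀ e ∉ B, E (A.stp q e R)) →
    ∀ R C : Finset V, E R → (∀ c ∈ C, c - a ∈ A.G r) → P (R ∪ C) := by
  induction r with
  | zero =>
    intro a E hEP hE R C hR hC
    refine merge a R C hC ?_
    obtain ⟨B, hB⟩ := hE R hR a (by simp [(A.G 0).zero_mem])
    exact step a R B fun e he => hEP _ (hB e he)
  | succ r ih =>
    intro a E hEP hE
    -- tuples of `E` enlarged by members of the class of `a`, refined by classes of `ℓ`
    have main : ∀ (ℓ : List V) (R C : Finset V), E R →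
        (∀ c ∈ C, c - a ∈ A.G (r + 1) ∧ ∃ b ∈ ℓ, c - b ∈ A.G r) → P (R ∪ C) := by
      intro ℓ
      induction ℓ with
      | nil =>
        intro R C hR hC
        have : C = ∅ := Finset.eq_empty_of_forall_notMem fun c hc => by
          simpa using (hC c hc).2
        rw [this, Finset.union_empty]
        exact hEP R hR
      | cons b ℓ ihℓ =>
        intro R C hR hC
        classical
        set C1 := C.filter fun c => c - b ∈ A.G r with hC1
        set C2 := C.filter fun c => ¬ c - b ∈ A.G r with hC2
        have hC2' : ∀ c ∈ C2, c - a ∈ A.G (r + 1) ∧ ∃ b ∈ ℓ, c - b ∈ A.G r := by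
          intro c hc
          rw [hC2, Finset.mem_filter] at hc
          obtain ⟨h1, b', hb', h2⟩ := hC c hc.1
          refine ⟨h1, b', ?_, h2⟩
          rcases List.mem_cons.1 hb' with rfl | h
          · exact absurd h2 hc.2
          · exact h
        have hun : R ∪ C = (R ∪ C2) ∪ C1 := by
          rw [Finset.union_assoc, Finset.union_comm C2, hC1, hC2, Finset.filter_union_filter_not_eq]
        rw [hun]
        rcases C1.eq_empty_or_nonempty with h0 | ⟨c0, hc0⟩
        · rw [h0, Finset.union_empty]; exact ihℓ R C2 hR hC2'
        have hc0' := Finset.mem_filter.1 hc0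
        have hba : b - a ∈ A.G (r + 1) := by
          have := (A.G (r + 1)).sub_mem (hC c0 hc0'.1).1 (A.mono (Nat.le_succ r) hc0'.2)
          simpa using this
        refine ih b (fun R' => ∃ R1 C', R' = R1 ∪ C' ∧ E R1 ∧
          ∀ c ∈ C', c - a ∈ A.G (r + 1) ∧ ∃ b ∈ ℓ, c - b ∈ A.G r) ?_ ?_ (R ∪ C2) C1
          ⟨R, C2, rfl, hR, hC2'⟩ (fun c hc => (Finset.mem_filter.1 hc).2)
        · rintro _ ⟨R1, C', rfl, h1, h2⟩
          exact ihℓ R1 C' h1 h2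
        · rintro _ ⟨R1, C', rfl, h1, h2⟩ q hq
          have hqa : q - a ∈ A.G (r + 1) := by
            have := (A.G (r + 1)).add_mem (A.mono (Nat.le_succ r) hq) hba
            simpa using this
          obtain ⟨B, hB⟩ := hE R1 h1 q hqa
          refine ⟨B, fun e he => ⟨A.stp q e R1, C' ∪ C'.image (A.phi q e), ?_, hB e he, ?_⟩⟩
          · unfold stp
            ext v
            simp only [Finset.mem_union, Finset.mem_image, Finset.mem_insert]
            constructor
            · rintro ((h | h) | ⟨w, (rfl | h | h), rfl⟩)
              · tauto
              · tauto
              · exact Or.inl (Or.inr ⟨0, Or.inl rfl, rfl⟩)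
              · exact Or.inl (Or.inr ⟨w, Or.inr h, rfl⟩)
              · exact Or.inr (Or.inr ⟨w, h, rfl⟩)
            · rintro ((h | ⟨w, (rfl | h), rfl⟩) | (h | ⟨w, h, rfl⟩))
              · tauto
              · exact Or.inr ⟨0, Or.inl rfl, rfl⟩
              · exact Or.inr ⟨w, Or.inr (Or.inl h), rfl⟩
              · tauto
              · exact Or.inr ⟨w, Or.inr (Or.inr h), rfl⟩
          · intro c hc
            rcases Finset.mem_union.1 hc with hc | hc
            · exact h2 c hc
            · obtain ⟨w, hw, rfl⟩ := Finset.mem_image.1 hc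
              obtain ⟨g1, b', hb', g2⟩ := h2 w hw
              have hwq : w - q ∈ A.G (r + 1) := by
                have := (A.G (r + 1)).sub_mem g1 hqa
                simpa using this
              have hp := A.phi_sub_mem (e := e) hwq
              refine ⟨?_, b', hb', ?_⟩
              · have := (A.G (r + 1)).add_mem (A.mono (Nat.le_succ r) hp) g1
                simpa using this
              · have := (A.G r).add_mem hp g2
                simpa using this
    intro R C hR hC
    exact main C.toList R C hR fun c hc => ⟨hC c hc, c, by simpa using hc, by simp [(A.G r).zero_mem]⟩

/-- A property of tuples stable under merging and van der Corput steps holds for all tuples of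
nonconstant members as soon as it holds for those of degree one. -/
theorem induct {P : Finset V → Prop}
    (merge : ∀ (a : V) (R C : Finset V), (∀ c ∈ C, c - a ∈ A.G 0) → P (insert a R) → P (R ∪ C))
    (step : ∀ (q : V) (R : Finset V) (B : Finset ℕ), (∀ e ∉ B, P (A.stp q e R)) → P (insert q R))
    {Al : V → Prop} (hAl0 : Al 0) (hAl : ∀ q e v, Al v → Al (A.phi q e v))
    (term : ∀ R : Finset V, (∀ x ∈ R, x ∈ A.G 1 ∧ x ∉ A.G 0 ∧ Al x) → P R) (D : ℕ) :
    ∀ R : Finset V, (∀ x ∈ R, x ∈ A.G (D + 1) ∧ x ∉ A.G 0 ∧ Al x) → P R := by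
  induction D with
  | zero => exact term
  | succ D ih =>
    have main : ∀ (ℓ : List V) (R : Finset V), (∀ x ∈ R, (x ∈ A.G (D + 2) ∧ x ∉ A.G 0 ∧ Al x) ∧
        (x ∈ A.G (D + 1) ∨ ∃ b ∈ ℓ, x - b ∈ A.G (D + 1))) → P R := by
      intro ℓ
      induction ℓ with
      | nil =>
        intro R hR
        refine ih R fun x hx => ⟨?_, (hR x hx).1.2⟩
        simpa using (hR x hx).2
      | cons b ℓ ihℓ =>
        intro R hR
        classical
        set C := R.filter fun c => c - b ∈ A.G (D + 1) with hC
        set R' := R.filter fun c => ¬ c - b ∈ A.G (D + 1) with hR'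
        by_cases hb : b ∈ A.G (D + 1)
        · refine ihℓ R fun x hx => ⟨(hR x hx).1, ?_⟩
          rcases (hR x hx).2 with h | ⟨b', hb', h⟩
          · exact Or.inl h
          · rcases List.mem_cons.1 hb' with rfl | hb'
            · left; simpa using (A.G (D + 1)).add_mem h hb
            · exact Or.inr ⟨b', hb', h⟩
        have hRR : ∀ x ∈ R', (x ∈ A.G (D + 2) ∧ x ∉ A.G 0 ∧ Al x) ∧
            (x ∈ A.G (D + 1) ∨ ∃ b ∈ ℓ, x - b ∈ A.G (D + 1)) := by
          intro x hx
          rw [hR', Finset.mem_filter] at hx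
          refine ⟨(hR x hx.1).1, ?_⟩
          rcases (hR x hx.1).2 with h | ⟨b', hb', h⟩
          · exact Or.inl h
          · rcases List.mem_cons.1 hb' with rfl | hb'
            · exact absurd h hx.2
            · exact Or.inr ⟨b', hb', h⟩
        have hun : R = R' ∪ C := by
          rw [Finset.union_comm, hC, hR', Finset.filter_union_filter_not_eq]
        rw [hun]
        rcases C.eq_empty_or_nonempty with h0 | ⟨c0, hc0⟩
        · rw [h0, Finset.union_empty]; exact ihℓ R' hRR
        have hc0' := Finset.mem_filter.1 hc0
        have hbD : b ∈ A.G (D + 2) := by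
          have := (A.G (D + 2)).sub_mem (hR c0 hc0'.1).1.1 (A.mono (Nat.le_succ _) hc0'.2)
          simpa using this
        refine A.class_elim merge step (D + 1) b (fun R => ∀ x ∈ R,
          (x ∈ A.G (D + 2) ∧ x ∉ A.G 0 ∧ Al x) ∧
          (x ∈ A.G (D + 1) ∨ ∃ b ∈ ℓ, x - b ∈ A.G (D + 1))) ihℓ ?_ R' C hRR
          (fun c hc => (Finset.mem_filter.1 hc).2)
        intro R1 h1 q hq
        have hqD : q ∈ A.G (D + 2) := by
          have := (A.G (D + 2)).add_mem (A.mono (Nat.le_succ _) hq) hbD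
          simpa using this
        have hq1 : q ∉ A.G 1 := fun h => hb (by
          have := (A.G (D + 1)).sub_mem (A.mono (by omega : 1 ≤ D + 1) h) hq
          simpa using this)
        have hbad : ∀ x : R1, ∃ B : Finset ℕ, ∀ e ∉ B, A.phi q e x ∉ A.G 0 :=
          fun x => A.phi_bad (h1 x x.2).1.2.1
        choose B hB using hbad
        refine ⟨insert 0 (Finset.univ.biUnion B), fun e he => ?_⟩
        simp only [Finset.mem_insert, Finset.mem_biUnion, Finset.mem_univ, true_and, not_or,
          not_exists] at he
        intro x hx
        rcases Finset.mem_union.1 hx with hx | hx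
        · exact h1 x hx
        obtain ⟨w, hw, rfl⟩ := Finset.mem_image.1 hx
        rcases Finset.mem_insert.1 hw with rfl | hw
        · -- the member arising from the pivot alone
          have h0 := A.der e (D + 1) q hqD
          have e1 : A.phi q e 0 = -(A.σ e q - q) := by unfold phi; simp; abel
          have hm : A.phi q e 0 ∈ A.G (D + 1) := by rw [e1]; exact (A.G _).neg_mem h0
          refine ⟨⟨A.mono (Nat.le_succ _) hm, fun hbad => hq1 ?_, hAl q e 0 hAl0⟩, Or.inl hm⟩
          refine A.sep e 0 q he.1 ?_
          rw [A.σ_zero]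
          rw [e1] at hbad
          simpa using (A.G 0).neg_mem hbad
        · obtain ⟨⟨g1, g2, g3⟩, g4⟩ := h1 w hw
          have hp := A.phi_sub_mem (e := e) ((A.G (D + 2)).sub_mem g1 hqD)
          refine ⟨⟨?_, hB ⟨w, hw⟩ e (he.2 _), hAl q e w g3⟩, ?_⟩
          · have := (A.G (D + 2)).add_mem (A.mono (Nat.le_succ _) hp) g1
            simpa using this
          · rcases g4 with h | ⟨b', hb', h⟩
            · left
              have := (A.G (D + 1)).add_mem hp h
              simpa using this
            · right
              refine ⟨b', hb', ?_⟩
              have := (A.G (D + 1)).add_mem hp h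
              simpa using this
    intro R hR
    exact main R.toList R fun x hx => ⟨hR x hx, Or.inr ⟨x, by simpa using hx,
      by simp [(A.G (D + 1)).zero_mem]⟩⟩

end DegSys

/-! ### Realization of formal sequences -/

/-- Boundedness of a function on the blocks `S N`, uniformly in all large `N`. -/
def BddOnBlocks {Ω : Type*} (S : ℕ → Finset Ω) (h : Ω → ℝ) : Prop :=
  ∃ C : ℝ, ∀ᶠ N in atTop, ∀ ω ∈ S N, |h ω| ≤ C

section
variable {Ω : Type*} {S : ℕ → Finset Ω}

lemma BddOnBlocks.add {h k : Ω → ℝ} (hh : BddOnBlocks S h) (hk : BddOnBlocks S k) :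
    BddOnBlocks S (fun ω => h ω + k ω) := by
  obtain ⟨C, hC⟩ := hh
  obtain ⟨D, hD⟩ := hk
  refine ⟨C + D, ?_⟩
  filter_upwards [hC, hD] with N h1 h2 ω hω
  exact (abs_add_le _ _).trans (add_le_add (h1 ω hω) (h2 ω hω))

lemma BddOnBlocks.neg {h : Ω → ℝ} (hh : BddOnBlocks S h) : BddOnBlocks S (fun ω => -h ω) := by
  obtain ⟨C, hC⟩ := hh
  exact ⟨C, by simpa only [abs_neg] using hC⟩

lemma BddOnBlocks.const_mul {h : Ω → ℝ} (hh : BddOnBlocks S h) (c : ℝ) :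
    BddOnBlocks S (fun ω => c * h ω) := by
  obtain ⟨C, hC⟩ := hh
  refine ⟨|c| * C, ?_⟩
  filter_upwards [hC] with N h1 ω hω
  rw [abs_mul]
  exact mul_le_mul_of_nonneg_left (h1 ω hω) (abs_nonneg _)

lemma BddOnBlocks.sum {ι : Type*} (s : Finset ι) {h : ι → Ω → ℝ}
    (hh : ∀ i ∈ s, BddOnBlocks S (h i)) : BddOnBlocks S (fun ω => ∑ i ∈ s, h i ω) := by
  classical
  induction s using Finset.induction_on with
  | empty => exact ⟨0, by simp⟩
  | insert a s ha ih =>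
    simp only [Finset.sum_insert ha]
    exact (hh a (Finset.mem_insert_self _ _)).add (ih fun i hi => hh i (Finset.mem_insert_of_mem hi))

lemma BddOnBlocks.mono {h k : Ω → ℝ} (hh : BddOnBlocks S h)
    (hk : ∀ᶠ N in atTop, ∀ ω ∈ S N, |k ω| ≤ |h ω|) : BddOnBlocks S k := by
  obtain ⟨C, hC⟩ := hh
  refine ⟨C, ?_⟩
  filter_upwards [hC, hk] with N h1 h2 ω hω using (h2 ω hω).trans (h1 ω hω)

/-- Rounding turns a real bound into an integral one. -/
lemma BddOnBlocks.int {h : Ω → ℝ} {k : Ω → ℤ} (hh : BddOnBlocks S h) {D : ℝ}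
    (hk : ∀ ω, |(k ω : ℝ) - h ω| ≤ D) :
    ∃ C : ℕ, ∀ᶠ N in atTop, ∀ ω ∈ S N, |k ω| ≤ C := by
  obtain ⟨C, hC⟩ := hh
  obtain ⟨n, hn⟩ := exists_nat_ge (C + D)
  refine ⟨n, ?_⟩
  filter_upwards [hC] with N h1 ω hω
  have h2 := abs_le.1 (h1 ω hω)
  have h3 := abs_le.1 (hk ω)
  have : |(k ω : ℝ)| ≤ n := by
    rw [abs_le]; constructor <;> linarith
  exact_mod_cast this

lemma abs_floor_sub (a : ℝ) : |(⌊a⌋ : ℝ) - a| ≤ 1 := by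
  have h1 := Int.floor_le a
  have h2 := Int.lt_floor_add_one a
  rw [abs_le]; constructor <;> linarith

variable {X : Type*} [MeasurableSpace X] {μ : Measure X} [IsProbabilityMeasure μ]
  {T : ℤ → X → X} [DecidableEq Ω]

/-- Induction on complexity for decorrelation: if formal sequences are realized by functions `g v`
on `Ω`, with shift operators corresponding to shifts of `Ω` up to bounded errors, then it
suffices to treat tuples of degree one. -/
theorem SC.of_degSys {V : Type*} [AddCommGroup V] [DecidableEq V] (hT : WM μ T) (A : DegSys V)
    (g : V →+ (Ω → ℝ)) {τ : ℕ → Ω → Ω} (hτ : Shift S τ)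
    (hσ : ∀ e v, BddOnBlocks S (fun ω => g (A.σ e v) ω - g v (τ e ω)))
    (hG0 : ∀ v ∈ A.G 0, BddOnBlocks S (g v))
    {Al : V → Prop} (hAl0 : Al 0) (hAl : ∀ q e v, Al v → Al (A.phi q e v))
    (term : ∀ R : Finset V, (∀ x ∈ R, x ∈ A.G 1 ∧ x ∉ A.G 0 ∧ Al x) →
      SC μ T S (fun v ω => ⌊g v ω⌋) R) (D : ℕ) (R : Finset V)
    (hR : ∀ x ∈ R, x ∈ A.G (D + 1) ∧ x ∉ A.G 0 ∧ Al x) :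
    SC μ T S (fun v ω => ⌊g v ω⌋) R := by
  refine A.induct (P := fun R => SC μ T S (fun v ω => ⌊g v ω⌋) R) ?_ ?_ hAl0 hAl term D R hR
  · intro a R C hC hP
    refine hP.of_map hT (fun c => if c ∈ R then c else a) ?_ ?_
    · intro i _
      split_ifs with h
      · exact Finset.mem_insert_of_mem h
      · exact Finset.mem_insert_self _ _
    · intro i hi
      split_ifs with h
      · exact ⟨0, by simp⟩
      · have hiC : i ∈ C := (Finset.mem_union.1 hi).resolve_left h
        refine (hG0 _ (hC i hiC)).int (D := 2) fun ω => ?_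
        rw [map_sub, Pi.sub_apply]
        have h1 := abs_le.1 (abs_floor_sub (g i ω))
        have h2 := abs_le.1 (abs_floor_sub (g a ω))
        push_cast
        rw [abs_le]; constructor <;> linarith
  · intro q R B hB
    have hins : insert q R = insert q (R.erase q) := by
      ext x; by_cases hx : x = q <;> simp [hx]
    rw [hins]
    refine SC.of_double hT (Finset.notMem_erase q R) hτ B fun e he => ?_
    refine (hB e he).of_map hT (fun i => i.elim (A.phi q e 0) (Sum.elim id (A.phi q e))) ?_ ?_
    · rintro (_ | i | i) hi
      · exact Finset.mem_union_right _ (Finset.mem_image_of_mem _ (Finset.mem_insert_self _ _))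
      · have : i ∈ R.erase q := by simpa [Finset.mem_insertNone] using hi
        exact Finset.mem_union_left _ (Finset.mem_of_mem_erase this)
      · have : i ∈ R.erase q := by simpa [Finset.mem_insertNone] using hi
        exact Finset.mem_union_right _ (Finset.mem_image_of_mem _ (Finset.mem_insert_of_mem
          (Finset.mem_of_mem_erase this)))
    · rintro (_ | i | i) hi
      · refine (hσ e (0 - q)).neg.int (D := 3) fun ω => ?_
        have h1 := abs_le.1 (abs_floor_sub (g q ω))
        have h2 := abs_le.1 (abs_floor_sub (g q (τ e ω)))
        have h3 := abs_le.1 (abs_floor_sub (g (A.phi q e 0) ω))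
        simp only [dbl, Option.elim_none, DegSys.phi] at h3 ⊢
        rw [map_add] at h3 ⊢
        rw [map_sub g 0 q, map_zero]
        simp only [Pi.add_apply, Pi.sub_apply, Pi.zero_apply] at h3 ⊢
        push_cast
        rw [abs_le]; constructor <;> linarith
      · exact ⟨0, by simp [dbl]⟩
      · refine (hσ e (i - q)).neg.int (D := 4) fun ω => ?_
        have h1 := abs_le.1 (abs_floor_sub (g q ω))
        have h2 := abs_le.1 (abs_floor_sub (g q (τ e ω)))
        have h4 := abs_le.1 (abs_floor_sub (g i (τ e ω)))
        have h3 := abs_le.1 (abs_floor_sub (g (A.phi q e i) ω))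
        simp only [dbl, Option.elim_some, Sum.elim_inr, DegSys.phi] at h3 ⊢
        rw [map_add] at h3 ⊢
        rw [map_sub g i q]
        simp only [Pi.add_apply, Pi.sub_apply] at h3 ⊢
        push_cast
        rw [abs_le]; constructor <;> linarith

end

/-! ### Blocks and their shifts -/

/-- The block of all triples `(N, n, Q)` with `N ≤ n < 2N` and `M N ≤ Q < 2 M N`. The index `N`
is kept as a coordinate so that shifts may depend on it. -/
def blk (M : ℕ → ℕ) (N : ℕ) : Finset (ℕ × ℕ × ℕ) :=
  ({N} : Finset ℕ) ×ˢ (Finset.Ico N (2 * N) ×ˢ Finset.Ico (M N) (2 * M N))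

lemma mem_blk {M : ℕ → ℕ} {N : ℕ} {ω : ℕ × ℕ × ℕ} : ω ∈ blk M N ↔
    ω.1 = N ∧ (N ≤ ω.2.1 ∧ ω.2.1 < 2 * N) ∧ M N ≤ ω.2.2 ∧ ω.2.2 < 2 * M N := by
  simp only [blk, Finset.mem_product, Finset.mem_singleton, Finset.mem_Ico]

lemma card_blk (M : ℕ → ℕ) (N : ℕ) : (blk M N).card = N * M N := by
  have h1 : 2 * N - N = N := by omega
  have h2 : 2 * M N - M N = M N := by omega
  simp [blk, h1, h2]

/-- The shift of the coordinate `n` by multiples of `p N Q`. -/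
def shN (p : ℕ → ℕ → ℕ) (e : ℕ) (ω : ℕ × ℕ × ℕ) : ℕ × ℕ × ℕ :=
  (ω.1, ω.2.1 + e * p ω.1 ω.2.2, ω.2.2)

/-- The shift of the coordinate `Q` by multiples of `L`. -/
def shQ (L : ℕ) (e : ℕ) (ω : ℕ × ℕ × ℕ) : ℕ × ℕ × ℕ := (ω.1, ω.2.1, ω.2.2 + e * L)

lemma shN_shift {M : ℕ → ℕ} {p : ℕ → ℕ → ℕ}
    (hp : ∀ κ > (0 : ℝ), ∀ᶠ N : ℕ in atTop, ∀ Q, M N ≤ Q → Q < 2 * M N → (p N Q : ℝ) ≤ κ * N) :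
    Shift (blk M) (shN p) where
  add d e ω := by simp only [shN]; ext <;> simp; ring
  inj d := by
    rintro ⟨a, b, c⟩ ⟨a', b', c'⟩ h
    simp only [shN, Prod.mk.injEq] at h
    obtain ⟨rfl, h2, rfl⟩ := h
    simpa using h2
  small d κ hκ := by
    filter_upwards [hp (κ / (d + 1)) (by positivity)] with N hN
    set B : ℕ := ⌊κ * N⌋₊ with hB
    have hBle : (B : ℝ) ≤ κ * N := Nat.floor_le (by positivity)
    have hsub : (blk M N).filter (fun ω => shN p d ω ∉ blk M N) ⊆
        ({N} : Finset ℕ) ×ˢ (Finset.Ico (2 * N - B) (2 * N) ×ˢ Finset.Ico (M N) (2 * M N)) := by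
      intro ω hω
      rw [Finset.mem_filter, mem_blk, mem_blk] at hω
      obtain ⟨⟨h1, h2, h3, h4⟩, h5⟩ := hω
      simp only [shN] at h5
      have h6 : (d * p ω.1 ω.2.2 : ℕ) ≤ B := by
        apply Nat.le_floor
        have := hN _ h3 h4
        rw [h1]; push_cast
        calc (d : ℝ) * p N ω.2.2 ≤ (d + 1) * (κ / (d + 1) * N) := by gcongr; linarith
          _ = κ * N := by field_simp
      simp only [Finset.mem_product, Finset.mem_singleton, Finset.mem_Ico]
      refine ⟨h1, ⟨?_, h2.2⟩, h3, h4⟩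
      by_contra hcon
      apply h5
      refine ⟨h1, ⟨by omega, by omega⟩, h3, h4⟩
    have hc := Finset.card_le_card hsub
    simp only [Finset.card_product, Finset.card_singleton, Nat.card_Ico, one_mul] at hc
    have h2 : 2 * M N - M N = M N := by omega
    rw [h2] at hc
    have h3 : 2 * N - (2 * N - B) ≤ B := by omega
    have hc' : ((blk M N).filter (fun ω => shN p d ω ∉ blk M N)).card ≤ B * M N :=
      hc.trans (Nat.mul_le_mul_right _ h3)
    rw [card_blk]
    calc _ ≤ ((B * M N : ℕ) : ℝ) := by exact_mod_cast hc'
      _ ≤ κ * ((N * M N : ℕ) : ℝ) := by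
        push_cast
        rw [← mul_assoc]
        gcongr

lemma shQ_shift {M : ℕ → ℕ} (hM : Tendsto M atTop atTop) (L : ℕ) : Shift (blk M) (shQ L) where
  add d e ω := by simp only [shQ]; ext <;> simp; ring
  inj d := by
    rintro ⟨a, b, c⟩ ⟨a', b', c'⟩ h
    simp only [shQ, Prod.mk.injEq] at h
    obtain ⟨rfl, rfl, h2⟩ := h
    simpa using h2
  small d κ hκ := by
    have hM' : Tendsto (fun N => (M N : ℝ)) atTop atTop := tendsto_natCast_atTop_atTop.comp hM
    filter_upwards [hM'.eventually_ge_atTop ((d * L : ℕ) / κ)] with N hN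
    have hsub : (blk M N).filter (fun ω => shQ L d ω ∉ blk M N) ⊆
        ({N} : Finset ℕ) ×ˢ (Finset.Ico N (2 * N) ×ˢ
          Finset.Ico (2 * M N - d * L) (2 * M N)) := by
      intro ω hω
      rw [Finset.mem_filter, mem_blk, mem_blk] at hω
      obtain ⟨⟨h1, h2, h3, h4⟩, h5⟩ := hω
      simp only [shQ] at h5
      simp only [Finset.mem_product, Finset.mem_singleton, Finset.mem_Ico]
      refine ⟨h1, h2, ?_, h4⟩
      by_contra hcon
      apply h5
      refine ⟨h1, h2, by omega, by omega⟩
    have hc := Finset.card_le_card hsub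
    simp only [Finset.card_product, Finset.card_singleton, Nat.card_Ico, one_mul] at hc
    have h2 : 2 * N - N = N := by omega
    rw [h2] at hc
    have h3 : 2 * M N - (2 * M N - d * L) ≤ d * L := by omega
    have hc' : ((blk M N).filter (fun ω => shQ L d ω ∉ blk M N)).card ≤ N * (d * L) :=
      hc.trans (Nat.mul_le_mul_left _ h3)
    rw [card_blk]
    have h4 : ((d * L : ℕ) : ℝ) ≤ κ * M N := by
      rw [div_le_iff₀ hκ] at hN; linarith
    calc _ ≤ ((N * (d * L) : ℕ) : ℝ) := by exact_mod_cast hc'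
      _ ≤ κ * ((N * M N : ℕ) : ℝ) := by
        rw [Nat.cast_mul N (d * L), Nat.cast_mul N (M N)]
        nlinarith [mul_le_mul_of_nonneg_left h4 (Nat.cast_nonneg (α := ℝ) N)]

/-! ### Polynomials in `Q` -/

section Poly
open Polynomial

/-- Real polynomials with their translations, filtered by degree. -/
def polySys : DegSys ℝ[X] where
  σ e := (taylor (e : ℝ) : ℝ[X] →ₗ[ℝ] ℝ[X]).toAddMonoidHom
  G r := (degreeLE ℝ r).toAddSubgroup
  mono := fun r s h => by
    have : (degreeLE ℝ (r : WithBot ℕ)) ≤ degreeLE ℝ (s : WithBot ℕ) :=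
      degreeLE_mono (by exact_mod_cast h)
    exact this
  σ_zero v := by simp
  der e r v hv := by
    have hv : v.degree ≤ ((r + 1 : ℕ) : WithBot ℕ) := mem_degreeLE.1 hv
    refine mem_degreeLE.2 ?_
    change ((taylor (e : ℝ)) v - v).degree ≤ _
    rw [← natDegree_le_iff_degree_le] at hv ⊢
    rw [natDegree_le_iff_coeff_eq_zero]
    intro n hn
    rcases Nat.lt_or_ge (r + 1) n with h | h
    · rw [coeff_sub, coeff_eq_zero_of_natDegree_lt (by simpa using lt_of_le_of_lt hv h),
        coeff_eq_zero_of_natDegree_lt (lt_of_le_of_lt hv h), sub_zero]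
    · have hn : n = r + 1 := by omega
      subst hn
      rcases hv.lt_or_eq with h | h
      · rw [coeff_sub, coeff_eq_zero_of_natDegree_lt (by simpa using h),
          coeff_eq_zero_of_natDegree_lt h, sub_zero]
      · have := coeff_taylor_natDegree (e : ℝ) (f := v)
        rw [h] at this
        have h3 : v.leadingCoeff = v.coeff (r + 1) := by rw [leadingCoeff, h]
        rw [coeff_sub, this, h3, sub_self]
  sep e e' u hne h := by
    have h : (taylor (e : ℝ) u - taylor (e' : ℝ) u).degree ≤ ((0 : ℕ) : WithBot ℕ) :=
      mem_degreeLE.1 h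
    refine mem_degreeLE.2 ?_
    rw [← natDegree_le_iff_degree_le] at h ⊢
    by_contra hcon
    push Not at hcon
    -- the coefficient of order `deg u - 1` of the difference does not vanish
    obtain ⟨m, hm⟩ : ∃ m, u.natDegree = m + 2 := ⟨u.natDegree - 2, by omega⟩
    have hu : u ≠ 0 := by rintro rfl; simp at hm
    have hc : ∀ r : ℝ, (taylor r u).coeff (m + 1) = u.coeff (m + 1) + (m + 2) * u.coeff (m + 2) * r := by
      intro r
      rw [taylor_coeff]
      have hd : (hasseDeriv (m + 1) u).natDegree ≤ 1 :=
        (natDegree_hasseDeriv_le _ _).trans (by omega)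
      rw [eval_eq_sum_range' (n := 2) (by omega)]
      simp only [Finset.sum_range_succ, Finset.sum_range_zero, hasseDeriv_coeff]
      have h1 : ((0 + (m + 1)).choose (m + 1) : ℝ) = 1 := by simp
      have h2 : ((1 + (m + 1)).choose (m + 1) : ℝ) = m + 2 := by
        rw [show 1 + (m + 1) = (m + 1) + 1 by ring, Nat.choose_succ_self_right]; push_cast; ring
      rw [h1, h2, show 1 + (m + 1) = m + 2 by ring, show 0 + (m + 1) = m + 1 by ring]
      ring
    have h0 := coeff_eq_zero_of_natDegree_lt (lt_of_le_of_lt h (Nat.succ_pos m))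
    rw [coeff_sub, Nat.succ_eq_add_one, hc, hc] at h0
    have h1 : ((m : ℝ) + 2) * u.coeff (m + 2) * ((e : ℝ) - e') = 0 := by linarith
    have h2 : u.coeff (m + 2) ≠ 0 := by rw [← hm]; exact leadingCoeff_ne_zero.2 hu
    have h3 : (e : ℝ) - e' ≠ 0 := sub_ne_zero.2 (by exact_mod_cast hne)
    have h4 : (m : ℝ) + 2 ≠ 0 := by positivity
    exact absurd h1 (mul_ne_zero (mul_ne_zero h4 h2) h3)

lemma mem_polySys {r : ℕ} {P : ℝ[X]} : P ∈ polySys.G r ↔ P.natDegree ≤ r := by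
  rw [natDegree_le_iff_degree_le]
  exact mem_degreeLE

/-- The polynomial `P` evaluated at the coordinate `Q`. -/
def polyReal : ℝ[X] →+ (ℕ × ℕ × ℕ → ℝ) where
  toFun P ω := P.eval (ω.2.2 : ℝ)
  map_zero' := by ext; simp
  map_add' P Q := by ext; simp

variable {X : Type*} [MeasurableSpace X] {μ : Measure X} [IsProbabilityMeasure μ]
  {T : ℤ → X → X}

lemma SC.linear_poly (hT : WM μ T) {M : ℕ → ℕ} (hM : Tendsto M atTop atTop) (R : Finset ℝ[X])
    (hR : ∀ P ∈ R, P.natDegree = 1) : SC μ T (blk M) (fun P ω => ⌊polyReal P ω⌋) R := by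
  classical
  induction R using Finset.induction_on with
  | empty => exact SC.empty _
  | insert q R hq ih =>
    have hform : ∀ P ∈ insert q R, ∀ y : ℝ, P.eval y = P.coeff 0 + P.coeff 1 * y := by
      intro P hP y
      rw [eval_eq_sum_range' (n := 2) (by rw [hR P hP]; omega)]
      simp [Finset.sum_range_succ]
    have hdiff : ∀ P ∈ insert q R, ∀ L e ω, polyReal P (shQ L e ω) - polyReal P ω
        = P.coeff 1 * (e * L) := by
      intro P hP L e ω
      change P.eval (((ω.2.2 + e * L : ℕ)) : ℝ) - P.eval ((ω.2.2 : ℕ) : ℝ) = _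
      rw [hform P hP, hform P hP]; push_cast; ring
    have hκ : q.coeff 1 ≠ 0 := by
      have h1 := hR q (Finset.mem_insert_self _ _)
      rw [← h1]
      exact leadingCoeff_ne_zero.2 (by rintro rfl; simp at h1)
    set κ := q.coeff 1 with hκd
    have hκ' : 0 < |κ| := abs_pos.2 hκ
    obtain ⟨L, hL⟩ := exists_nat_ge (2 / |κ|)
    obtain ⟨L', hL'⟩ := exists_nat_ge (|κ| * L + 2)
    refine SC.of_linear hT hq (shQ_shift hM L)
      (ih fun P hP => hR P (Finset.mem_insert_of_mem hP)) ?_ L' ?_ ?_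
    · intro P hP e
      have hb : BddOnBlocks (blk M) (fun ω => polyReal P (shQ L e ω) - polyReal P ω) :=
        ⟨|P.coeff 1 * (e * L)|, Eventually.of_forall fun N ω _ => by
          exact (congrArg abs (hdiff P (Finset.mem_insert_of_mem hP) L e ω)).le⟩
      refine hb.int (D := 2) fun ω => ?_
      have h1 := abs_le.1 (abs_floor_sub (polyReal P ω))
      have h2 := abs_le.1 (abs_floor_sub (polyReal P (shQ L e ω)))
      push_cast
      rw [abs_le]; constructor <;> linarith
    · intro e
      refine Eventually.of_forall fun N ω _ => ?_
      have h1 := abs_le.1 (abs_floor_sub (polyReal q ω))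
      have h2 := abs_le.1 (abs_floor_sub (polyReal q (shQ L e ω)))
      have h3 := hdiff q (Finset.mem_insert_self _ _) L e ω
      have h4 : |κ * (e * L)| = |κ| * L * e := by
        rw [abs_mul, abs_of_nonneg (by positivity : (0 : ℝ) ≤ e * L)]; ring
      rw [← h3] at h4
      have h5 := abs_le.1 h4.le
      have h6 : |κ| * L * e + 2 ≤ L' * (e + 1) := by
        have : (0 : ℝ) ≤ e := by positivity
        nlinarith [abs_nonneg κ]
      have : |((⌊polyReal q ω⌋ - ⌊polyReal q (shQ L e ω)⌋ : ℤ) : ℝ)| ≤ L' * (e + 1) := by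
        push_cast
        rw [abs_le]; constructor <;> linarith
      exact_mod_cast this
    · intro e e' hee
      refine Eventually.of_forall fun N ω _ heq => ?_
      have h1 := abs_le.1 (abs_floor_sub (polyReal q (shQ L e ω)))
      have h1' := Int.lt_floor_add_one (polyReal q (shQ L e ω))
      have h2 := Int.floor_le (polyReal q (shQ L e' ω))
      have h2' := Int.lt_floor_add_one (polyReal q (shQ L e' ω))
      have h1'' := Int.floor_le (polyReal q (shQ L e ω))
      have h3 := hdiff q (Finset.mem_insert_self _ _) L e ω
      have h3' := hdiff q (Finset.mem_insert_self _ _) L e' ω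
      have h4 : 2 ≤ |polyReal q (shQ L e' ω) - polyReal q (shQ L e ω)| := by
        have : polyReal q (shQ L e' ω) - polyReal q (shQ L e ω) = κ * (((e' : ℝ) - e) * L) := by
          rw [hκd]; linarith
        have hee' : (1 : ℝ) ≤ (e' : ℝ) - e := by
          have : (e : ℝ) + 1 ≤ e' := by exact_mod_cast hee
          linarith
        rw [this, abs_mul, abs_of_nonneg (by positivity : (0 : ℝ) ≤ ((e' : ℝ) - e) * L)]
        rw [div_le_iff₀ hκ'] at hL
        nlinarith [mul_nonneg hκ'.le (Nat.cast_nonneg (α := ℝ) L)]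
      have heq' : (⌊polyReal q (shQ L e ω)⌋ : ℝ) = ⌊polyReal q (shQ L e' ω)⌋ := by
        exact_mod_cast heq
      rcases le_abs.1 h4 with h | h <;> linarith

/-- Decorrelation along nonconstant polynomials in `Q`. -/
lemma SC.poly (hT : WM μ T) {M : ℕ → ℕ} (hM : Tendsto M atTop atTop) (R : Finset ℝ[X])
    (hR : ∀ P ∈ R, 0 < P.natDegree) : SC μ T (blk M) (fun P ω => ⌊polyReal P ω⌋) R := by
  classical
  refine SC.of_degSys hT polySys polyReal (shQ_shift hM 1) (Al := fun _ => True) ?_ ?_ trivial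
    (fun _ _ _ _ => trivial) ?_ (R.sup natDegree) R ?_
  · intro e P
    refine ⟨0, Eventually.of_forall fun N ω _ => le_of_eq ?_⟩
    change |(taylor (e : ℝ) P).eval ((ω.2.2 : ℕ) : ℝ) - P.eval (((ω.2.2 + e * 1 : ℕ)) : ℝ)| = 0
    rw [taylor_eval]; simp
  · intro P hP
    rw [mem_polySys, Nat.le_zero] at hP
    refine ⟨|P.coeff 0|, Eventually.of_forall fun N ω _ => le_of_eq ?_⟩
    change |P.eval ((ω.2.2 : ℕ) : ℝ)| = _
    conv_lhs => rw [eq_C_of_natDegree_eq_zero hP, eval_C]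
  · intro R hR
    refine SC.linear_poly hT hM R fun P hP => ?_
    have h := hR P hP
    rw [mem_polySys, mem_polySys] at h
    omega
  · intro P hP
    rw [mem_polySys, mem_polySys]
    have h1 : P.natDegree ≤ R.sup natDegree := Finset.le_sup (f := natDegree) hP
    have h2 := hR P hP
    exact ⟨by omega, by omega, trivial⟩

end Poly

/-! ### Germs in a Hardy field -/

namespace HardyField
variable (H : HardyField)

variable {H} in
lemma sub_mem {u v : ℝ → ℝ} (hu : u ∈ H.carrier) (hv : v ∈ H.carrier) : u - v ∈ H.carrier := by
  rw [sub_eq_add_neg]; exact H.add_mem hu (H.neg_mem hv)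

variable {H} in
lemma const_mul_mem {u : ℝ → ℝ} (c : ℝ) (hu : u ∈ H.carrier) : (fun t => c * u t) ∈ H.carrier :=
  H.mul_mem (H.const_mem c) hu

lemma rpow_mem (s : ℝ) : (fun t : ℝ => t ^ s) ∈ H.carrier := by
  have h1 : (fun t : ℝ => Real.log t) ∈ H.carrier := H.log_comp_mem H.id_mem tendsto_id
  refine H.mem_congr (H.exp_comp_mem (const_mul_mem s h1)) ?_
  filter_upwards [eventually_gt_atTop 0] with t ht
  rw [Real.rpow_def_of_pos ht, mul_comm]

lemma sum_mem {ι : Type*} (s : Finset ι) {u : ι → ℝ → ℝ} (hu : ∀ i ∈ s, u i ∈ H.carrier) :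
    (fun t => ∑ i ∈ s, u i t) ∈ H.carrier := by
  classical
  induction s using Finset.induction_on with
  | empty =>
    simp only [Finset.sum_empty]
    exact H.const_mem 0
  | insert a s ha ih =>
    simp only [Finset.sum_insert ha]
    exact H.add_mem (hu a (Finset.mem_insert_self _ _))
      (ih fun i hi => hu i (Finset.mem_insert_of_mem hi))

variable {H}

lemma sign {u : ℝ → ℝ} (hu : u ∈ H.carrier) :
    (∀ᶠ t in atTop, u t = 0) ∨ (∀ᶠ t in atTop, 0 < u t) ∨ (∀ᶠ t in atTop, u t < 0) := by
  by_cases h0 : u =ᶠ[atTop] (0 : ℝ → ℝ)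
  · exact Or.inl h0
  right
  obtain ⟨g, -, hg⟩ := H.inv_mem hu h0
  obtain ⟨a, ha⟩ := H.smooth u hu
  obtain ⟨b, hb⟩ := eventually_atTop.1 hg
  set c := max a b + 1 with hc
  have hne : ∀ t ∈ Set.Ici c, u t ≠ 0 := fun t ht h => by
    have h1 := hb t (by rw [Set.mem_Ici] at ht; linarith [le_max_right a b])
    simp [h] at h1
  have hcont : ContinuousOn u (Set.Ici c) := ha.continuousOn.mono fun t ht => by
    rw [Set.mem_Ici] at ht; rw [Set.mem_Ioi]; linarith [le_max_left a b]
  have hpre : IsPreconnected (u '' Set.Ici c) := isPreconnected_Ici.image _ hcont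
  have h0' : (0 : ℝ) ∉ u '' Set.Ici c := by
    rintro ⟨t, ht, h⟩; exact hne t ht h
  rcases lt_or_gt_of_ne (hne c Set.self_mem_Ici) with h | h
  · right
    filter_upwards [eventually_ge_atTop c] with t ht
    by_contra hcon
    push Not at hcon
    exact h0' (hpre.ordConnected.out ⟨c, Set.self_mem_Ici, rfl⟩ ⟨t, ht, rfl⟩ ⟨h.le, hcon⟩)
  · left
    filter_upwards [eventually_ge_atTop c] with t ht
    by_contra hcon
    push Not at hcon
    exact h0' (hpre.ordConnected.out ⟨t, ht, rfl⟩ ⟨c, Set.self_mem_Ici, rfl⟩ ⟨hcon, h.le⟩)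

lemma cmp {u v : ℝ → ℝ} (hu : u ∈ H.carrier) (hv : v ∈ H.carrier) :
    (∀ᶠ t in atTop, u t ≤ v t) ∨ (∀ᶠ t in atTop, v t < u t) := by
  rcases sign (sub_mem hu hv) with h | h | h
  · left; filter_upwards [h] with t ht; rw [Pi.sub_apply] at ht; linarith
  · right; filter_upwards [h] with t ht; rw [Pi.sub_apply] at ht; linarith
  · left; filter_upwards [h] with t ht; rw [Pi.sub_apply] at ht; linarith

lemma abs_mem {u : ℝ → ℝ} (hu : u ∈ H.carrier) : (fun t => |u t|) ∈ H.carrier := by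
  rcases sign hu with h | h | h
  · exact H.mem_congr hu (by filter_upwards [h] with t ht; simp [ht])
  · exact H.mem_congr hu (by filter_upwards [h] with t ht; simp [abs_of_pos ht])
  · exact H.mem_congr (H.neg_mem hu) (by filter_upwards [h] with t ht; simp [abs_of_neg ht])

lemma ev_hasDerivAt {u : ℝ → ℝ} (hu : u ∈ H.carrier) :
    ∀ᶠ t in atTop, HasDerivAt u (deriv u t) t := by
  obtain ⟨a, ha⟩ := H.smooth u hu
  filter_upwards [eventually_gt_atTop a] with t ht
  exact ((ha.differentiableOn (by simp)).differentiableAt (isOpen_Ioi.mem_nhds ht)).hasDerivAt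

/-- Members of a Hardy field are eventually monotone. -/
lemma ev_mono {u : ℝ → ℝ} (hu : u ∈ H.carrier) :
    ∃ a, MonotoneOn u (Set.Ici a) ∨ AntitoneOn u (Set.Ici a) := by
  have hs : (∀ᶠ t in atTop, 0 ≤ deriv u t) ∨ (∀ᶠ t in atTop, deriv u t ≤ 0) := by
    rcases sign (H.deriv_mem hu) with h | h | h
    · exact Or.inl (by filter_upwards [h] with t ht using ht.ge)
    · exact Or.inl (by filter_upwards [h] with t ht using ht.le)
    · exact Or.inr (by filter_upwards [h] with t ht using ht.le)
  obtain ⟨b, hb⟩ := eventually_atTop.1 (ev_hasDerivAt hu)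
  rcases hs with h | h
  · obtain ⟨c, hc⟩ := eventually_atTop.1 h
    refine ⟨max b c, Or.inl (monotoneOn_of_deriv_nonneg (convex_Ici _) ?_ ?_ ?_)⟩
    · exact fun t ht => (hb t (le_trans (le_max_left _ _) ht)).continuousAt.continuousWithinAt
    · intro t ht
      rw [interior_Ici, Set.mem_Ioi] at ht
      exact (hb t ((le_max_left _ _).trans ht.le)).differentiableAt.differentiableWithinAt
    · intro t ht
      rw [interior_Ici, Set.mem_Ioi] at ht
      exact hc t ((le_max_right _ _).trans ht.le)
  · obtain ⟨c, hc⟩ := eventually_atTop.1 h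
    refine ⟨max b c, Or.inr (antitoneOn_of_deriv_nonpos (convex_Ici _) ?_ ?_ ?_)⟩
    · exact fun t ht => (hb t (le_trans (le_max_left _ _) ht)).continuousAt.continuousWithinAt
    · intro t ht
      rw [interior_Ici, Set.mem_Ioi] at ht
      exact (hb t ((le_max_left _ _).trans ht.le)).differentiableAt.differentiableWithinAt
    · intro t ht
      rw [interior_Ici, Set.mem_Ioi] at ht
      exact hc t ((le_max_right _ _).trans ht.le)

lemma monotone_of_tendsto {u : ℝ → ℝ} (hu : u ∈ H.carrier) (h : Tendsto u atTop atTop) :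
    ∃ a, MonotoneOn u (Set.Ici a) := by
  obtain ⟨a, ha | ha⟩ := ev_mono hu
  · exact ⟨a, ha⟩
  · exfalso
    obtain ⟨t, h1, h2⟩ := ((h.eventually_gt_atTop (u a)).and (eventually_ge_atTop a)).exists
    exact absurd (ha Set.self_mem_Ici h2 h2) (by linarith)

lemma antitone_of_tendsto {u : ℝ → ℝ} (hu : u ∈ H.carrier) (hpos : ∀ᶠ t in atTop, 0 < u t)
    (h : Tendsto u atTop (𝓝 0)) : ∃ a, AntitoneOn u (Set.Ici a) := by
  obtain ⟨a, ha | ha⟩ := ev_mono hu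
  · exfalso
    obtain ⟨b, hb1, hb2⟩ := (hpos.and (eventually_ge_atTop a)).exists
    obtain ⟨t, h1, h2⟩ := ((h.eventually_lt_const hb1).and (eventually_ge_atTop b)).exists
    exact absurd (ha hb2 (hb2.trans h2 : a ≤ t) h2) (by linarith)
  · exact ⟨a, ha⟩

/-- Differentiation gains (more than) half a power of `t`. -/
lemma isBigO_deriv {u u' : ℝ → ℝ} (hu' : u' ∈ H.carrier)
    (hd : ∀ᶠ t in atTop, HasDerivAt u (u' t) t) {s : ℝ}
    (h : u =O[atTop] fun t : ℝ => t ^ s) : u' =O[atTop] fun t : ℝ => t ^ (s - 1 / 2) := by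
  rcases cmp (abs_mem hu') (H.rpow_mem (s - 1 / 2)) with hc | hc
  · refine Asymptotics.IsBigO.of_bound 1 ?_
    filter_upwards [hc, eventually_gt_atTop 0] with t ht ht0
    rw [Real.norm_eq_abs, Real.norm_eq_abs, abs_of_pos (Real.rpow_pos_of_pos ht0 _), one_mul]
    exact ht
  exfalso
  obtain ⟨C, hC⟩ := h.bound
  obtain ⟨a, ha⟩ := eventually_atTop.1 (hd.and (hc.and (hC.and (eventually_gt_atTop 0))))
  -- on `[t, 2t]` the function changes by at least a multiple of `t ^ (s + 1/2)`
  set k : ℝ := min 1 (2 ^ (s - 1 / 2)) with hk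
  have hk0 : 0 < k := lt_min one_pos (by positivity)
  have hC0 : 0 ≤ |C| := abs_nonneg _
  have key : ∀ t ≥ max a 1, k * t ^ (1 / 2 : ℝ) ≤ |C| * (1 + 2 ^ s) := by
    intro t ht
    have hta : a ≤ t := (le_max_left _ _).trans ht
    have ht0 : 0 < t := lt_of_lt_of_le one_pos ((le_max_right _ _).trans ht)
    have hlt : t < 2 * t := by linarith
    obtain ⟨ξ, hξ, hξe⟩ := exists_hasDerivAt_eq_slope u u' hlt
      (fun x hx => (ha x (hta.trans hx.1)).1.continuousAt.continuousWithinAt)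
      (fun x hx => (ha x (hta.trans hx.1.le)).1)
    have h1 := (ha ξ (hta.trans hξ.1.le)).2.1
    have h2 := (ha t hta).2.2.1
    have h3 := (ha (2 * t) (hta.trans hlt.le)).2.2.1
    rw [Real.norm_eq_abs, Real.norm_eq_abs, abs_of_pos (Real.rpow_pos_of_pos (by linarith) _)]
      at h2 h3
    rw [Real.mul_rpow (by norm_num) ht0.le] at h3
    have hξ0 : 0 < ξ := ht0.trans hξ.1
    have h4 : k * t ^ (s - 1 / 2) ≤ ξ ^ (s - 1 / 2) := by
      rcases le_total 0 (s - 1 / 2) with hs | hs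
      · calc k * t ^ (s - 1 / 2) ≤ 1 * t ^ (s - 1 / 2) := by gcongr; exact min_le_left _ _
          _ ≤ ξ ^ (s - 1 / 2) := by
            rw [one_mul]; exact Real.rpow_le_rpow ht0.le hξ.1.le hs
      · calc k * t ^ (s - 1 / 2) ≤ 2 ^ (s - 1 / 2) * t ^ (s - 1 / 2) := by
              gcongr; exact min_le_right _ _
          _ = (2 * t) ^ (s - 1 / 2) := (Real.mul_rpow (by norm_num) ht0.le).symm
          _ ≤ ξ ^ (s - 1 / 2) := Real.rpow_le_rpow_of_nonpos hξ0 hξ.2.le hs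
    have h5 : u (2 * t) - u t = t * u' ξ := by
      rw [hξe, show 2 * t - t = t by ring]; field_simp
    have h6 : t * (k * t ^ (s - 1 / 2)) ≤ |C| * (1 + 2 ^ s) * t ^ s := by
      have hts : 0 < t ^ s := Real.rpow_pos_of_pos ht0 _
      have h2s : (0 : ℝ) < 2 ^ s := by positivity
      calc t * (k * t ^ (s - 1 / 2)) ≤ t * |u' ξ| := by gcongr; linarith
        _ = |u (2 * t) - u t| := by rw [h5, abs_mul, abs_of_pos ht0]
        _ ≤ |u (2 * t)| + |u t| := abs_sub _ _
        _ ≤ C * (2 ^ s * t ^ s) + C * t ^ s := add_le_add h3 h2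
        _ = C * ((1 + 2 ^ s) * t ^ s) := by ring
        _ ≤ |C| * ((1 + 2 ^ s) * t ^ s) := by gcongr; exact le_abs_self C
        _ = _ := by ring
    have h7 : t * (k * t ^ (s - 1 / 2)) = k * t ^ (1 / 2 : ℝ) * t ^ s := by
      have e1 : t ^ (1 / 2 : ℝ) * t ^ s = t * t ^ (s - 1 / 2) := by
        rw [← Real.rpow_add ht0]
        conv_rhs => rw [← Real.rpow_one t, ← Real.rpow_mul ht0.le, ← Real.rpow_add ht0]
        congr 1; ring
      rw [mul_assoc k, e1]; ring
    rw [h7] at h6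
    exact le_of_mul_le_mul_right h6 (Real.rpow_pos_of_pos ht0 _)
  have hlim : Tendsto (fun t : ℝ => k * t ^ (1 / 2 : ℝ)) atTop atTop :=
    (tendsto_rpow_atTop (by norm_num)).const_mul_atTop hk0
  obtain ⟨t, h1, h2⟩ := ((hlim.eventually_gt_atTop (|C| * (1 + 2 ^ s))).and
    (eventually_ge_atTop (max a 1))).exists
  exact absurd (key t h2) (by linarith)

end HardyField

/-- A function with derivative `O(t ^ (-1-s))` converges with rate `O(t ^ (-s))`. -/
lemma exists_limit {u u' : ℝ → ℝ} (hd : ∀ᶠ t in atTop, HasDerivAt u (u' t) t) {s : ℝ}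
    (hs : 0 < s) (h : u' =O[atTop] fun t : ℝ => t ^ (-1 - s)) :
    ∃ c : ℝ, (fun t => u t - c) =O[atTop] fun t : ℝ => t ^ (-s) := by
  obtain ⟨C, hC⟩ := h.bound
  obtain ⟨a, ha⟩ := eventually_atTop.1 (hd.and (hC.and (eventually_gt_atTop 0)))
  set φ : ℝ → ℝ := fun t => u t + C / s * t ^ (-s) with hφ
  set ψ : ℝ → ℝ := fun t => u t - C / s * t ^ (-s) with hψ
  have hpw : ∀ t, 0 < t → HasDerivAt (fun t : ℝ => C / s * t ^ (-s)) (-(C * t ^ (-1 - s))) t := by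
    intro t ht
    have := (Real.hasDerivAt_rpow_const (x := t) (p := -s) (Or.inl ht.ne')).const_mul (C / s)
    have e : C / s * (-s * t ^ (-s - 1)) = -(C * t ^ (-1 - s)) := by
      rw [show -s - 1 = -1 - s by ring]
      field_simp
    rwa [e] at this
  have hbd : ∀ t ≥ a, |u' t| ≤ C * t ^ (-1 - s) := by
    intro t ht
    have h1 := (ha t ht).2.1
    rwa [Real.norm_eq_abs, Real.norm_eq_abs,
      abs_of_pos (Real.rpow_pos_of_pos (ha t ht).2.2 _)] at h1
  have hφd : ∀ t ≥ a, HasDerivAt φ (u' t + -(C * t ^ (-1 - s))) t := fun t ht =>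
    (ha t ht).1.add (hpw t (ha t ht).2.2)
  have hψd : ∀ t ≥ a, HasDerivAt ψ (u' t - -(C * t ^ (-1 - s))) t := fun t ht =>
    (ha t ht).1.sub (hpw t (ha t ht).2.2)
  have hφm : AntitoneOn φ (Set.Ici a) := by
    refine antitoneOn_of_deriv_nonpos (convex_Ici _) ?_ ?_ ?_
    · exact fun t ht => (hφd t ht).continuousAt.continuousWithinAt
    · intro t ht
      rw [interior_Ici, Set.mem_Ioi] at ht
      exact (hφd t ht.le).differentiableAt.differentiableWithinAt
    · intro t ht
      rw [interior_Ici, Set.mem_Ioi] at ht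
      rw [(hφd t ht.le).deriv]
      linarith [(abs_le.1 (hbd t ht.le)).2]
  have hψm : MonotoneOn ψ (Set.Ici a) := by
    refine monotoneOn_of_deriv_nonneg (convex_Ici _) ?_ ?_ ?_
    · exact fun t ht => (hψd t ht).continuousAt.continuousWithinAt
    · intro t ht
      rw [interior_Ici, Set.mem_Ioi] at ht
      exact (hψd t ht.le).differentiableAt.differentiableWithinAt
    · intro t ht
      rw [interior_Ici, Set.mem_Ioi] at ht
      rw [(hψd t ht.le).deriv]
      linarith [(abs_le.1 (hbd t ht.le)).1]
  have hle : ∀ t ≥ a, ψ t ≤ φ t := by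
    intro t ht
    have h1 : 0 ≤ C * t ^ (-1 - s) := (abs_nonneg _).trans (hbd t ht)
    have hC0 : 0 ≤ C := nonneg_of_mul_nonneg_left h1 (Real.rpow_pos_of_pos (ha t ht).2.2 _)
    have : 0 ≤ C / s * t ^ (-s) :=
      mul_nonneg (div_nonneg hC0 hs.le) (Real.rpow_pos_of_pos (ha t ht).2.2 _).le
    simp only [hφ, hψ]; linarith
  have hcross : ∀ t ≥ a, ∀ t' ≥ a, ψ t ≤ φ t' := fun t ht t' ht' =>
    have hm : a ≤ max t t' := le_trans ht (le_max_left _ _)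
    (hψm ht hm (le_max_left _ _)).trans ((hle _ hm).trans (hφm ht' hm (le_max_right _ _)))
  refine ⟨sSup (ψ '' Set.Ici a), Asymptotics.IsBigO.of_bound (C / s) ?_⟩
  filter_upwards [eventually_ge_atTop a] with t ht
  have h1 : ψ t ≤ sSup (ψ '' Set.Ici a) :=
    le_csSup ⟨φ a, by rintro _ ⟨y, hy, rfl⟩; exact hcross y hy a le_rfl⟩ ⟨t, ht, rfl⟩
  have h2 : sSup (ψ '' Set.Ici a) ≤ φ t :=
    csSup_le ⟨ψ a, a, Set.self_mem_Ici, rfl⟩ (by rintro _ ⟨y, hy, rfl⟩; exact hcross y hy t ht)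
  rw [Real.norm_eq_abs, Real.norm_eq_abs, abs_of_pos (Real.rpow_pos_of_pos (ha t ht).2.2 _),
    abs_le]
  simp only [hφ, hψ] at h1 h2
  constructor <;> linarith

namespace HardyField
variable {H : HardyField}

/-- A germ growing faster than `log t` has derivative growing faster than `1 / t`. -/
lemma tendsto_mul_deriv {u u' : ℝ → ℝ} (hu' : u' ∈ H.carrier)
    (hd : ∀ᶠ t in atTop, HasDerivAt u (u' t) t)
    (h : Tendsto (fun t => |u t| / Real.log t) atTop atTop) :
    Tendsto (fun t => t * |u' t|) atTop atTop := by
  rw [tendsto_atTop]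
  intro C
  rcases cmp (abs_mem (H.mul_mem H.id_mem hu')) (H.const_mem C) with hc | hc
  swap
  · filter_upwards [hc, eventually_gt_atTop 0] with t ht ht0
    rw [Pi.mul_apply, abs_mul, abs_of_pos ht0] at ht
    exact ht.le
  exfalso
  obtain ⟨a, ha⟩ := eventually_atTop.1 (hd.and (hc.and (eventually_gt_atTop 1)))
  have hlog : ∀ t ≥ a, |u t - u a| ≤ C * (Real.log t - Real.log a) := by
    intro t ht
    have hbd : ∀ x ≥ a, |u' x| ≤ C * x⁻¹ := by
      intro x hx
      have h1 := (ha x hx).2.1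
      have hx0 : 0 < x := one_pos.trans (ha x hx).2.2
      rw [Pi.mul_apply, abs_mul, abs_of_pos hx0] at h1
      rw [← div_eq_mul_inv, le_div_iff₀ hx0]; linarith
    have hdl : ∀ x ≥ a, HasDerivAt (fun x => C * Real.log x) (C * x⁻¹) x := fun x hx =>
      (Real.hasDerivAt_log (one_pos.trans (ha x hx).2.2).ne').const_mul C
    have m1 : MonotoneOn (fun x => C * Real.log x - u x) (Set.Ici a) := by
      have hdd : ∀ x ≥ a, HasDerivAt (fun x => C * Real.log x - u x) (C * x⁻¹ - u' x) x :=
        fun x hx => (hdl x hx).sub (ha x hx).1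
      refine monotoneOn_of_deriv_nonneg (convex_Ici _) ?_ ?_ ?_
      · exact fun t ht => (hdd t ht).continuousAt.continuousWithinAt
      · intro t ht
        rw [interior_Ici, Set.mem_Ioi] at ht
        exact (hdd t ht.le).differentiableAt.differentiableWithinAt
      · intro t ht
        rw [interior_Ici, Set.mem_Ioi] at ht
        rw [(hdd t ht.le).deriv]
        linarith [(abs_le.1 (hbd t ht.le)).2]
    have m2 : MonotoneOn (fun x => C * Real.log x + u x) (Set.Ici a) := by
      have hdd : ∀ x ≥ a, HasDerivAt (fun x => C * Real.log x + u x) (C * x⁻¹ + u' x) x :=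
        fun x hx => (hdl x hx).add (ha x hx).1
      refine monotoneOn_of_deriv_nonneg (convex_Ici _) ?_ ?_ ?_
      · exact fun t ht => (hdd t ht).continuousAt.continuousWithinAt
      · intro t ht
        rw [interior_Ici, Set.mem_Ioi] at ht
        exact (hdd t ht.le).differentiableAt.differentiableWithinAt
      · intro t ht
        rw [interior_Ici, Set.mem_Ioi] at ht
        rw [(hdd t ht.le).deriv]
        linarith [(abs_le.1 (hbd t ht.le)).1]
    have e1 := m1 Set.self_mem_Ici ht ht
    have e2 := m2 Set.self_mem_Ici ht ht
    simp only at e1 e2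
    rw [abs_le]; constructor <;> linarith
  have hC0 : 0 ≤ C := by
    have := (ha a le_rfl).2.1
    exact (abs_nonneg _).trans this
  have hlt : Tendsto Real.log atTop atTop := Real.tendsto_log_atTop
  obtain ⟨t, h1, h2, h3⟩ := ((h.eventually_gt_atTop (|u a| + C + 1)).and
    ((hlt.eventually_gt_atTop 1).and (eventually_ge_atTop a))).exists
  have h4 := hlog t h3
  have h5 : 0 ≤ Real.log a := Real.log_nonneg (ha a le_rfl).2.2.le
  rw [lt_div_iff₀ (by linarith)] at h1
  have h6 : |u t| ≤ |u t - u a| + |u a| := by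
    have := abs_add_le (u t - u a) (u a); simpa using this
  nlinarith [abs_nonneg (u a), mul_nonneg hC0 h5]

/-! ### Exponents -/

/-- `u` has size `t ^ (s + o(1))`. -/
def HasE (u : ℝ → ℝ) (s : ℝ) : Prop :=
  (∀ r > s, ∀ᶠ t : ℝ in atTop, |u t| ≤ t ^ r) ∧ ∀ r < s, ∀ᶠ t : ℝ in atTop, t ^ r ≤ |u t|

lemma ev_rpow_lt {r s : ℝ} (h : r < s) : ∀ᶠ t : ℝ in atTop, t ^ r < t ^ s := by
  filter_upwards [eventually_gt_atTop 1] with t ht using Real.rpow_lt_rpow_of_exponent_lt ht h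

lemma HasE.le_of_le {u : ℝ → ℝ} {s r : ℝ} (h : HasE u s) (hr : ∀ᶠ t : ℝ in atTop, |u t| ≤ t ^ r) :
    s ≤ r := by
  by_contra hcon
  push Not at hcon
  obtain ⟨m, hm1, hm2⟩ := exists_between hcon
  obtain ⟨t, h1, h2, h3⟩ := (hr.and ((h.2 m hm2).and (ev_rpow_lt hm1))).exists
  linarith

lemma HasE.le_of_ge {u : ℝ → ℝ} {s r : ℝ} (h : HasE u s) (hr : ∀ᶠ t : ℝ in atTop, t ^ r ≤ |u t|) :
    r ≤ s := by
  by_contra hcon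
  push Not at hcon
  obtain ⟨m, hm1, hm2⟩ := exists_between hcon
  obtain ⟨t, h1, h2, h3⟩ := (hr.and ((h.1 m hm1).and (ev_rpow_lt hm2))).exists
  linarith

lemma HasE.unique {u : ℝ → ℝ} {s s' : ℝ} (h : HasE u s) (h' : HasE u s') : s = s' := by
  by_contra hne
  rcases lt_or_gt_of_ne hne with hlt | hlt
  · obtain ⟨m, hm1, hm2⟩ := exists_between hlt
    linarith [h'.le_of_le (h.1 m hm1)]
  · obtain ⟨m, hm1, hm2⟩ := exists_between hlt
    linarith [h.le_of_le (h'.1 m hm1)]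

lemma exists_hasE {u : ℝ → ℝ} (hu : u ∈ H.carrier) {A : ℝ}
    (hA : ∀ᶠ t : ℝ in atTop, |u t| ≤ t ^ A) :
    (∀ s : ℝ, ∀ᶠ t : ℝ in atTop, |u t| ≤ t ^ s) ∨ ∃ s ≤ A, HasE u s := by
  set B : Set ℝ := {s | ∀ᶠ t : ℝ in atTop, |u t| ≤ t ^ s} with hB
  have hup : ∀ s ∈ B, ∀ r > s, r ∈ B := by
    intro s hs r hr
    have hs : ∀ᶠ t : ℝ in atTop, |u t| ≤ t ^ s := hs
    change ∀ᶠ t : ℝ in atTop, |u t| ≤ t ^ r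
    filter_upwards [hs, ev_rpow_lt hr] with t h1 h2 using h1.trans h2.le
  by_cases hbd : BddBelow B
  · right
    refine ⟨sInf B, csInf_le hbd hA, fun r hr => ?_, fun r hr => ?_⟩
    · obtain ⟨s, hs, hsr⟩ := exists_lt_of_csInf_lt ⟨A, hA⟩ hr
      exact hup s hs r hsr
    · have : r ∉ B := fun h => absurd (csInf_le hbd h) (by linarith)
      rcases cmp (abs_mem hu) (H.rpow_mem r) with h | h
      · exact absurd h this
      · filter_upwards [h] with t ht using ht.le
  · left
    intro s
    rw [not_bddBelow_iff] at hbd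
    obtain ⟨r, hr, hrs⟩ := hbd s
    exact hup r hr s hrs

/-- Multiplying by a power of `t` shifts the exponent. -/
lemma HasE.rpow_mul {u : ℝ → ℝ} {s : ℝ} (h : HasE u s) (b : ℝ) :
    HasE (fun t => t ^ b * u t) (b + s) := by
  constructor
  · intro r hr
    filter_upwards [h.1 (r - b) (by linarith), eventually_gt_atTop 0] with t ht ht0
    rw [abs_mul, abs_of_pos (Real.rpow_pos_of_pos ht0 _)]
    calc t ^ b * |u t| ≤ t ^ b * t ^ (r - b) := by gcongr
      _ = t ^ r := by rw [← Real.rpow_add ht0]; congr 1; ring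
  · intro r hr
    filter_upwards [h.2 (r - b) (by linarith), eventually_gt_atTop 0] with t ht ht0
    rw [abs_mul, abs_of_pos (Real.rpow_pos_of_pos ht0 _)]
    calc t ^ r = t ^ b * t ^ (r - b) := by rw [← Real.rpow_add ht0]; congr 1; ring
      _ ≤ t ^ b * |u t| := by gcongr

end HardyField

/-! ### Rational combinations of the given functions and their derivatives -/

/-- Taylor's formula for a chain of successive derivatives. -/
lemma taylor_chain {D : ℕ → ℝ → ℝ} {n h B : ℝ} (hB : 0 ≤ B)
    (hd : ∀ j, ∀ s ∈ Set.Icc n (n + h), HasDerivAt (D j) (D (j + 1) s) s) (r : ℕ) :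
    ∀ j, (∀ s ∈ Set.Icc n (n + h), |D (j + r) s| ≤ B) → ∀ s ∈ Set.Icc 0 h,
      |D j (n + s) - ∑ i ∈ Finset.range r, s ^ i / i.factorial * D (j + i) n| ≤ B * s ^ r := by
  induction r with
  | zero =>
    intro j hj s hs
    simpa using hj (n + s) ⟨by linarith [hs.1], by linarith [hs.2]⟩
  | succ r ih =>
    intro j hj s hs
    have ih' := ih (j + 1) (by
      intro s hs; have := hj s hs; rwa [show j + 1 + r = j + (r + 1) by ring])
    set φ : ℝ → ℝ := fun s => D j (n + s) - ∑ i ∈ Finset.range (r + 1),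
      s ^ i / i.factorial * D (j + i) n with hφ
    have hφ0 : φ 0 = 0 := by
      simp [hφ, Finset.sum_range_succ']
    have hφd : ∀ y ∈ Set.Icc 0 h, HasDerivAt φ (D (j + 1) (n + y) -
        ∑ i ∈ Finset.range r, y ^ i / i.factorial * D (j + 1 + i) n) y := by
      intro y hy
      have h1 : HasDerivAt (fun y => D j (n + y)) (D (j + 1) (n + y)) y := by
        have := hd j (n + y) ⟨by linarith [hy.1], by linarith [hy.2]⟩
        exact this.comp_const_add n y
      have h2 : HasDerivAt (fun y : ℝ => ∑ i ∈ Finset.range (r + 1),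
          y ^ i / i.factorial * D (j + i) n)
          (∑ i ∈ Finset.range (r + 1), (i : ℝ) * y ^ (i - 1) / i.factorial * D (j + i) n) y := by
        refine HasDerivAt.fun_sum fun i _ => ?_
        exact ((hasDerivAt_pow i y).div_const _).mul_const _
      have h3 : ∑ i ∈ Finset.range (r + 1), (i : ℝ) * y ^ (i - 1) / i.factorial * D (j + i) n =
          ∑ i ∈ Finset.range r, y ^ i / i.factorial * D (j + 1 + i) n := by
        rw [Finset.sum_range_succ']
        simp only [Nat.cast_zero, zero_mul, zero_div, add_zero]
        refine Finset.sum_congr rfl fun i _ => ?_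
        rw [Nat.factorial_succ, show j + (i + 1) = j + 1 + i by ring]
        have : ((i + 1 : ℕ) : ℝ) ≠ 0 := by positivity
        push_cast at this ⊢
        field_simp
      rw [h3] at h2
      exact h1.sub h2
    have key := Convex.norm_image_sub_le_of_norm_hasDerivWithin_le (f := φ)
      (f' := fun y => D (j + 1) (n + y) -
        ∑ i ∈ Finset.range r, y ^ i / i.factorial * D (j + 1 + i) n)
      (C := B * s ^ r) (s := Set.Icc 0 s) (x := 0) (y := s)
      (fun y hy => (hφd y ⟨hy.1, hy.2.trans hs.2⟩).hasDerivWithinAt)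
      (fun y hy => by
        rw [Real.norm_eq_abs]
        refine (ih' y ⟨hy.1, hy.2.trans hs.2⟩).trans ?_
        have h0 := hy.1
        have h1 := hy.2
        gcongr)
      (convex_Icc _ _) ⟨le_rfl, hs.1⟩ ⟨hs.1, le_rfl⟩
    rw [hφ0, sub_zero, sub_zero, Real.norm_eq_abs, Real.norm_eq_abs, abs_of_nonneg hs.1] at key
    rw [pow_succ, ← mul_assoc]
    exact key

section Family
variable {k : ℕ}

/-- The `m`-th derivative of the combination of the functions `a i` with coefficients `v`. -/
def Dr (a : Fin k → ℝ → ℝ) (m : ℕ) (v : Fin k → ℚ) (t : ℝ) : ℝ :=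
  ∑ i, (v i : ℝ) * iteratedDeriv m (a i) t

variable (a : Fin k → ℝ → ℝ)

lemma Dr_zero (m : ℕ) (t : ℝ) : Dr a m 0 t = 0 := by simp [Dr]

lemma Dr_add (m : ℕ) (v w : Fin k → ℚ) (t : ℝ) : Dr a m (v + w) t = Dr a m v t + Dr a m w t := by
  simp [Dr, add_mul, Finset.sum_add_distrib]

lemma Dr_smul (m : ℕ) (q : ℚ) (v : Fin k → ℚ) (t : ℝ) : Dr a m (q • v) t = q * Dr a m v t := by
  simp [Dr, Finset.mul_sum, mul_assoc]

lemma Dr_sum {ι : Type*} (s : Finset ι) (m : ℕ) (v : ι → Fin k → ℚ) (t : ℝ) :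
    Dr a m (∑ j ∈ s, v j) t = ∑ j ∈ s, Dr a m (v j) t := by
  classical
  induction s using Finset.induction_on with
  | empty => simp [Dr_zero]
  | insert b s hb ih => rw [Finset.sum_insert hb, Finset.sum_insert hb, Dr_add, ih]

/-- Standing hypotheses: the functions `a i` lie in the Hardy field and are `O(t ^ d)`; the
parameter `η` is small. -/
structure Fam (H : HardyField) (a : Fin k → ℝ → ℝ) (d : ℕ) (η : ℝ) : Prop where
  mem : ∀ i, a i ∈ H.carrier
  big : ∀ i, a i =O[atTop] fun t : ℝ => t ^ (d : ℝ)
  pos : 0 < η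
  lt : η < 1 / 4

variable {a} {H : HardyField} {d : ℕ} {η : ℝ}

lemma iteratedDeriv_mem {u : ℝ → ℝ} (hu : u ∈ H.carrier) (m : ℕ) :
    iteratedDeriv m u ∈ H.carrier := by
  induction m with
  | zero => simpa using hu
  | succ m ih => rw [iteratedDeriv_succ]; exact H.deriv_mem ih

lemma Fam.Dr_mem (h : Fam H a d η) (m : ℕ) (v : Fin k → ℚ) : Dr a m v ∈ H.carrier :=
  H.sum_mem _ fun i _ => HardyField.const_mul_mem _ (iteratedDeriv_mem (h.mem i) m)

lemma contDiffOn_iteratedDeriv {u : ℝ → ℝ} {b : ℝ} (hu : ContDiffOn ℝ (⊤ : ℕ∞) u (Set.Ioi b))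
    (m : ℕ) : ContDiffOn ℝ (⊤ : ℕ∞) (iteratedDeriv m u) (Set.Ioi b) := by
  induction m with
  | zero => simpa using hu
  | succ m ih => rw [iteratedDeriv_succ]; exact ih.deriv_of_isOpen isOpen_Ioi (by simp)

lemma Fam.exists_hasDerivAt (h : Fam H a d η) :
    ∃ b : ℝ, ∀ m v, ∀ t > b, HasDerivAt (Dr a m v) (Dr a (m + 1) v t) t := by
  choose c hc using fun i => H.smooth (a i) (h.mem i)
  refine ⟨∑ i, |c i|, fun m v t ht => ?_⟩
  refine HasDerivAt.fun_sum fun i _ => HasDerivAt.const_mul _ ?_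
  rw [iteratedDeriv_succ]
  have ht' : t ∈ Set.Ioi (c i) := by
    have : |c i| ≤ ∑ i, |c i| := Finset.single_le_sum (f := fun i => |c i|)
      (fun i _ => abs_nonneg _) (Finset.mem_univ i)
    have := le_abs_self (c i)
    rw [Set.mem_Ioi]; linarith
  exact (((contDiffOn_iteratedDeriv (hc i) m).differentiableOn (by simp)).differentiableAt
    (isOpen_Ioi.mem_nhds ht')).hasDerivAt

lemma Fam.ev_hasDerivAt (h : Fam H a d η) (m : ℕ) (v : Fin k → ℚ) :
    ∀ᶠ t in atTop, HasDerivAt (Dr a m v) (Dr a (m + 1) v t) t := by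
  obtain ⟨b, hb⟩ := h.exists_hasDerivAt
  filter_upwards [eventually_gt_atTop b] with t ht using hb m v t ht

lemma Fam.isBigO (h : Fam H a d η) (m : ℕ) (v : Fin k → ℚ) :
    Dr a m v =O[atTop] fun t : ℝ => t ^ ((d : ℝ) - m / 2) := by
  induction m with
  | zero =>
    simp only [Nat.cast_zero, zero_div, sub_zero]
    refine Asymptotics.IsBigO.fun_sum fun i _ => ?_
    rw [iteratedDeriv_zero]
    exact (h.big i).const_mul_left _
  | succ m ih =>
    have := HardyField.isBigO_deriv (h.Dr_mem (m + 1) v) (h.ev_hasDerivAt m v) ih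
    refine this.congr_right fun t => ?_
    congr 1; push_cast; ring

/-! ### Passage to slowly varying sequences -/

lemma isBigO_rpow_of_le {r s : ℝ} (h : r ≤ s) :
    (fun t : ℝ => t ^ r) =O[atTop] fun t : ℝ => t ^ s := by
  refine Asymptotics.IsBigO.of_bound 1 ?_
  filter_upwards [eventually_ge_atTop 1] with t ht
  rw [Real.norm_eq_abs, Real.norm_eq_abs, abs_of_pos (Real.rpow_pos_of_pos (by linarith) _),
    abs_of_pos (Real.rpow_pos_of_pos (by linarith) _), one_mul]
  exact Real.rpow_le_rpow_of_exponent_le ht h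

/-- The combinations whose `m`-th derivative is negligible against `t ^ (-m η)`. -/
def Ngl (a : Fin k → ℝ → ℝ) (η : ℝ) (m : ℕ) : Submodule ℚ (Fin k → ℚ) where
  carrier := {v | ∃ δ > 0, Dr a m v =O[atTop] fun t : ℝ => t ^ (-(m * η) - δ)}
  zero_mem' := ⟨1, one_pos, by
    refine Asymptotics.IsBigO.of_bound 0 ?_
    simp [Dr_zero]⟩
  add_mem' := by
    rintro v w ⟨δ, hδ, hv⟩ ⟨δ', hδ', hw⟩
    refine ⟨min δ δ', lt_min hδ hδ', ?_⟩
    have e : Dr a m (v + w) = fun t => Dr a m v t + Dr a m w t := funext fun t => Dr_add a m v w t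
    rw [e]
    exact (hv.trans (isBigO_rpow_of_le (by linarith [min_le_left δ δ']))).add
      (hw.trans (isBigO_rpow_of_le (by linarith [min_le_right δ δ'])))
  smul_mem' := by
    rintro q v ⟨δ, hδ, hv⟩
    refine ⟨δ, hδ, ?_⟩
    have e : Dr a m (q • v) = fun t => q * Dr a m v t := funext fun t => Dr_smul a m q v t
    rw [e]
    exact hv.const_mul_left _

lemma mem_Ngl {m : ℕ} {v : Fin k → ℚ} :
    v ∈ Ngl a η m ↔ ∃ δ > 0, Dr a m v =O[atTop] fun t : ℝ => t ^ (-(m * η) - δ) := Iff.rfl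

lemma Fam.Ngl_mono (h : Fam H a d η) : Monotone (Ngl a η) := by
  refine monotone_nat_of_le_succ fun m v hv => ?_
  obtain ⟨δ, hδ, hv⟩ := mem_Ngl.1 hv
  refine mem_Ngl.2 ⟨δ, hδ, ?_⟩
  refine (HardyField.isBigO_deriv (h.Dr_mem (m + 1) v) (h.ev_hasDerivAt m v) hv).trans
    (isBigO_rpow_of_le ?_)
  push_cast
  linarith [h.lt]

lemma Fam.Ngl_top (h : Fam H a d η) {m : ℕ} (hm : 4 * d + 4 ≤ m) (v : Fin k → ℚ) :
    v ∈ Ngl a η m := by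
  refine mem_Ngl.2 ⟨1, one_pos, (h.isBigO m v).trans (isBigO_rpow_of_le ?_)⟩
  have h1 : (4 * d + 4 : ℝ) ≤ m := by exact_mod_cast hm
  nlinarith [h.lt]

/-- The coefficients of the formal shift. -/
def tc (e i : ℕ) : ℚ := (e : ℚ) ^ i / i.factorial

/-- Formal Taylor sums `∑ j, Q ^ j x_j^{(j)}(n)`, with the shift `n ↦ n + e Q`, filtered by the size
of the terms. -/
def hardySys (h : Fam H a d η) : DegSys (ℕ → Fin k → ℚ) where
  σ e :=
    { toFun := fun x m => ∑ j ∈ Finset.range (m + 1), tc e (m - j) • x j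
      map_zero' := by ext; simp
      map_add' := fun x y => by
        funext m
        simp [Finset.sum_add_distrib] }
  G r :=
    { carrier := {x | ∀ j, x j ∈ Ngl a η (j + r)}
      zero_mem' := fun j => (Ngl a η _).zero_mem
      add_mem' := fun hx hy j => (Ngl a η _).add_mem (hx j) (hy j)
      neg_mem' := fun hx j => (Ngl a η _).neg_mem (hx j) }
  mono := fun r s hrs x hx j => h.Ngl_mono (by omega) (hx j)
  σ_zero v := by
    funext m
    simp only [AddMonoidHom.coe_mk, ZeroHom.coe_mk]
    rw [Finset.sum_range_succ, Finset.sum_eq_zero]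
    · simp [tc]
    · intro j hj
      rw [Finset.mem_range] at hj
      have : m - j ≠ 0 := by omega
      simp [tc, this]
  der e r v hv m := by
    simp only [AddMonoidHom.coe_mk, ZeroHom.coe_mk, Pi.sub_apply]
    rw [Finset.sum_range_succ]
    have e1 : tc e (m - m) = 1 := by simp [tc]
    rw [e1, one_smul, add_sub_cancel_right]
    refine Submodule.sum_mem _ fun j hj => Submodule.smul_mem _ _ ?_
    rw [Finset.mem_range] at hj
    exact h.Ngl_mono (by omega) (hv j)
  sep e e' u hne hu j := by
    induction j using Nat.strong_induction_on with
    | _ j ih =>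
    have hu := hu (j + 1)
    simp only [AddMonoidHom.coe_mk, ZeroHom.coe_mk, Pi.sub_apply, add_zero] at hu
    rw [← Finset.sum_sub_distrib] at hu
    simp only [← sub_smul] at hu
    rw [Finset.sum_range_succ, Finset.sum_range_succ] at hu
    have e1 : tc e (j + 1 - (j + 1)) - tc e' (j + 1 - (j + 1)) = 0 := by simp [tc]
    have e2 : tc e (j + 1 - j) - tc e' (j + 1 - j) = (e : ℚ) - e' := by simp [tc]
    rw [e1, e2, zero_smul, add_zero] at hu
    have h1 : ∑ i ∈ Finset.range j, (tc e (j + 1 - i) - tc e' (j + 1 - i)) • u i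
        ∈ Ngl a η (j + 1) := by
      refine Submodule.sum_mem _ fun i hi => Submodule.smul_mem _ _ ?_
      rw [Finset.mem_range] at hi
      exact h.Ngl_mono (by omega) (ih i hi)
    have h2 := (Submodule.add_mem_iff_right _ h1).1 hu
    have h3 : (e : ℚ) - e' ≠ 0 := sub_ne_zero.2 (by exact_mod_cast hne)
    exact (Submodule.smul_mem_iff _ h3).1 h2

lemma mem_hardySys (h : Fam H a d η) {r : ℕ} {x : ℕ → Fin k → ℚ} :
    x ∈ (hardySys h).G r ↔ ∀ j, x j ∈ Ngl a η (j + r) := Iff.rfl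

lemma hardySys_σ (h : Fam H a d η) (e : ℕ) (x : ℕ → Fin k → ℚ) (m : ℕ) :
    (hardySys h).σ e x m = ∑ j ∈ Finset.range (m + 1), tc e (m - j) • x j := rfl

/-- The sequence represented by a formal Taylor sum, truncated at order `K`. -/
def hReal (a : Fin k → ℝ → ℝ) (K : ℕ) : (ℕ → Fin k → ℚ) →+ (ℕ × ℕ × ℕ → ℝ) where
  toFun x ω := ∑ j ∈ Finset.range K, (ω.2.2 : ℝ) ^ j * Dr a j (x j) ω.2.1
  map_zero' := by ext; simp [Dr_zero]
  map_add' x y := by ext; simp [Dr_add, mul_add, Finset.sum_add_distrib]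

lemma hReal_apply (K : ℕ) (x : ℕ → Fin k → ℚ) (ω : ℕ × ℕ × ℕ) :
    hReal a K x ω = ∑ j ∈ Finset.range K, (ω.2.2 : ℝ) ^ j * Dr a j (x j) ω.2.1 := rfl

/-- The range of the coordinate `Q`, of order `N ^ η`. -/
def Mη (η : ℝ) (N : ℕ) : ℕ := ⌈(N : ℝ) ^ η⌉₊

lemma Mη_bounds (hη : 0 < η) {N Q : ℕ} (hN : 1 ≤ N) (h1 : Mη η N ≤ Q) (h2 : Q < 2 * Mη η N) :
    (N : ℝ) ^ η ≤ Q ∧ (Q : ℝ) ≤ 4 * (N : ℝ) ^ η := by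
  have hN' : (1 : ℝ) ≤ N := by exact_mod_cast hN
  have hp : (1 : ℝ) ≤ (N : ℝ) ^ η := Real.one_le_rpow hN' hη.le
  have h3 : (N : ℝ) ^ η ≤ Mη η N := Nat.le_ceil _
  have h4 : (Mη η N : ℝ) < (N : ℝ) ^ η + 1 := Nat.ceil_lt_add_one (by linarith)
  have h1' : (Mη η N : ℝ) ≤ Q := by exact_mod_cast h1
  have h2' : (Q : ℝ) < 2 * Mη η N := by exact_mod_cast h2
  constructor <;> linarith

lemma Mη_tendsto (hη : 0 < η) : Tendsto (Mη η) atTop atTop :=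
  tendsto_nat_ceil_atTop.comp ((tendsto_rpow_atTop hη).comp tendsto_natCast_atTop_atTop)

lemma Mη_small (h1 : η < 1) {κ : ℝ} (hκ : 0 < κ) :
    ∀ᶠ N : ℕ in atTop, 4 * (N : ℝ) ^ η ≤ κ * N := by
  have h : Tendsto (fun N : ℕ => (N : ℝ) ^ (1 - η)) atTop atTop :=
    (tendsto_rpow_atTop (by linarith)).comp tendsto_natCast_atTop_atTop
  filter_upwards [h.eventually_ge_atTop (4 / κ), eventually_ge_atTop 1] with N hN hN1
  have hN0 : (0 : ℝ) < N := by exact_mod_cast hN1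
  have e : (N : ℝ) = (N : ℝ) ^ (1 - η) * (N : ℝ) ^ η := by
    rw [← Real.rpow_add hN0]; simp
  rw [div_le_iff₀ hκ] at hN
  have hp := Real.rpow_pos_of_pos hN0 η
  calc 4 * (N : ℝ) ^ η ≤ ((N : ℝ) ^ (1 - η) * κ) * (N : ℝ) ^ η := by gcongr
    _ = κ * ((N : ℝ) ^ (1 - η) * (N : ℝ) ^ η) := by ring
    _ = κ * N := by rw [← e]

/-- An estimate `O(t ^ (-j η))` bounds the product with `Q ^ j` on the blocks and slightly beyond. -/
lemma bdd_term (hη : 0 < η) {u : ℝ → ℝ} {j : ℕ}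
    (hu : u =O[atTop] fun t : ℝ => t ^ (-(j * η))) :
    ∃ C : ℝ, 0 ≤ C ∧ ∀ᶠ N : ℕ in atTop, ∀ Q : ℕ, Mη η N ≤ Q → Q < 2 * Mη η N → ∀ t : ℝ,
      N ≤ t → (Q : ℝ) ^ j * |u t| ≤ C := by
  obtain ⟨C, hC⟩ := hu.bound
  refine ⟨4 ^ j * |C|, by positivity, ?_⟩
  obtain ⟨b, hb⟩ := eventually_atTop.1 hC
  filter_upwards [eventually_ge_atTop 1, tendsto_natCast_atTop_atTop.eventually_ge_atTop b]
    with N hN hNb Q hQ1 hQ2 t ht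
  have hN' : (1 : ℝ) ≤ N := by exact_mod_cast hN
  have hN0 : (0 : ℝ) < N := by linarith
  have ht0 : 0 < t := by linarith
  have h1 := hb t (hNb.trans ht)
  rw [Real.norm_eq_abs, Real.norm_eq_abs, abs_of_pos (Real.rpow_pos_of_pos ht0 _)] at h1
  have h2 := (Mη_bounds hη hN hQ1 hQ2).2
  have h3 : t ^ (-(j * η)) ≤ (N : ℝ) ^ (-(j * η)) :=
    Real.rpow_le_rpow_of_nonpos hN0 ht (by have := hη.le; simp; positivity)
  have h4 : ((N : ℝ) ^ η) ^ j * (N : ℝ) ^ (-(j * η)) = 1 := by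
    rw [← Real.rpow_natCast, ← Real.rpow_mul hN0.le, ← Real.rpow_add hN0,
      show η * j + -(j * η) = 0 by ring, Real.rpow_zero]
  calc (Q : ℝ) ^ j * |u t| ≤ (4 * (N : ℝ) ^ η) ^ j * (|C| * (N : ℝ) ^ (-(j * η))) := by
        gcongr
        refine h1.trans ?_
        have := le_abs_self C
        have := (Real.rpow_pos_of_pos ht0 (-(j * η))).le
        gcongr
    _ = 4 ^ j * |C| * (((N : ℝ) ^ η) ^ j * (N : ℝ) ^ (-(j * η))) := by rw [mul_pow]; ring
    _ = 4 ^ j * |C| := by rw [h4, mul_one]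

lemma bdd_of_Ngl (hη : 0 < η) {v : Fin k → ℚ} {m : ℕ} (hv : v ∈ Ngl a η m) :
    Dr a m v =O[atTop] fun t : ℝ => t ^ (-(m * η)) := by
  obtain ⟨δ, hδ, hv⟩ := mem_Ngl.1 hv
  exact hv.trans (isBigO_rpow_of_le (by linarith))

/-- The formal shift realizes the shift `n ↦ n + e Q` up to a bounded error. -/
lemma hReal_shift (h : Fam H a d η) (e : ℕ) (x : ℕ → Fin k → ℚ) :
    BddOnBlocks (blk (Mη η)) (fun ω => hReal a (4 * d + 4) ((hardySys h).σ e x) ω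
      - hReal a (4 * d + 4) x (shN (fun _ Q => Q) e ω)) := by
  set K := 4 * d + 4 with hK
  obtain ⟨b, hb⟩ := h.exists_hasDerivAt
  choose C hC0 hC using fun j => bdd_term h.pos (bdd_of_Ngl h.pos (h.Ngl_top hK.ge (x j)))
  refine ⟨∑ j ∈ Finset.range K, C j * e ^ (K - j), ?_⟩
  have hall : ∀ᶠ N : ℕ in atTop, ∀ j ∈ Finset.range K, ∀ Q : ℕ, Mη η N ≤ Q → Q < 2 * Mη η N →
      ∀ t : ℝ, N ≤ t → (Q : ℝ) ^ K * |Dr a K (x j) t| ≤ C j :=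
    (Filter.eventually_all_finset _).2 fun j _ => hC j
  filter_upwards [hall, eventually_ge_atTop 1, tendsto_natCast_atTop_atTop.eventually_gt_atTop b]
    with N hN hN1 hNb ω hω
  rw [mem_blk] at hω
  obtain ⟨-, ⟨hn1, -⟩, hQ1, hQ2⟩ := hω
  set n : ℝ := (ω.2.1 : ℝ) with hn
  set Q : ℝ := (ω.2.2 : ℝ) with hQ
  have hNn : (N : ℝ) ≤ n := by rw [hn]; exact_mod_cast hn1
  have hN1' : (1 : ℝ) ≤ N := by exact_mod_cast hN1
  have hQ0 : 0 < Q := lt_of_lt_of_le (Real.rpow_pos_of_pos (by linarith) _)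
    (Mη_bounds h.pos hN1 hQ1 hQ2).1
  have e1 : hReal a K ((hardySys h).σ e x) ω = ∑ j ∈ Finset.range K, Q ^ j *
      ∑ i ∈ Finset.range (K - j), (e * Q) ^ i / i.factorial * Dr a (j + i) (x j) n := by
    rw [hReal_apply]
    have l1 : ∀ m ∈ Finset.range K, Q ^ m * Dr a m ((hardySys h).σ e x m) n =
        ∑ j ∈ Finset.range (m + 1), Q ^ m * ((tc e (m - j) : ℝ) * Dr a m (x j) n) := by
      intro m _
      rw [hardySys_σ, Dr_sum, Finset.mul_sum]
      simp only [Dr_smul]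
    rw [Finset.sum_congr rfl l1, Finset.sum_comm' (t' := Finset.range K)
      (s' := fun j => Finset.Ico j K) (by
        intro m j; simp only [Finset.mem_range, Finset.mem_Ico]; omega)]
    refine Finset.sum_congr rfl fun j hj => ?_
    rw [Finset.sum_Ico_eq_sum_range, Finset.mul_sum]
    refine Finset.sum_congr rfl fun i _ => ?_
    rw [Nat.add_sub_cancel_left, tc, pow_add, mul_pow]
    push_cast
    ring
  have e2 : hReal a K x (shN (fun _ Q => Q) e ω) = ∑ j ∈ Finset.range K, Q ^ j *
      Dr a j (x j) (n + e * Q) := by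
    rw [hReal_apply]
    simp only [shN]
    push_cast
    rfl
  rw [e1, e2, ← Finset.sum_sub_distrib]
  refine (Finset.abs_sum_le_sum_abs _ _).trans (Finset.sum_le_sum fun j hj => ?_)
  have hjK : j + (K - j) = K := by have := Finset.mem_range.1 hj; omega
  have hQK : 0 < Q ^ K := by positivity
  have heQ : 0 ≤ e * Q := by positivity
  have ht := taylor_chain (D := fun i => Dr a i (x j)) (n := n) (h := e * Q) (B := C j / Q ^ K)
    (div_nonneg (hC0 j) hQK.le)
    (fun i s hs => hb i (x j) s (by have := hs.1; exact lt_of_lt_of_le hNb (hNn.trans this)))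
    (K - j) j (fun s hs => by
      rw [hjK, le_div_iff₀ hQK, mul_comm]
      exact hN j hj _ hQ1 hQ2 s (hNn.trans hs.1)) (e * Q) ⟨heQ, le_rfl⟩
  rw [← mul_sub, abs_mul, abs_of_pos (pow_pos hQ0 j), abs_sub_comm]
  calc _ ≤ Q ^ j * (C j / Q ^ K * (e * Q) ^ (K - j)) := by gcongr
    _ = C j * e ^ (K - j) * (Q ^ (j + (K - j)) / Q ^ K) := by rw [mul_pow, pow_add]; ring
    _ = C j * e ^ (K - j) := by rw [hjK, div_self hQK.ne', mul_one]

lemma hReal_bdd (h : Fam H a d η) {x : ℕ → Fin k → ℚ} (hx : x ∈ (hardySys h).G 0) (K : ℕ) :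
    BddOnBlocks (blk (Mη η)) (hReal a K x) := by
  refine BddOnBlocks.sum (Finset.range K)
    (h := fun j (ω : ℕ × ℕ × ℕ) => (ω.2.2 : ℝ) ^ j * Dr a j (x j) ω.2.1) fun j _ => ?_
  obtain ⟨C, hC0, hC⟩ := bdd_term h.pos (bdd_of_Ngl h.pos (hx j))
  refine ⟨C, ?_⟩
  filter_upwards [hC] with N hN ω hω
  rw [mem_blk] at hω
  rw [abs_mul, abs_of_nonneg (by positivity : (0 : ℝ) ≤ (ω.2.2 : ℝ) ^ j)]
  exact hN _ hω.2.2.1 hω.2.2.2 _ (by exact_mod_cast hω.2.1.1)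

end Family

/-! ### Elimination of members with a definite speed -/

/-- The increments of `h` in the variable `n` are `O(w N)` per unit. -/
def Up (M : ℕ → ℕ) (h : ℕ × ℕ × ℕ → ℝ) (w : ℝ → ℝ) : Prop :=
  ∃ C : ℝ, 0 ≤ C ∧ ∀ᶠ N : ℕ in atTop, ∀ Q, M N ≤ Q → Q < 2 * M N → ∀ n n' : ℕ, N ≤ n → n ≤ n' →
    n' ≤ 3 * N → |h (N, n', Q) - h (N, n, Q)| ≤ C * w N * ((n' : ℝ) - n)

/-- The increments of `h` in the variable `n` are at least a multiple of `w N` per unit. -/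
def Lo (M : ℕ → ℕ) (h : ℕ × ℕ × ℕ → ℝ) (w : ℝ → ℝ) : Prop :=
  ∃ c : ℝ, 0 < c ∧ ∀ᶠ N : ℕ in atTop, ∀ Q, M N ≤ Q → Q < 2 * M N → ∀ n n' : ℕ, N ≤ n → n ≤ n' →
    n' ≤ 3 * N → c * w N * ((n' : ℝ) - n) ≤ |h (N, n', Q) - h (N, n, Q)|

lemma Up.mono {M : ℕ → ℕ} {h : ℕ × ℕ × ℕ → ℝ} {w w' : ℝ → ℝ} (hu : Up M h w)
    (hw : ∀ᶠ t in atTop, w t ≤ w' t) : Up M h w' := by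
  obtain ⟨C, hC0, hC⟩ := hu
  refine ⟨C, hC0, ?_⟩
  filter_upwards [hC, tendsto_natCast_atTop_atTop.eventually hw]
    with N hN hw Q h1 h2 n n' h3 h4 h5
  refine (hN Q h1 h2 n n' h3 h4 h5).trans ?_
  have : (n : ℝ) ≤ n' := by exact_mod_cast h4
  have : 0 ≤ (n' : ℝ) - n := by linarith
  gcongr

section Peel
variable {X : Type*} [MeasurableSpace X] {μ : Measure X} [IsProbabilityMeasure μ]
  {T : ℤ → X → X}

/-- The member `q` moves fastest; it is eliminated by shifts of `n` by about `1 / w N`. -/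
lemma SC.peel (hT : WM μ T) {ι : Type*} [DecidableEq ι] {M : ℕ → ℕ} {g : ι → ℕ × ℕ × ℕ → ℝ}
    {R : Finset ι} {q : ι} (hq : q ∉ R) (hR : SC μ T (blk M) (fun i ω => ⌊g i ω⌋) R)
    {w : ℝ → ℝ} (hw0 : Tendsto w atTop (𝓝 0)) (hw1 : Tendsto (fun t => t * w t) atTop atTop)
    (hup : ∀ i ∈ insert q R, Up M (g i) w) (hlo : Lo M (g q) w) :
    SC μ T (blk M) (fun i ω => ⌊g i ω⌋) (insert q R) := by
  obtain ⟨c, hc, hlo⟩ := hlo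
  set p : ℕ → ℕ := fun N => ⌈2 / (c * w N)⌉₊ with hp
  have hcast : Tendsto (fun N : ℕ => (N : ℝ)) atTop atTop := tendsto_natCast_atTop_atTop
  have hw0N := hcast.eventually (hw0.eventually_lt_const one_pos)
  have hw1N := hw1.comp hcast
  have hwpos : ∀ᶠ N : ℕ in atTop, 0 < w N := by
    filter_upwards [hw1N.eventually_gt_atTop 0, eventually_gt_atTop 0] with N h1 h2
    have : (0 : ℝ) < N := by exact_mod_cast h2
    exact pos_of_mul_pos_right h1 this.le
  have hplo : ∀ᶠ N : ℕ in atTop, 2 ≤ c * w N * p N := by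
    filter_upwards [hwpos] with N h1
    have h2 := Nat.le_ceil (2 / (c * w N))
    rw [div_le_iff₀ (by positivity)] at h2
    linarith
  have hpup : ∀ᶠ N : ℕ in atTop, w N * p N ≤ 2 / c + 1 := by
    filter_upwards [hwpos, hw0N] with N h1 h3
    have h2 := (Nat.ceil_lt_add_one (by positivity : 0 ≤ 2 / (c * w N))).le
    calc w N * p N ≤ w N * (2 / (c * w N) + 1) := by gcongr
      _ = 2 / c + w N := by field_simp
      _ ≤ 2 / c + 1 := by linarith
  have hpsmall : ∀ κ > (0 : ℝ), ∀ᶠ N : ℕ in atTop, (p N : ℝ) ≤ κ * N := by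
    intro κ hκ
    filter_upwards [hwpos, hpup, hw1N.eventually_ge_atTop ((2 / c + 1) / κ)] with N h1 h2 h3
    have h3 : (2 / c + 1) / κ ≤ N * w N := h3
    rw [div_le_iff₀ hκ] at h3
    have h4 : w N * p N ≤ w N * (κ * N) := by nlinarith
    exact le_of_mul_le_mul_left h4 h1
  have hsh : Shift (blk M) (shN fun N _ => p N) :=
    shN_shift fun κ hκ => (hpsmall κ hκ).mono fun N hN Q _ _ => hN
  have hstay : ∀ e : ℕ, ∀ᶠ N : ℕ in atTop, ∀ n < 2 * N, n + e * p N ≤ 3 * N := by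
    intro e
    filter_upwards [hpsmall (1 / (e + 1)) (by positivity)] with N hN n hn
    have h1 : (e : ℝ) * p N ≤ N := by
      calc (e : ℝ) * p N ≤ (e + 1) * (1 / (e + 1) * N) := by gcongr; linarith
        _ = N := by field_simp
    have h2 : e * p N ≤ N := by exact_mod_cast h1
    omega
  have hmove : ∀ i ∈ insert q R, ∃ B : ℝ, 0 ≤ B ∧ ∀ e : ℕ, ∀ᶠ N : ℕ in atTop, ∀ ω ∈ blk M N,
      |g i (shN (fun N _ => p N) e ω) - g i ω| ≤ B * e := by
    intro i hi
    obtain ⟨C, hC0, hC⟩ := hup i hi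
    refine ⟨C * (2 / c + 1), by positivity, fun e => ?_⟩
    filter_upwards [hC, hstay e, hpup] with N h1 h2 h3 ω hω
    obtain ⟨N', n, Q⟩ := ω
    rw [mem_blk] at hω
    obtain ⟨rfl, ⟨h4, h5⟩, h6, h7⟩ := hω
    dsimp only at h4 h5 h6 h7
    have := h1 Q h6 h7 n (n + e * p N') h4 (by omega) (h2 n h5)
    refine this.trans ?_
    push_cast
    calc C * w N' * ((n : ℝ) + e * p N' - n) = C * (w N' * p N') * e := by ring
      _ ≤ C * (2 / c + 1) * e := by gcongr
  obtain ⟨B, hB0, hB⟩ := hmove q (Finset.mem_insert_self _ _)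
  obtain ⟨L, hL⟩ := exists_nat_ge (B + 2)
  refine SC.of_linear hT hq hsh hR ?_ L ?_ ?_
  · intro i hi e
    obtain ⟨B', -, hB'⟩ := hmove i (Finset.mem_insert_of_mem hi)
    have hb : BddOnBlocks (blk M) (fun ω => g i (shN (fun N _ => p N) e ω) - g i ω) :=
      ⟨_, hB' e⟩
    refine hb.int (D := 2) fun ω => ?_
    have h1 := abs_le.1 (abs_floor_sub (g i ω))
    have h2 := abs_le.1 (abs_floor_sub (g i (shN (fun N _ => p N) e ω)))
    push_cast
    rw [abs_le]; constructor <;> linarith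
  · intro e
    filter_upwards [hB e] with N hN ω hω
    have h1 := abs_le.1 (abs_floor_sub (g q ω))
    have h2 := abs_le.1 (abs_floor_sub (g q (shN (fun N _ => p N) e ω)))
    have h3 := abs_le.1 (hN ω hω)
    have h6 : B * e + 2 ≤ L * (e + 1) := by
      have : (0 : ℝ) ≤ e := by positivity
      nlinarith
    have : |((⌊g q ω⌋ - ⌊g q (shN (fun N _ => p N) e ω)⌋ : ℤ) : ℝ)| ≤ L * (e + 1) := by
      push_cast
      rw [abs_le]; constructor <;> linarith
    exact_mod_cast this
  · intro e e' hee
    filter_upwards [hlo, hstay e', hplo] with N h1 h2 h3 ω hω heq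
    obtain ⟨N', n, Q⟩ := ω
    rw [mem_blk] at hω
    obtain ⟨rfl, ⟨h4, h5⟩, h6, h7⟩ := hω
    dsimp only at h4 h5 h6 h7
    have hle : e * p N' ≤ e' * p N' := Nat.mul_le_mul_right _ hee.le
    have h8 := h1 Q h6 h7 (n + e * p N') (n + e' * p N') (by omega) (by omega) (h2 n h5)
    simp only [shN] at heq
    have hee' : (1 : ℝ) ≤ (e' : ℝ) - e := by
      have : (e : ℝ) + 1 ≤ e' := by exact_mod_cast hee
      linarith
    have h9 : 2 ≤ |g q (N', n + e' * p N', Q) - g q (N', n + e * p N', Q)| := by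
      refine le_trans ?_ h8
      push_cast
      calc (2 : ℝ) ≤ c * w N' * p N' * 1 := by linarith
        _ ≤ c * w N' * p N' * ((e' : ℝ) - e) := by
          exact mul_le_mul_of_nonneg_left hee' (by linarith)
        _ = _ := by ring
    have heq' : (⌊g q (N', n + e * p N', Q)⌋ : ℝ) = ⌊g q (N', n + e' * p N', Q)⌋ := by
      exact_mod_cast heq
    have a1 := Int.floor_le (g q (N', n + e * p N', Q))
    have a2 := Int.lt_floor_add_one (g q (N', n + e * p N', Q))
    have a3 := Int.floor_le (g q (N', n + e' * p N', Q))
    have a4 := Int.lt_floor_add_one (g q (N', n + e' * p N', Q))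
    rcases le_abs.1 h9 with h | h <;> linarith

end Peel

/-! ### Speeds of formal Taylor sums -/

section Speed
variable {k : ℕ} {a : Fin k → ℝ → ℝ} {H : HardyField} {d : ℕ} {η : ℝ}

/-- The contribution of the `j`-th term to the speed of a formal Taylor sum, when `Q = t ^ η`. -/
def zz (a : Fin k → ℝ → ℝ) (η : ℝ) (x : ℕ → Fin k → ℚ) (j : ℕ) (t : ℝ) : ℝ :=
  t ^ (j * η) * Dr a (j + 1) (x j) t

/-- The derivative in `n` of a formal Taylor sum. -/
def tslope (a : Fin k → ℝ → ℝ) (K : ℕ) (x : ℕ → Fin k → ℚ) (Q t : ℝ) : ℝ :=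
  ∑ j ∈ Finset.range K, Q ^ j * Dr a (j + 1) (x j) t

lemma slope_eq (K : ℕ) (x : ℕ → Fin k → ℚ) (Q : ℝ) {t : ℝ} (ht : 0 < t) :
    tslope a K x Q t = ∑ j ∈ Finset.range K, (Q / t ^ η) ^ j * zz a η x j t := by
  refine Finset.sum_congr rfl fun j _ => ?_
  have e : t ^ (j * η) = (t ^ η) ^ j := by
    rw [mul_comm, Real.rpow_mul ht.le, Real.rpow_natCast]
  have : t ^ η ≠ 0 := (Real.rpow_pos_of_pos ht _).ne'
  rw [zz, e, div_pow]
  field_simp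

lemma Fam.zz_mem (h : Fam H a d η) (x : ℕ → Fin k → ℚ) (j : ℕ) : zz a η x j ∈ H.carrier :=
  H.mul_mem (H.rpow_mem _) (h.Dr_mem _ _)

/-- The increments of a formal Taylor sum are controlled by its slope. -/
lemma Fam.slope_mvt (h : Fam H a d η) (K : ℕ) (x : ℕ → Fin k → ℚ) :
    ∀ᶠ N : ℕ in atTop, ∀ Q n n' : ℕ, N ≤ n → n ≤ n' → n' ≤ 3 * N →
      ∃ t : ℝ, N ≤ t ∧ t ≤ 3 * N ∧
        hReal a K x (N, n', Q) - hReal a K x (N, n, Q) = tslope a K x Q t * ((n' : ℝ) - n) := by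
  obtain ⟨b, hb⟩ := h.exists_hasDerivAt
  filter_upwards [tendsto_natCast_atTop_atTop.eventually_gt_atTop b] with N hN Q n n' h1 h2 h3
  have h1' : (N : ℝ) ≤ n := by exact_mod_cast h1
  have h3' : (n' : ℝ) ≤ 3 * N := by exact_mod_cast h3
  rcases h2.eq_or_lt with rfl | h2
  · exact ⟨n, h1', h3', by simp⟩
  have h2' : (n : ℝ) < n' := by exact_mod_cast h2
  have hd : ∀ t : ℝ, (n : ℝ) ≤ t → HasDerivAt (fun t => ∑ j ∈ Finset.range K, (Q : ℝ) ^ j *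
      Dr a j (x j) t) (tslope a K x Q t) t := fun t ht =>
    HasDerivAt.fun_sum fun j _ => (hb j (x j) t (by linarith)).const_mul _
  obtain ⟨t, ht, hte⟩ := exists_hasDerivAt_eq_slope _ (tslope a K x Q) h2'
    (fun t ht => (hd t ht.1).continuousAt.continuousWithinAt) (fun t ht => hd t ht.1.le)
  refine ⟨t, by linarith [ht.1], by linarith [ht.2], ?_⟩
  rw [hte, div_mul_cancel₀ _ (by linarith)]
  rfl

lemma Fam.up_of_slope (h : Fam H a d η) {M : ℕ → ℕ} {K : ℕ} {x : ℕ → Fin k → ℚ} {w : ℝ → ℝ} {C : ℝ}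
    (hC0 : 0 ≤ C) (hC : ∀ᶠ N : ℕ in atTop, ∀ Q : ℕ, M N ≤ Q → Q < 2 * M N → ∀ t : ℝ, N ≤ t →
      t ≤ 3 * N → |tslope a K x Q t| ≤ C * w N) : Up M (hReal a K x) w := by
  refine ⟨C, hC0, ?_⟩
  filter_upwards [hC, h.slope_mvt K x] with N h1 h2 Q h3 h4 n n' h5 h6 h7
  obtain ⟨t, ht1, ht2, he⟩ := h2 Q n n' h5 h6 h7
  have : (n : ℝ) ≤ n' := by exact_mod_cast h6
  rw [he, abs_mul, abs_of_nonneg (by linarith : (0 : ℝ) ≤ (n' : ℝ) - n)]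
  exact mul_le_mul_of_nonneg_right (h1 Q h3 h4 t ht1 ht2) (by linarith)

lemma Fam.lo_of_slope (h : Fam H a d η) {M : ℕ → ℕ} {K : ℕ} {x : ℕ → Fin k → ℚ} {w : ℝ → ℝ} {c : ℝ}
    (hc0 : 0 < c) (hC : ∀ᶠ N : ℕ in atTop, ∀ Q : ℕ, M N ≤ Q → Q < 2 * M N → ∀ t : ℝ, N ≤ t →
      t ≤ 3 * N → c * w N ≤ |tslope a K x Q t|) : Lo M (hReal a K x) w := by
  refine ⟨c, hc0, ?_⟩
  filter_upwards [hC, h.slope_mvt K x] with N h1 h2 Q h3 h4 n n' h5 h6 h7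
  obtain ⟨t, ht1, ht2, he⟩ := h2 Q n n' h5 h6 h7
  have : (n : ℝ) ≤ n' := by exact_mod_cast h6
  rw [he, abs_mul, abs_of_nonneg (by linarith : (0 : ℝ) ≤ (n' : ℝ) - n)]
  exact mul_le_mul_of_nonneg_right (h1 Q h3 h4 t ht1 ht2) (by linarith)

/-- On the blocks, `Q` is comparable with `t ^ η`. -/
lemma Fam.ratio (h : Fam H a d η) {N Q : ℕ} (hN : 1 ≤ N) (h1 : Mη η N ≤ Q) (h2 : Q < 2 * Mη η N)
    {t : ℝ} (ht1 : N ≤ t) (ht2 : t ≤ 3 * N) : 1 / 3 ≤ (Q : ℝ) / t ^ η ∧ (Q : ℝ) / t ^ η ≤ 4 := by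
  have hN' : (1 : ℝ) ≤ N := by exact_mod_cast hN
  have ht0 : 0 < t := by linarith
  obtain ⟨h3, h4⟩ := Mη_bounds h.pos hN h1 h2
  have htp := Real.rpow_pos_of_pos ht0 η
  have h5 : (N : ℝ) ^ η ≤ t ^ η := Real.rpow_le_rpow (by linarith) ht1 h.pos.le
  have h6 : t ^ η ≤ 3 * (N : ℝ) ^ η := by
    calc t ^ η ≤ (3 * N) ^ η := Real.rpow_le_rpow ht0.le ht2 h.pos.le
      _ = 3 ^ η * (N : ℝ) ^ η := Real.mul_rpow (by norm_num) (by linarith)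
      _ ≤ 3 ^ (1 : ℝ) * (N : ℝ) ^ η := by
        gcongr
        · norm_num
        · linarith [h.lt]
      _ = 3 * (N : ℝ) ^ η := by rw [Real.rpow_one]
  constructor
  · rw [le_div_iff₀ htp]; linarith
  · rw [div_le_iff₀ htp]; linarith

/-- If one term dominates the slope, its size at `N` is the speed. -/
lemma Fam.speed (h : Fam H a d η) {K i : ℕ} (hi : i < K) {x : ℕ → Fin k → ℚ}
    (h0 : Tendsto (fun t => |zz a η x i t|) atTop (𝓝 0))
    (h1 : Tendsto (fun t => t * |zz a η x i t|) atTop atTop)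
    (hdom : ∀ j < K, j ≠ i → ∀ κ > 0, ∀ᶠ t in atTop, |zz a η x j t| ≤ κ * |zz a η x i t|) :
    Up (Mη η) (hReal a K x) (fun t => |zz a η x i t|) ∧
      Lo (Mη η) (hReal a K x) (fun t => |zz a η x i t|) := by
  set w : ℝ → ℝ := fun t => |zz a η x i t| with hw
  have hwH : w ∈ H.carrier := HardyField.abs_mem (h.zz_mem x i)
  have hwpos : ∀ᶠ t in atTop, 0 < w t := by
    filter_upwards [h1.eventually_gt_atTop 0, eventually_gt_atTop 0] with t h1 h2
    exact pos_of_mul_pos_right h1 h2.le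
  obtain ⟨b1, hanti⟩ := HardyField.antitone_of_tendsto hwH hwpos h0
  obtain ⟨b2, hmono⟩ := HardyField.monotone_of_tendsto (H.mul_mem H.id_mem hwH) h1
  -- the remaining terms together are at most half of the main one
  set κ : ℝ := (1 / 3) ^ K / (2 * (K * 4 ^ K + 1)) with hκ
  have hκ0 : 0 < κ := by positivity
  have hκle : K * 4 ^ K * κ ≤ (1 / 3) ^ K / 2 := by
    rw [hκ, ← mul_div_assoc, div_le_div_iff₀ (by positivity) (by positivity)]
    have : (0 : ℝ) < (1 / 3) ^ K := by positivity
    nlinarith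
  have hdom' : ∀ᶠ t in atTop, ∀ j ∈ (Finset.range K).erase i, |zz a η x j t| ≤ κ * w t :=
    (Filter.eventually_all_finset _).2 fun j hj =>
      hdom j (Finset.mem_range.1 (Finset.mem_of_mem_erase hj)) (Finset.ne_of_mem_erase hj) κ hκ0
  obtain ⟨b3, hb3⟩ := eventually_atTop.1 (hdom'.and hwpos)
  have hmain : ∀ᶠ N : ℕ in atTop, ∀ Q : ℕ, Mη η N ≤ Q → Q < 2 * Mη η N → ∀ t : ℝ, N ≤ t →
      t ≤ 3 * N → |tslope a K x Q t| ≤ (4 ^ K + 1) * w N ∧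
        (1 / 3) ^ K / 6 * w N ≤ |tslope a K x Q t| := by
    filter_upwards [eventually_ge_atTop 1,
      tendsto_natCast_atTop_atTop.eventually_ge_atTop (max b1 (max b2 b3))]
      with N hN hNb Q hQ1 hQ2 t ht1 ht2
    have hN' : (1 : ℝ) ≤ N := by exact_mod_cast hN
    have hN1 : b1 ≤ N := (le_max_left _ _).trans hNb
    have hN2 : b2 ≤ N := ((le_max_left _ _).trans (le_max_right _ _)).trans hNb
    have hN3 : b3 ≤ N := ((le_max_right _ _).trans (le_max_right _ _)).trans hNb
    have ht0 : 0 < t := by linarith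
    obtain ⟨hd, hwt⟩ := hb3 t (hN3.trans ht1)
    have hwN : w t ≤ w N := hanti hN1 (hN1.trans ht1) ht1
    have hwN' : w N ≤ 3 * w t := by
      have h2 := hmono hN2 (hN2.trans ht1 : b2 ≤ t) ht1
      simp only [Pi.mul_apply] at h2
      have h3 : N * w N ≤ N * (3 * w t) := by nlinarith
      exact le_of_mul_le_mul_left h3 (by linarith)
    obtain ⟨hu1, hu2⟩ := h.ratio hN hQ1 hQ2 ht1 ht2
    set u : ℝ := (Q : ℝ) / t ^ η with hu
    have hu0 : 0 < u := by linarith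
    have hpow : ∀ j < K, u ^ j ≤ 4 ^ K := fun j hj =>
      (pow_le_pow_left₀ hu0.le hu2 j).trans (pow_le_pow_right₀ (by norm_num) hj.le)
    have hpow' : (1 / 3) ^ K ≤ u ^ i :=
      (pow_le_pow_of_le_one (by norm_num) (by norm_num) hi.le).trans
        (pow_le_pow_left₀ (by norm_num) hu1 i)
    have hsplit : tslope a K x Q t = u ^ i * zz a η x i t +
        ∑ j ∈ (Finset.range K).erase i, u ^ j * zz a η x j t := by
      rw [slope_eq (η := η) K x Q ht0, Finset.add_sum_erase _ (fun j => u ^ j * zz a η x j t)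
        (Finset.mem_range.2 hi)]
    have hrest : |∑ j ∈ (Finset.range K).erase i, u ^ j * zz a η x j t| ≤
        (1 / 3) ^ K / 2 * w t := by
      calc _ ≤ ∑ j ∈ (Finset.range K).erase i, |u ^ j * zz a η x j t| :=
            Finset.abs_sum_le_sum_abs _ _
        _ ≤ ∑ j ∈ (Finset.range K).erase i, 4 ^ K * (κ * w t) := by
            refine Finset.sum_le_sum fun j hj => ?_
            rw [abs_mul, abs_of_pos (pow_pos hu0 j)]
            exact mul_le_mul (hpow j (Finset.mem_range.1 (Finset.mem_of_mem_erase hj))) (hd j hj)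
              (abs_nonneg _) (by positivity)
        _ ≤ ∑ j ∈ Finset.range K, 4 ^ K * (κ * w t) :=
            Finset.sum_le_sum_of_subset_of_nonneg (Finset.erase_subset _ _)
              fun _ _ _ => by positivity
        _ = (K * 4 ^ K * κ) * w t := by
            rw [Finset.sum_const, Finset.card_range, nsmul_eq_mul]; ring
        _ ≤ (1 / 3) ^ K / 2 * w t := by gcongr
    have hmn : |u ^ i * zz a η x i t| = u ^ i * w t := by
      rw [abs_mul, abs_of_pos (pow_pos hu0 i)]
    have hone : ((1 : ℝ) / 3) ^ K ≤ 1 := pow_le_one₀ (by norm_num) (by norm_num)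
    constructor
    · calc |tslope a K x Q t| ≤ u ^ i * w t + (1 / 3) ^ K / 2 * w t := by
            rw [hsplit, ← hmn]; exact (abs_add_le _ _).trans (by linarith)
        _ ≤ 4 ^ K * w t + 1 * w t := by gcongr; exacts [hpow i hi, by linarith]
        _ = (4 ^ K + 1) * w t := by ring
        _ ≤ (4 ^ K + 1) * w N := by gcongr
    · have h5 : u ^ i * w t ≤ |tslope a K x Q t| + (1 / 3) ^ K / 2 * w t := by
        rw [← hmn]
        have := abs_sub (tslope a K x Q t)
          (∑ j ∈ (Finset.range K).erase i, u ^ j * zz a η x j t)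
        rw [hsplit, add_sub_cancel_right] at this
        rw [hsplit]; linarith
      have h6 : (1 / 3) ^ K * w t ≤ u ^ i * w t := by gcongr
      have h7 : (1 / 3) ^ K / 6 * w N ≤ (1 / 3) ^ K / 6 * (3 * w t) := by gcongr
      linarith
  refine ⟨h.up_of_slope (C := 4 ^ K + 1) (by positivity) ?_,
    h.lo_of_slope (c := (1 / 3) ^ K / 6) (by positivity) ?_⟩
  · filter_upwards [hmain] with N hN Q h1 h2 t h3 h4 using (hN Q h1 h2 t h3 h4).1
  · filter_upwards [hmain] with N hN Q h1 h2 t h3 h4 using (hN Q h1 h2 t h3 h4).2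

/-- Sums all of whose terms have speed `O(1 / t)`. -/
lemma Fam.slow_up (h : Fam H a d η) (K : ℕ) {x : ℕ → Fin k → ℚ}
    (hz : ∀ j < K, ∀ᶠ t : ℝ in atTop, |zz a η x j t| ≤ t⁻¹) :
    Up (Mη η) (hReal a K x) (fun t => t⁻¹) := by
  have hz' : ∀ᶠ t : ℝ in atTop, ∀ j ∈ Finset.range K, |zz a η x j t| ≤ t⁻¹ :=
    (Filter.eventually_all_finset _).2 fun j hj => hz j (Finset.mem_range.1 hj)
  obtain ⟨b, hb⟩ := eventually_atTop.1 hz'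
  refine h.up_of_slope (C := K * 4 ^ K) (by positivity) ?_
  filter_upwards [eventually_ge_atTop 1, tendsto_natCast_atTop_atTop.eventually_ge_atTop b]
    with N hN hNb Q hQ1 hQ2 t ht1 ht2
  have hN' : (1 : ℝ) ≤ N := by exact_mod_cast hN
  have ht0 : 0 < t := by linarith
  obtain ⟨hu1, hu2⟩ := h.ratio hN hQ1 hQ2 ht1 ht2
  rw [slope_eq (η := η) K x Q ht0]
  set u : ℝ := (Q : ℝ) / t ^ η with hu
  have hu0 : 0 < u := by linarith
  calc _ ≤ ∑ j ∈ Finset.range K, |u ^ j * zz a η x j t| := Finset.abs_sum_le_sum_abs _ _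
    _ ≤ ∑ j ∈ Finset.range K, 4 ^ K * (N : ℝ)⁻¹ := by
      refine Finset.sum_le_sum fun j hj => ?_
      rw [abs_mul, abs_of_pos (pow_pos hu0 j)]
      refine mul_le_mul ?_ ?_ (abs_nonneg _) (by positivity)
      · exact (pow_le_pow_left₀ hu0.le hu2 j).trans
          (pow_le_pow_right₀ (by norm_num) (Finset.mem_range.1 hj).le)
      · exact (hb t (hNb.trans ht1) j hj).trans (by gcongr)
    _ = K * 4 ^ K * (N : ℝ)⁻¹ := by
      rw [Finset.sum_const, Finset.card_range, nsmul_eq_mul]; ring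

end Speed

/-! ### Tuples of degree one -/

section Terminal
variable {k : ℕ} {a : Fin k → ℝ → ℝ} {H : HardyField} {d : ℕ} {η : ℝ}

open HardyField (HasE)

/-- Genericity of `η`: terms of different index of a formal Taylor sum have speeds with different
exponents, and only the term of index `0` may have a speed with exponent `-1`. -/
def Gen (a : Fin k → ℝ → ℝ) (η : ℝ) : Prop :=
  (∀ (i j : ℕ) (v v' : Fin k → ℚ) (s s' : ℝ), i ≠ j → HasE (Dr a (i + 1) v) s →
    HasE (Dr a (j + 1) v') s' → i * η + s ≠ j * η + s') ∧
  ∀ (j : ℕ) (v : Fin k → ℚ) (s : ℝ), j ≠ 0 → HasE (Dr a (j + 1) v) s → j * η + s ≠ -1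

/-- Only countably many values of `η` fail to be generic. -/
lemma exists_gen (a : Fin k → ℝ → ℝ) : ∃ η : ℝ, 0 < η ∧ η < 1 / 4 ∧ Gen a η := by
  set B1 : ℕ × ℕ × (Fin k → ℚ) × (Fin k → ℚ) → Set ℝ := fun p =>
    {η | p.1 ≠ p.2.1 ∧ ∃ s s', HasE (Dr a (p.1 + 1) p.2.2.1) s ∧
      HasE (Dr a (p.2.1 + 1) p.2.2.2) s' ∧ p.1 * η + s = p.2.1 * η + s'} with hB1
  set B2 : ℕ × (Fin k → ℚ) → Set ℝ := fun p =>
    {η | p.1 ≠ 0 ∧ ∃ s, HasE (Dr a (p.1 + 1) p.2) s ∧ p.1 * η + s = -1} with hB2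
  have h1 : (⋃ p, B1 p).Countable := by
    refine Set.countable_iUnion fun p => Set.Subsingleton.countable ?_
    rintro x ⟨hne, s, s', h1, h2, h3⟩ y ⟨-, r, r', h4, h5, h6⟩
    rw [h4.unique h1, h5.unique h2] at h6
    have hne' : (p.1 : ℝ) - p.2.1 ≠ 0 := sub_ne_zero.2 (by exact_mod_cast hne)
    have : ((p.1 : ℝ) - p.2.1) * x = ((p.1 : ℝ) - p.2.1) * y := by linarith
    exact mul_left_cancel₀ hne' this
  have h2 : (⋃ p, B2 p).Countable := by
    refine Set.countable_iUnion fun p => Set.Subsingleton.countable ?_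
    rintro x ⟨hne, s, h1, h3⟩ y ⟨-, r, h4, h6⟩
    rw [h4.unique h1] at h6
    have hne' : (p.1 : ℝ) ≠ 0 := by exact_mod_cast hne
    have : (p.1 : ℝ) * x = p.1 * y := by linarith
    exact mul_left_cancel₀ hne' this
  obtain ⟨η, hη1, hη2⟩ := ((h1.union h2).dense_compl ℝ).exists_mem_open
    (isOpen_Ioo (a := (0 : ℝ)) (b := 1 / 4)) ⟨1 / 8, by norm_num, by norm_num⟩
  rw [Set.mem_compl_iff, Set.mem_union, not_or, Set.mem_iUnion, Set.mem_iUnion] at hη1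
  refine ⟨η, hη2.1, hη2.2, ?_, ?_⟩
  · intro i j v v' s s' hij hs hs' heq
    exact hη1.1 ⟨(i, j, v, v'), hij, s, s', hs, hs', heq⟩
  · intro j v s hj hs heq
    exact hη1.2 ⟨(j, v), hj, s, hs, heq⟩

/-- Among finitely many elements of a Hardy field there is an eventually largest one. -/
lemma HardyField.exists_max {ι : Type*} {s : Finset ι} (hs : s.Nonempty) {u : ι → ℝ → ℝ}
    (hu : ∀ i ∈ s, u i ∈ H.carrier) : ∃ i ∈ s, ∀ j ∈ s, ∀ᶠ t in atTop, u j t ≤ u i t := by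
  induction hs using Finset.Nonempty.cons_induction with
  | singleton b => exact ⟨b, by simp, by simp⟩
  | cons b s hb hs ih =>
    obtain ⟨i, hi, hmax⟩ := ih fun i hi => hu i (Finset.mem_cons_of_mem hi)
    rcases HardyField.cmp (hu b (Finset.mem_cons_self _ _)) (hu i (Finset.mem_cons_of_mem hi))
      with h | h
    · refine ⟨i, Finset.mem_cons_of_mem hi, fun j hj => ?_⟩
      rcases Finset.mem_cons.1 hj with rfl | hj
      exacts [h, hmax j hj]
    · refine ⟨b, Finset.mem_cons_self _ _, fun j hj => ?_⟩
      rcases Finset.mem_cons.1 hj with rfl | hj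
      · exact Eventually.of_forall fun t => le_rfl
      · filter_upwards [h, hmax j hj] with t h1 h2 using h2.trans h1.le

lemma Fam.zz_le (h : Fam H a d η) {x : ℕ → Fin k → ℚ} (hx : x ∈ (hardySys h).G 1) (j : ℕ) :
    ∀ᶠ t : ℝ in atTop, |zz a η x j t| ≤ t ^ (-η) := by
  obtain ⟨δ, hδ, hb⟩ := mem_Ngl.1 (hx j)
  obtain ⟨C, hC⟩ := hb.bound
  filter_upwards [hC, eventually_gt_atTop 0, (tendsto_rpow_atTop hδ).eventually_ge_atTop C]
    with t h1 ht h2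
  have e : |zz a η x j t| = t ^ (j * η) * |Dr a (j + 1) (x j) t| := by
    rw [zz, abs_mul, abs_of_pos (Real.rpow_pos_of_pos ht _)]
  rw [Real.norm_eq_abs, Real.norm_eq_abs, abs_of_pos (Real.rpow_pos_of_pos ht _)] at h1
  rw [e]
  calc t ^ (j * η) * |Dr a (j + 1) (x j) t|
      ≤ t ^ (j * η) * (t ^ δ * t ^ (-(((j + 1 : ℕ) : ℝ) * η) - δ)) := by
        refine mul_le_mul_of_nonneg_left (h1.trans ?_) (Real.rpow_nonneg ht.le _)
        exact mul_le_mul_of_nonneg_right h2 (Real.rpow_nonneg ht.le _)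
    _ = t ^ (-η) := by
        rw [← Real.rpow_add ht, ← Real.rpow_add ht]
        congr 1; push_cast; ring

lemma Fam.zz_hasE (h : Fam H a d η) {x : ℕ → Fin k → ℚ} (hx : x ∈ (hardySys h).G 1) (j : ℕ) :
    (∀ s : ℝ, ∀ᶠ t : ℝ in atTop, |zz a η x j t| ≤ t ^ s) ∨ ∃ s, HasE (zz a η x j) s := by
  rcases HardyField.exists_hasE (h.zz_mem x j) (h.zz_le hx j) with h | ⟨s, -, h⟩
  exacts [Or.inl h, Or.inr ⟨s, h⟩]

/-- The exponent of a term in terms of that of the derivative. -/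
lemma hasE_Dr {x : ℕ → Fin k → ℚ} {j : ℕ} {s : ℝ} (hs : HasE (zz a η x j) s) :
    HasE (Dr a (j + 1) (x j)) (s - j * η) := by
  have h := hs.rpow_mul (-(j * η))
  rw [show -(j * η) + s = s - j * η by ring] at h
  have e : ∀ᶠ t : ℝ in atTop, t ^ (-(j * η)) * zz a η x j t = Dr a (j + 1) (x j) t := by
    filter_upwards [eventually_gt_atTop 0] with t ht
    rw [zz, ← mul_assoc, ← Real.rpow_add ht]; simp
  constructor
  · intro r hr
    filter_upwards [h.1 r hr, e] with t h1 h2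
    rwa [h2] at h1
  · intro r hr
    filter_upwards [h.2 r hr, e] with t h1 h2
    rwa [h2] at h1

/-- A formal Taylor sum is fast if one of its terms has a speed of larger order than `1 / t`. -/
def Fast (a : Fin k → ℝ → ℝ) (η : ℝ) (K : ℕ) (x : ℕ → Fin k → ℚ) : Prop :=
  ∃ j < K, Tendsto (fun t => t * |zz a η x j t|) atTop atTop

/-- A fast sum of degree one has a definite speed. -/
lemma Fam.fast_speed (h : Fam H a d η) (hg : Gen a η) {K : ℕ} {x : ℕ → Fin k → ℚ}
    (hx : x ∈ (hardySys h).G 1) (hf : Fast a η K x) :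
    ∃ w ∈ H.carrier, Tendsto w atTop (𝓝 0) ∧ Tendsto (fun t => t * w t) atTop atTop ∧
      Up (Mη η) (hReal a K x) w ∧ Lo (Mη η) (hReal a K x) w := by
  obtain ⟨j0, hj0, hj0'⟩ := hf
  obtain ⟨i, hi, hmax⟩ := HardyField.exists_max (s := Finset.range K) ⟨j0, Finset.mem_range.2 hj0⟩
    (u := fun j t => |zz a η x j t|) fun j _ => HardyField.abs_mem (h.zz_mem x j)
  have hi' := Finset.mem_range.1 hi
  have h0 : Tendsto (fun t => |zz a η x i t|) atTop (𝓝 0) :=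
    squeeze_zero' (Eventually.of_forall fun t => abs_nonneg _) (h.zz_le hx i)
      (tendsto_rpow_neg_atTop h.pos)
  have h1 : Tendsto (fun t => t * |zz a η x i t|) atTop atTop := by
    refine tendsto_atTop_mono' _ ?_ hj0'
    filter_upwards [hmax j0 (Finset.mem_range.2 hj0), eventually_ge_atTop 0] with t h1 h2
    exact mul_le_mul_of_nonneg_left h1 h2
  refine ⟨_, HardyField.abs_mem (h.zz_mem x i), h0, h1, h.speed hi' h0 h1 ?_⟩
  intro j hj hji κ hκ
  obtain ⟨s, hs⟩ := (h.zz_hasE hx i).resolve_left fun hN => by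
    obtain ⟨t, h2, h3, h4⟩ := ((hN (-1)).and ((h1.eventually_gt_atTop 1).and
      (eventually_gt_atTop 0))).exists
    rw [Real.rpow_neg_one] at h2
    have : t * |zz a η x i t| ≤ t * t⁻¹ := mul_le_mul_of_nonneg_left h2 h4.le
    rw [mul_inv_cancel₀ h4.ne'] at this
    linarith
  obtain ⟨r, hr, hle⟩ : ∃ r < s, ∀ᶠ t : ℝ in atTop, |zz a η x j t| ≤ t ^ r := by
    rcases h.zz_hasE hx j with hN | ⟨s', hs'⟩
    · exact ⟨s - 1, by linarith, hN _⟩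
    · have hss : s' ≤ s := by
        by_contra hcon
        push Not at hcon
        obtain ⟨m, hm1, hm2⟩ := exists_between hcon
        have := hs'.le_of_le (r := m) (by
          filter_upwards [hmax j (Finset.mem_range.2 hj), hs.1 m hm1] with t h2 h3
            using h2.trans h3)
        linarith
      have hne : s' ≠ s := by
        intro he
        refine hg.1 j i _ _ _ _ hji (hasE_Dr hs') (hasE_Dr hs) ?_
        rw [he]; ring
      obtain ⟨m, hm1, hm2⟩ := exists_between (lt_of_le_of_ne hss hne)
      exact ⟨m, hm2, hs'.1 m hm1⟩
  obtain ⟨m, hm1, hm2⟩ := exists_between hr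
  have hgap : Tendsto (fun t : ℝ => t ^ (-(m - r))) atTop (𝓝 0) :=
    tendsto_rpow_neg_atTop (by linarith)
  filter_upwards [hle, hs.2 m hm2, hgap.eventually_lt_const hκ, eventually_gt_atTop 0]
    with t h2 h3 h4 ht
  calc |zz a η x j t| ≤ t ^ r := h2
    _ = t ^ (-(m - r)) * t ^ m := by rw [← Real.rpow_add ht]; congr 1; ring
    _ ≤ κ * t ^ m := by gcongr
    _ ≤ κ * |zz a η x i t| := by gcongr

/-- The condition on the leading term which is preserved by the induction. -/
def Lead (a : Fin k → ℝ → ℝ) (x : ℕ → Fin k → ℚ) : Prop :=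
  x 0 = 0 ∨ Tendsto (fun t => |Dr a 0 (x 0) t| / Real.log t) atTop atTop

/-- The terms of a sum which is not fast have speeds with exponents less than `-1`. -/
lemma Fam.slow_zz (h : Fam H a d η) (hg : Gen a η) {K : ℕ} {x : ℕ → Fin k → ℚ}
    (hx : x ∈ (hardySys h).G 1) (hl : Lead a x) (hf : ¬ Fast a η K x) :
    (0 < K → x 0 = 0) ∧
      ∀ j < K, ∃ δ : ℝ, 0 < δ ∧ ∀ᶠ t : ℝ in atTop, |zz a η x j t| ≤ t ^ (-1 - δ) := by
  have hx0 : 0 < K → x 0 = 0 := by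
    intro hK
    refine hl.resolve_right fun hl => hf ⟨0, hK, ?_⟩
    have := HardyField.tendsto_mul_deriv (h.Dr_mem 1 (x 0)) (h.ev_hasDerivAt 0 (x 0)) hl
    simpa [zz] using this
  refine ⟨hx0, fun j hj => ?_⟩
  rcases Nat.eq_zero_or_pos j with rfl | hj0
  · refine ⟨1, one_pos, ?_⟩
    filter_upwards [eventually_gt_atTop 0] with t ht
    rw [zz, hx0 hj, Dr_zero, mul_zero, abs_zero]
    positivity
  rcases h.zz_hasE hx j with hN | ⟨s, hs⟩
  · exact ⟨1, one_pos, hN _⟩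
  have hne : s ≠ -1 := by
    have := hg.2 j _ _ hj0.ne' (hasE_Dr hs)
    intro he; apply this; rw [he]; ring
  have hlt : s < -1 := by
    by_contra hcon
    have hcon : -1 < s := lt_of_le_of_ne (not_lt.1 hcon) hne.symm
    obtain ⟨m, hm1, hm2⟩ := exists_between hcon
    refine hf ⟨j, hj, tendsto_atTop_mono' _ ?_
      (tendsto_rpow_atTop (by linarith : (0 : ℝ) < 1 + m))⟩
    filter_upwards [hs.2 m hm2, eventually_gt_atTop 0] with t h1 ht
    rw [Real.rpow_add ht, Real.rpow_one]
    exact mul_le_mul_of_nonneg_left h1 ht.le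
  obtain ⟨m, hm1, hm2⟩ := exists_between hlt
  exact ⟨-1 - m, by linarith, by simpa using hs.1 m hm1⟩

open Polynomial in
/-- A sum which is not fast is a polynomial in `Q` up to a bounded error. -/
lemma Fam.slow_poly (h : Fam H a d η) (hg : Gen a η) {x : ℕ → Fin k → ℚ}
    (hx : x ∈ (hardySys h).G 1) (hx0 : x ∉ (hardySys h).G 0) (hl : Lead a x)
    (hf : ¬ Fast a η (4 * d + 4) x) :
    ∃ P : ℝ[X], 0 < P.natDegree ∧
      BddOnBlocks (blk (Mη η)) (fun ω => hReal a (4 * d + 4) x ω - P.eval (ω.2.2 : ℝ)) := by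
  obtain ⟨h0, hz⟩ := h.slow_zz hg hx hl hf
  have h0 := h0 (by omega)
  have key : ∀ j, ∃ c : ℝ, j < 4 * d + 4 → ∃ δ : ℝ, 0 < δ ∧
      (fun t => Dr a j (x j) t - c) =O[atTop] fun t : ℝ => t ^ (-(j * η) - δ) := by
    intro j
    by_cases hj : j < 4 * d + 4
    swap
    · exact ⟨0, fun h => absurd h hj⟩
    obtain ⟨δ, hδ, hb⟩ := hz j hj
    have hO : Dr a (j + 1) (x j) =O[atTop] fun t : ℝ => t ^ (-1 - (j * η + δ)) := by
      refine Asymptotics.IsBigO.of_bound 1 ?_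
      filter_upwards [hb, eventually_gt_atTop 0] with t h1 ht
      rw [Real.norm_eq_abs, Real.norm_eq_abs, abs_of_pos (Real.rpow_pos_of_pos ht _), one_mul]
      rw [zz, abs_mul, abs_of_pos (Real.rpow_pos_of_pos ht _)] at h1
      have h2 : t ^ ((j : ℝ) * η) * |Dr a (j + 1) (x j) t| ≤
          t ^ ((j : ℝ) * η) * t ^ (-1 - (j * η + δ)) := by
        refine h1.trans (le_of_eq ?_)
        rw [← Real.rpow_add ht]; congr 1; ring
      exact le_of_mul_le_mul_left h2 (Real.rpow_pos_of_pos ht _)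
    have hpos : 0 < j * η + δ := by have := h.pos; positivity
    obtain ⟨c, hc⟩ := exists_limit (h.ev_hasDerivAt j (x j)) hpos hO
    refine ⟨c, fun _ => ⟨δ, hδ, hc.congr_right fun t => ?_⟩⟩
    congr 1; ring
  choose c hc using key
  set c' : ℕ → ℝ := fun j => if j = 0 then 0 else c j with hc'
  have hc2 : ∀ j < 4 * d + 4, ∃ δ : ℝ, 0 < δ ∧
      (fun t => Dr a j (x j) t - c' j) =O[atTop] fun t : ℝ => t ^ (-(j * η) - δ) := by
    intro j hj
    by_cases hj0 : j = 0
    · subst hj0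
      refine ⟨1, one_pos, ?_⟩
      refine Asymptotics.IsBigO.of_bound 0 ?_
      simp [h0, Dr_zero, hc']
    · simpa [hc', hj0] using hc j hj
  set P : ℝ[X] := ∑ j ∈ Finset.range (4 * d + 4), C (c' j) * X ^ j with hP
  have hcoeff : ∀ j < 4 * d + 4, P.coeff j = c' j := by
    intro j hj
    rw [hP, finsetSum_coeff]
    simp only [coeff_C_mul, coeff_X_pow, mul_ite, mul_one, mul_zero]
    rw [Finset.sum_ite_eq, if_pos (Finset.mem_range.2 hj)]
  refine ⟨P, ?_, ?_⟩
  · by_contra hcon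
    have hdeg : P.natDegree = 0 := by omega
    apply hx0
    rw [mem_hardySys]
    intro j
    rcases le_or_gt (4 * d + 4) j with hj | hj
    · exact h.Ngl_top (by omega) _
    obtain ⟨δ, hδ, hO⟩ := hc2 j hj
    have hz : c' j = 0 := by
      rcases Nat.eq_zero_or_pos j with rfl | hj0
      · simp [hc']
      · rw [← hcoeff j hj]; exact coeff_eq_zero_of_natDegree_lt (by omega)
    rw [hz] at hO
    simp only [sub_zero] at hO
    exact mem_Ngl.2 ⟨δ, hδ, hO⟩
  · have e : (fun ω : ℕ × ℕ × ℕ => hReal a (4 * d + 4) x ω - P.eval (ω.2.2 : ℝ)) =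
        fun ω => ∑ j ∈ Finset.range (4 * d + 4),
          (ω.2.2 : ℝ) ^ j * (Dr a j (x j) ω.2.1 - c' j) := by
      funext ω
      rw [hReal_apply, hP, eval_finsetSum, ← Finset.sum_sub_distrib]
      refine Finset.sum_congr rfl fun j _ => ?_
      simp only [eval_mul, eval_C, eval_pow, eval_X]
      ring
    rw [e]
    refine BddOnBlocks.sum _ fun j hj => ?_
    obtain ⟨δ, hδ, hO⟩ := hc2 j (Finset.mem_range.1 hj)
    obtain ⟨C, hC0, hC⟩ := bdd_term h.pos (hO.trans (isBigO_rpow_of_le (by linarith :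
      -(j * η) - δ ≤ -(j * η))))
    refine ⟨C, ?_⟩
    filter_upwards [hC] with N hN ω hω
    rw [mem_blk] at hω
    rw [abs_mul, abs_of_nonneg (by positivity : (0 : ℝ) ≤ (ω.2.2 : ℝ) ^ j)]
    exact hN _ hω.2.2.1 hω.2.2.2 _ (by exact_mod_cast hω.2.1.1)

variable {X : Type*} [MeasurableSpace X] {μ : Measure X} [IsProbabilityMeasure μ]
  {T : ℤ → X → X}

/-- Decorrelation for tuples of degree one: the fast sums are eliminated, fastest first, and the
remaining ones are polynomials in `Q`. -/
lemma Fam.terminal (h : Fam H a d η) (hg : Gen a η) (hT : WM μ T)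
    (R : Finset (ℕ → Fin k → ℚ))
    (hR : ∀ x ∈ R, x ∈ (hardySys h).G 1 ∧ x ∉ (hardySys h).G 0 ∧ Lead a x) :
    SC μ T (blk (Mη η)) (fun x ω => ⌊hReal a (4 * d + 4) x ω⌋) R := by
  classical
  induction hn : (R.filter (Fast a η (4 * d + 4))).card generalizing R with
  | zero =>
    rw [Finset.card_eq_zero, Finset.filter_eq_empty_iff] at hn
    have hex : ∀ x, ∃ P : Polynomial ℝ, x ∈ R → 0 < P.natDegree ∧ BddOnBlocks (blk (Mη η))
        (fun ω => hReal a (4 * d + 4) x ω - P.eval (ω.2.2 : ℝ)) := by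
      intro x
      by_cases hx : x ∈ R
      · obtain ⟨P, hP⟩ := h.slow_poly hg (hR x hx).1 (hR x hx).2.1 (hR x hx).2.2 (hn hx)
        exact ⟨P, fun _ => hP⟩
      · exact ⟨0, fun hx' => absurd hx' hx⟩
    choose P hP using hex
    refine (SC.poly hT (Mη_tendsto h.pos) (R.image P) ?_).of_map hT P
      (fun i hi => Finset.mem_image_of_mem _ hi) ?_
    · intro Q hQ
      obtain ⟨x, hx, rfl⟩ := Finset.mem_image.1 hQ
      exact (hP x hx).1
    · intro x hx
      refine (hP x hx).2.int (D := 2) fun ω => ?_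
      have h1 := abs_le.1 (abs_floor_sub (hReal a (4 * d + 4) x ω))
      have h2 := abs_le.1 (abs_floor_sub (polyReal (P x) ω))
      have h3 : polyReal (P x) ω = (P x).eval (ω.2.2 : ℝ) := rfl
      push_cast
      rw [abs_le]; constructor <;> linarith
  | succ n ih =>
    have hne : (R.filter (Fast a η (4 * d + 4))).Nonempty := by
      rw [← Finset.card_pos]; omega
    have hex : ∀ x, ∃ w : ℝ → ℝ, x ∈ R.filter (Fast a η (4 * d + 4)) →
        w ∈ H.carrier ∧ Tendsto w atTop (𝓝 0) ∧ Tendsto (fun t => t * w t) atTop atTop ∧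
        Up (Mη η) (hReal a (4 * d + 4) x) w ∧ Lo (Mη η) (hReal a (4 * d + 4) x) w := by
      intro x
      by_cases hx : x ∈ R.filter (Fast a η (4 * d + 4))
      · have hx' := Finset.mem_filter.1 hx
        obtain ⟨w, hw⟩ := h.fast_speed hg (hR x hx'.1).1 hx'.2
        exact ⟨w, fun _ => hw⟩
      · exact ⟨0, fun hx' => absurd hx' hx⟩
    choose w hw using hex
    obtain ⟨q, hq, hmax⟩ := HardyField.exists_max hne (u := w) fun i hi => (hw i hi).1
    have hq' := Finset.mem_filter.1 hq
    have hSC := ih (R.erase q) (fun x hx => hR x (Finset.mem_of_mem_erase hx)) (by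
      rw [Finset.filter_erase, Finset.card_erase_of_mem hq, hn]; rfl)
    obtain ⟨-, hq0, hq1, -, hqlo⟩ := hw q hq
    have := SC.peel hT (g := hReal a (4 * d + 4)) (Finset.notMem_erase q R) hSC hq0 hq1 ?_ hqlo
    · rwa [Finset.insert_erase hq'.1] at this
    · rw [Finset.insert_erase hq'.1]
      intro x hx
      by_cases hxf : Fast a η (4 * d + 4) x
      · have hxm := Finset.mem_filter.2 ⟨hx, hxf⟩
        exact (hw x hxm).2.2.2.1.mono (hmax x hxm)
      · obtain ⟨-, hz⟩ := h.slow_zz hg (hR x hx).1 (hR x hx).2.2 hxf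
        refine (h.slow_up (4 * d + 4) fun j hj => ?_).mono (w := fun t => t⁻¹) ?_
        · obtain ⟨δ, hδ, hb⟩ := hz j hj
          filter_upwards [hb, eventually_ge_atTop 1] with t h1 ht
          refine h1.trans ?_
          rw [← Real.rpow_neg_one]
          exact Real.rpow_le_rpow_of_exponent_le ht (by linarith)
        · filter_upwards [hq1.eventually_ge_atTop 1, eventually_gt_atTop 0] with t h1 ht
          rw [inv_le_iff_one_le_mul₀ ht]; linarith

/-- Decorrelation along finitely many rational combinations of the functions `a i`, all of which
grow faster than `log`. -/
theorem Fam.decorrelate (h : Fam H a d η) (hg : Gen a η) (hT : WM μ T)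
    (R : Finset (Fin k → ℚ))
    (hR : ∀ b ∈ R, Tendsto (fun t => |Dr a 0 b t| / Real.log t) atTop atTop) :
    SC μ T (blk (Mη η)) (fun b ω => ⌊Dr a 0 b ω.2.1⌋) R := by
  classical
  have hsh : Shift (blk (Mη η)) (shN fun _ Q => Q) := by
    refine shN_shift fun κ hκ => ?_
    filter_upwards [Mη_small (show η < 1 by linarith [h.lt]) hκ, eventually_ge_atTop 1] with N h1 h2 Q h3 h4
    exact (Mη_bounds h.pos h2 h3 h4).2.trans h1
  have main := SC.of_degSys hT (hardySys h) (hReal a (4 * d + 4)) hsh (hReal_shift h)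
    (fun v hv => hReal_bdd h hv _) (Al := Lead a) (Or.inl rfl) ?_ (h.terminal hg hT)
    (4 * d + 3) (R.image fun b => Pi.single 0 b) ?_
  · refine main.of_map hT (fun b => Pi.single 0 b) (fun b hb => Finset.mem_image_of_mem _ hb) ?_
    intro b _
    refine ⟨0, Eventually.of_forall fun N ω _ => ?_⟩
    have : hReal a (4 * d + 4) (Pi.single 0 b) ω = Dr a 0 b ω.2.1 := by
      rw [hReal_apply, Finset.sum_eq_single 0]
      · simp
      · intro j _ hj
        rw [Pi.single_eq_of_ne hj, Dr_zero, mul_zero]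
      · simp
    rw [this]; simp
  · intro q e v hv
    have e1 : (hardySys h).phi q e v 0 = v 0 := by
      simp [DegSys.phi, hardySys_σ, tc]
    unfold Lead at hv ⊢
    rwa [e1]
  · intro x hx
    obtain ⟨b, hb, rfl⟩ := Finset.mem_image.1 hx
    refine ⟨?_, ?_, ?_⟩
    · rw [mem_hardySys]
      exact fun j => h.Ngl_top (by omega) _
    · rw [mem_hardySys]
      intro hcon
      have h0 := hcon 0
      simp only [Pi.single_eq_same, add_zero] at h0
      -- a negligible function is bounded, hence not of larger order than `log`
      have hO := bdd_of_Ngl h.pos h0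
      obtain ⟨C, hC⟩ := hO.bound
      obtain ⟨t, h1, h2, h3⟩ := (hC.and (((hR b hb).eventually_gt_atTop (|C|)).and
        (eventually_gt_atTop (Real.exp 1)))).exists
      have hlog : 1 < Real.log t := by
        rw [Real.lt_log_iff_exp_lt ((Real.exp_pos 1).trans h3)]; exact h3
      simp only [Nat.cast_zero, zero_mul, neg_zero, Real.rpow_zero, Real.norm_eq_abs, abs_one,
        mul_one] at h1
      rw [lt_div_iff₀ (by linarith)] at h2
      have := le_abs_self C
      nlinarith [abs_nonneg C]
    · right
      simpa using hR b hb

end Terminal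

/-! ### From decorrelation to convergence of averages -/

section Final
variable {X : Type*} [MeasurableSpace X] {μ : Measure X} [IsProbabilityMeasure μ]
  {T : ℤ → X → X}

/-- Functions of `n` only are averaged over `[N, 2N)`. -/
lemma SC.of_blk {ι : Type*} {ρ : ι → ℕ → ℤ} {R : Finset ι} {M : ℕ → ℕ}
    (hM : Tendsto M atTop atTop) (h : SC μ T (blk M) (fun i ω => ρ i ω.2.1) R) :
    SC μ T (fun N => Finset.Ico N (2 * N)) ρ R := by
  intro f hf hf0 ε hε
  filter_upwards [h f hf hf0 ε hε, hM.eventually_gt_atTop 0] with N hN hM0 F hF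
  refine le_of_eq_of_le ?_ (hN F hF)
  have hM' : (M N : ℝ) ≠ 0 := by exact_mod_cast hM0.ne'
  have h1 : 2 * N - N = N := by omega
  have h2 : 2 * M N - M N = M N := by omega
  unfold av
  rw [card_blk, blk, Finset.sum_product, Finset.sum_singleton, Finset.sum_product]
  simp only [Finset.sum_const, Nat.card_Ico, h1, h2, nsmul_eq_mul]
  rw [← Finset.mul_sum]
  push_cast
  rw [mul_comm (N : ℝ), mul_div_mul_left _ _ hM']

/-- Small averages over all late dyadic blocks give small sums over long intervals. -/
lemma sum_of_dyadic {φ : ℕ → ℝ} (hφ : ∀ n, 0 ≤ φ n) {δ : ℝ} (hδ : 0 ≤ δ) {N0 : ℕ} (h0 : 1 ≤ N0)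
    (h : ∀ N, N0 ≤ N → ∑ n ∈ Finset.Ico N (2 * N), φ n ≤ δ * N) (N : ℕ) (hN : N0 ≤ N) :
    ∑ n ∈ Finset.Ico N0 N, φ n ≤ 3 * δ * N := by
  induction N using Nat.strong_induction_on with
  | _ N ih =>
    rcases hN.eq_or_lt with rfl | hlt
    · simp; positivity
    have hsub : ∀ m, N ≤ 2 * m → ∑ n ∈ Finset.Ico m N, φ n ≤ ∑ n ∈ Finset.Ico m (2 * m), φ n :=
      fun m hm => Finset.sum_le_sum_of_subset_of_nonneg (Finset.Ico_subset_Ico le_rfl hm)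
        fun n _ _ => hφ n
    rcases le_or_gt N0 ((N + 1) / 2) with hm | hm
    · set m := (N + 1) / 2 with hmdef
      have h1 := ih m (by omega) hm
      have h2 := (hsub m (by omega)).trans (h m hm)
      rw [← Finset.sum_Ico_consecutive φ hm (by omega : m ≤ N)]
      have h3 : (2 : ℝ) * m ≤ N + 1 := by exact_mod_cast (by omega : 2 * m ≤ N + 1)
      have h4 : (2 : ℝ) ≤ N := by exact_mod_cast (by omega : 2 ≤ N)
      nlinarith
    · have h2 := (hsub N0 (by omega)).trans (h N0 le_rfl)
      have h3 : (N0 : ℝ) ≤ N := by exact_mod_cast hN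
      have h4 : (0 : ℝ) ≤ N := by positivity
      nlinarith

lemma SC.of_dyadic (hT : WM μ T) {ι : Type*} {ρ : ι → ℕ → ℤ} {R : Finset ι}
    (h : SC μ T (fun N => Finset.Ico N (2 * N)) ρ R) :
    SC μ T (fun N => Finset.Icc 1 N) ρ R := by
  intro f hf hf0 ε hε
  obtain ⟨N1, hN1⟩ := eventually_atTop.1 (h f hf hf0 (ε / 12) (by positivity))
  set N0 := max N1 1 with hN0
  obtain ⟨N2, hN2⟩ := exists_nat_ge (2 * N0 / ε)
  filter_upwards [eventually_ge_atTop (max N0 N2)] with N hN F hF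
  set φ : ℕ → ℝ := fun n => |∫ x, f x * ∏ i ∈ R, F i (T (ρ i n) x) ∂μ| with hφ
  have hφ0 : ∀ n, 0 ≤ φ n := fun n => abs_nonneg _
  have hφ1 : ∀ n, φ n ≤ 1 := fun n =>
    (hf.mul (Adm.prod (R := R) (F := fun i x => F i (T (ρ i n) x))
      fun i _ => (hF i).comp (hT.meas _))).abs_integral_le
  have hNN0 : N0 ≤ N := (le_max_left _ _).trans hN
  have h01 : 1 ≤ N0 := le_max_right _ _
  have hdy : ∑ n ∈ Finset.Ico N0 (N + 1), φ n ≤ 3 * (ε / 12) * (N + 1 : ℕ) := by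
    refine sum_of_dyadic hφ0 (by positivity) h01 ?_ _ (by omega)
    intro m hm
    have hm0 : (0 : ℝ) < m := by exact_mod_cast (by omega : 0 < m)
    have := hN1 m ((le_max_left _ _).trans hm) F hF
    rw [av, Nat.card_Ico, show 2 * m - m = m by omega, div_le_iff₀ hm0] at this
    exact this
  have hearly : ∑ n ∈ Finset.Ico 1 N0, φ n ≤ N0 := by
    calc ∑ n ∈ Finset.Ico 1 N0, φ n ≤ ∑ n ∈ Finset.Ico 1 N0, (1 : ℝ) :=
          Finset.sum_le_sum fun n _ => hφ1 n
      _ = ((N0 - 1 : ℕ) : ℝ) := by simp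
      _ ≤ N0 := by exact_mod_cast Nat.sub_le _ _
  have hN1' : (1 : ℝ) ≤ N := by exact_mod_cast h01.trans hNN0
  have hbig : 2 * N0 ≤ ε * N := by
    rw [div_le_iff₀ hε] at hN2
    have : (N2 : ℝ) ≤ N := by exact_mod_cast (le_max_right _ _).trans hN
    nlinarith
  rw [av, Nat.card_Icc, Nat.add_sub_cancel, div_le_iff₀ (by linarith)]
  have e : Finset.Icc 1 N = Finset.Ico 1 (N + 1) := by ext; simp
  rw [e, ← Finset.sum_Ico_consecutive _ h01 (by omega : N0 ≤ N + 1)]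
  push_cast at hdy
  calc _ ≤ (N0 : ℝ) + 3 * (ε / 12) * (N + 1) := add_le_add hearly hdy
    _ ≤ ε * N := by nlinarith

variable {k : ℕ} {a : Fin k → ℝ → ℝ}

/-- The multiple ergodic averages. -/
def Av (a : Fin k → ℝ → ℝ) (T : ℤ → X → X) (g : Fin k → X → ℝ) (N : ℕ) (x : X) : ℝ :=
  av (Finset.Icc 1 N) (fun n => ∏ i, g i (T ⌊a i n⌋ x))

lemma Av_adm (hT : WM μ T) {g : Fin k → X → ℝ} (hg : ∀ i, Adm (g i)) (N : ℕ) :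
    Adm (Av a T g N) := by
  have hterm : ∀ n : ℕ, Adm (fun x => ∏ i, g i (T ⌊a i n⌋ x)) := fun n =>
    Adm.prod (F := fun i x => g i (T ⌊a i n⌋ x)) fun i _ => (hg i).comp (hT.meas _)
  constructor
  · unfold Av av
    exact (Finset.measurable_sum _ fun n _ => (hterm n).1).div_const _
  · intro x
    rw [abs_le]
    constructor
    · have : -Av a T g N x = av (Finset.Icc 1 N) (fun n => -∏ i, g i (T ⌊a i n⌋ x)) := by
        simp [Av, av, neg_div]
      have h2 : -Av a T g N x ≤ 1 := by
        rw [this]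
        exact av_le_of_le zero_le_one fun n _ => by linarith [(abs_le.1 ((hterm n).2 x)).1]
      linarith
    · exact av_le_of_le zero_le_one fun n _ => (abs_le.1 ((hterm n).2 x)).2

/-- Averages vanish in the limit if one of the functions has mean zero. -/
lemma Av_zero {H : HardyField} {d : ℕ} {η : ℝ} (h : Fam H a d η) (hgen : Gen a η) (hT : WM μ T)
    (hlog : ∀ i, Tendsto (fun t => |a i t| / Real.log t) atTop atTop)
    (hdiff : ∀ i j, i ≠ j → Tendsto (fun t => |a i t - a j t| / Real.log t) atTop atTop)
    {g : Fin k → X → ℝ} (hg : ∀ i, Adm (g i)) {i0 : Fin k} (h0 : ∫ x, g i0 x ∂μ = 0) :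
    Tendsto (fun N => ∫ x, Av a T g N x ^ 2 ∂μ) atTop (𝓝 0) := by
  classical
  set b : Fin k → Fin k → ℚ := fun i =>
    if i = i0 then -Pi.single i0 1 else Pi.single i 1 - Pi.single i0 1 with hb
  have hsing : ∀ i t, ∑ l, ((Pi.single i 1 : Fin k → ℚ) l : ℝ) * a l t = a i t := by
    intro i t
    rw [Finset.sum_eq_single i] <;> simp +contextual [Pi.single_apply]
  have hDr : ∀ i t, Dr a 0 (b i) t = if i = i0 then -a i0 t else a i t - a i0 t := by
    intro i t
    simp only [Dr, iteratedDeriv_zero, hb]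
    split_ifs with hi
    · simp only [Pi.neg_apply, Rat.cast_neg, neg_mul, Finset.sum_neg_distrib, hsing]
    · simp only [Pi.sub_apply, Rat.cast_sub, sub_mul, Finset.sum_sub_distrib, hsing]
  set ρ : Fin k → ℕ → ℤ := fun i n => (if i = i0 then 0 else ⌊a i n⌋) - ⌊a i0 n⌋ with hρ
  have hSC : SC μ T (fun N => Finset.Icc 1 N) ρ Finset.univ := by
    have h1 := h.decorrelate hgen hT (Finset.univ.image b) (by
      intro v hv
      obtain ⟨i, -, rfl⟩ := Finset.mem_image.1 hv
      simp only [hDr]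
      split_ifs with hi
      · simpa only [abs_neg] using hlog i0
      · exact hdiff i i0 hi)
    have h2 := SC.of_dyadic hT
      (SC.of_blk (ρ := fun v n => ⌊Dr a 0 v n⌋) (Mη_tendsto h.pos) h1)
    refine h2.of_map hT b (fun i _ => Finset.mem_image_of_mem _ (Finset.mem_univ i)) ?_
    intro i _
    refine ⟨3, Eventually.of_forall fun N n _ => ?_⟩
    have e1 := abs_le.1 (abs_floor_sub (a i0 n))
    have e2 := abs_le.1 (abs_floor_sub (a i n))
    have e3 := abs_le.1 (abs_floor_sub (Dr a 0 (b i) n))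
    have hR : |((ρ i n - ⌊Dr a 0 (b i) n⌋ : ℤ) : ℝ)| ≤ 3 := by
      rw [hDr] at e3 ⊢
      simp only [hρ]
      split_ifs with hi
      · rw [if_pos hi] at e3
        push_cast
        rw [abs_le]; constructor <;> linarith
      · rw [if_neg hi] at e3
        push_cast
        rw [abs_le]; constructor <;> linarith
    exact_mod_cast hR
  -- the square of the norm is itself an average of correlations
  have hid : ∀ N (n : ℕ), ∫ x, Av a T g N x * ∏ i, g i (T ⌊a i n⌋ x) ∂μ =
      ∫ x, g i0 x * ∏ i, (if i = i0 then Av a T g N else g i) (T (ρ i n) x) ∂μ := by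
    intro N n
    have hA : Adm (fun x => Av a T g N x * ∏ i, g i (T ⌊a i n⌋ x)) :=
      (Av_adm hT hg N).mul
        (Adm.prod (F := fun i x => g i (T ⌊a i n⌋ x)) fun i _ => (hg i).comp (hT.meas _))
    rw [← hT.integral_comp (-⌊a i0 n⌋) hA.1]
    congr 1
    funext x
    rw [← Finset.mul_prod_erase _ _ (Finset.mem_univ i0),
      ← Finset.mul_prod_erase (a := i0) Finset.univ
        (fun i => (if i = i0 then Av a T g N else g i) (T (ρ i n) x)) (Finset.mem_univ i0)]
    have e1 : ∏ i ∈ Finset.univ.erase i0, g i (T ⌊a i n⌋ (T (-⌊a i0 n⌋) x)) =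
        ∏ i ∈ Finset.univ.erase i0, (if i = i0 then Av a T g N else g i) (T (ρ i n) x) := by
      refine Finset.prod_congr rfl fun i hi => ?_
      have hi := Finset.ne_of_mem_erase hi
      simp only [hρ, if_neg hi, hT.comp_apply, sub_eq_add_neg]
    rw [e1]
    simp only [hρ, if_true, hT.comp_apply, add_neg_cancel, hT.zero, id, zero_sub]
    ring
  have hnonneg : ∀ N, 0 ≤ ∫ x, Av a T g N x ^ 2 ∂μ := fun N =>
    integral_nonneg fun x => sq_nonneg _
  rw [Metric.tendsto_atTop']
  intro ε hε
  obtain ⟨N0, hN0⟩ := eventually_atTop.1 (hSC (g i0) (hg i0) h0 (ε / 2) (by positivity))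
  refine ⟨N0, fun N hN => ?_⟩
  rw [Real.dist_eq, sub_zero, abs_of_nonneg (hnonneg N)]
  have hF := hN0 N hN.le (fun i => if i = i0 then Av a T g N else g i) (fun i => by
    split_ifs
    exacts [Av_adm hT hg N, hg i])
  have hInt : ∀ n : ℕ, Integrable (fun x => Av a T g N x * ∏ i, g i (T ⌊a i n⌋ x)) μ := fun n =>
    ((Av_adm hT hg N).mul
      (Adm.prod (F := fun i x => g i (T ⌊a i n⌋ x)) fun i _ =>
        (hg i).comp (hT.meas _))).integrable
  have hsq : ∫ x, Av a T g N x ^ 2 ∂μ =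
      av (Finset.Icc 1 N) (fun n => ∫ x, Av a T g N x * ∏ i, g i (T ⌊a i n⌋ x) ∂μ) := by
    rw [av, ← integral_finsetSum _ fun n _ => hInt n, ← integral_div]
    congr 1
    funext x
    rw [← Finset.mul_sum, sq, mul_div_assoc]
    rfl
  rw [hsq]
  refine lt_of_le_of_lt ((av_mono fun n _ => ?_).trans hF) (by linarith)
  rw [hid]
  exact le_abs_self _

lemma prod_update (g : Fin k → X → ℝ) (i0 : Fin k) (p : X → ℝ) (y : Fin k → X) :
    ∏ i, Function.update g i0 p i (y i) =
      p (y i0) * ∏ i ∈ Finset.univ.erase i0, g i (y i) := by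
  rw [← Finset.mul_prod_erase _ _ (Finset.mem_univ i0), Function.update_self]
  congr 1
  exact Finset.prod_congr rfl fun i hi => by
    rw [Function.update_of_ne (Finset.ne_of_mem_erase hi)]

/-- Convergence for functions bounded by one: the functions are replaced by their means one at a
time. -/
lemma Av_tendsto {H : HardyField} {d : ℕ} {η : ℝ} (h : Fam H a d η) (hgen : Gen a η)
    (hT : WM μ T) (hlog : ∀ i, Tendsto (fun t => |a i t| / Real.log t) atTop atTop)
    (hdiff : ∀ i j, i ≠ j → Tendsto (fun t => |a i t - a j t| / Real.log t) atTop atTop)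
    {f : Fin k → X → ℝ} (hf : ∀ i, Adm (f i)) :
    Tendsto (fun N => ∫ x, (Av a T f N x - ∏ i, ∫ y, f i y ∂μ) ^ 2 ∂μ) atTop (𝓝 0) := by
  classical
  set c : Fin k → ℝ := fun i => ∫ y, f i y ∂μ with hc
  have hc1 : ∀ i, |c i| ≤ 1 := fun i => (hf i).abs_integral_le
  have hcA : ∀ i, Adm (fun _ : X => c i) := fun i => ⟨measurable_const, fun _ => hc1 i⟩
  have hP : |∏ i, c i| ≤ 1 := by
    rw [Finset.abs_prod]
    exact Finset.prod_le_one (fun i _ => abs_nonneg _) fun i _ => hc1 i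
  have key : ∀ s : Finset (Fin k), Tendsto (fun N => ∫ x,
      (Av a T (fun i => if i ∈ s then f i else fun _ => c i) N x - ∏ i, c i) ^ 2 ∂μ)
      atTop (𝓝 0) := by
    intro s
    induction s using Finset.induction_on with
    | empty =>
      refine tendsto_const_nhds.congr' ?_
      filter_upwards [eventually_ge_atTop 1] with N hN
      have hN' : (N : ℝ) ≠ 0 := by exact_mod_cast (by omega : N ≠ 0)
      simp [Av, av, hN']
    | insert i0 s hi0 ih =>
      set g : Fin k → X → ℝ := fun i => if i ∈ s then f i else fun _ => c i with hg
      have hgA : ∀ i, Adm (g i) := fun i => by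
        simp only [hg]; split_ifs; exacts [hf i, hcA i]
      set q : X → ℝ := fun x => (1 / 2) * (f i0 x - c i0) with hq
      have hqA : Adm q := by
        refine ⟨((hf i0).1.sub_const _).const_mul _, fun x => ?_⟩
        have h1 := abs_le.1 ((hf i0).2 x)
        have h2 := abs_le.1 (hc1 i0)
        simp only [hq]
        rw [abs_le]; constructor <;> linarith
      have hq0 : ∫ x, q x ∂μ = 0 := by
        simp only [hq]
        rw [integral_const_mul, integral_sub (hf i0).integrable (integrable_const _)]
        simp [hc]
      have e1 : (fun i => if i ∈ insert i0 s then f i else fun _ => c i) =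
          Function.update g i0 (f i0) := by
        funext i
        by_cases hi : i = i0
        · subst hi; simp
        · simp [hi, hg]
      have e2 : g = Function.update g i0 (fun _ => c i0) := by
        funext i
        by_cases hi : i = i0
        · subst hi; simp [hg, hi0]
        · simp [hi]
      have hupA : ∀ i, Adm (Function.update g i0 q i) := fun i => by
        by_cases hi : i = i0
        · subst hi; simpa using hqA
        · simpa [hi] using hgA i
      have hsplit : ∀ N x, Av a T (Function.update g i0 (f i0)) N x =
          Av a T g N x + 2 * Av a T (Function.update g i0 q) N x := by
        intro N x
        conv_rhs => rw [e2]
        rw [Function.update_idem]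
        unfold Av
        rw [← av_mul_left, ← av_add]
        congr 1
        funext n
        rw [prod_update g i0 (f i0) (fun i => T ⌊a i n⌋ x),
          prod_update g i0 q (fun i => T ⌊a i n⌋ x),
          prod_update g i0 (fun _ => c i0) (fun i => T ⌊a i n⌋ x)]
        simp only [hq]; ring
      rw [e1]
      have hz := Av_zero h hgen hT hlog hdiff hupA (i0 := i0) (by simpa using hq0)
      have hsum : Tendsto (fun N => 2 * ∫ x, (Av a T g N x - ∏ i, c i) ^ 2 ∂μ +
          8 * ∫ x, Av a T (Function.update g i0 q) N x ^ 2 ∂μ) atTop (𝓝 0) := by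
        simpa using (ih.const_mul 2).add (hz.const_mul 8)
      refine squeeze_zero (fun N => integral_nonneg fun x => sq_nonneg _) (fun N => ?_) hsum
      have hI : ∀ {g' : Fin k → X → ℝ}, (∀ i, Adm (g' i)) →
          ∀ r : ℝ, Integrable (fun x => (Av a T g' N x - r) ^ 2) μ := by
        intro g' hg' r
        have hA := Av_adm (a := a) hT hg' N
        refine Integrable.of_bound ((hA.1.sub_const r).pow_const 2).aestronglyMeasurable
          ((1 + |r|) ^ 2) (ae_of_all _ fun x => ?_)
        rw [Real.norm_eq_abs, abs_pow]
        have := abs_sub (Av a T g' N x) r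
        have := hA.2 x
        gcongr
        linarith
      have hI1 := hI hgA (∏ i, c i)
      have hI2 : Integrable (fun x => Av a T (Function.update g i0 q) N x ^ 2) μ := by
        simpa using hI hupA 0
      rw [← integral_const_mul, ← integral_const_mul,
        ← integral_add (hI1.const_mul 2) (hI2.const_mul 8)]
      refine integral_mono_of_nonneg (ae_of_all _ fun x => sq_nonneg _)
        ((hI1.const_mul 2).add (hI2.const_mul 8)) (ae_of_all _ fun x => ?_)
      simp only [hsplit]
      nlinarith [sq_nonneg (Av a T g N x - ∏ i, c i - 2 * Av a T (Function.update g i0 q) N x)]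
  simpa using key Finset.univ

end Final

lemma exists_fam (H : HardyField) {k : ℕ} (a : Fin k → ℝ → ℝ) (haH : ∀ i, a i ∈ H.carrier)
    (hgrowth : ∀ i, PolynomialGrowth (a i)) : ∃ (d : ℕ) (η : ℝ), Fam H a d η ∧ Gen a η := by
  obtain ⟨η, h0, h1, hg⟩ := exists_gen a
  choose D hD0 hD using hgrowth
  refine ⟨∑ i, D i, η, ⟨haH, fun i => ?_, h0, h1⟩, hg⟩
  refine Asymptotics.IsBigO.of_bound 1 ?_
  filter_upwards [(hD i).eventually (Metric.ball_mem_nhds 0 one_pos), eventually_ge_atTop 1]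
    with t h2 ht
  have ht0 : (0 : ℝ) < t := by linarith
  have h3 : |a i t / t ^ D i| < 1 := by
    have h4 := Metric.mem_ball.1 h2
    rwa [Real.dist_eq, sub_zero] at h4
  rw [abs_div, abs_of_pos (pow_pos ht0 _), div_lt_one (pow_pos ht0 _)] at h3
  rw [one_mul, Real.norm_eq_abs, Real.norm_eq_abs, Real.rpow_natCast, abs_of_pos (pow_pos ht0 _)]
  exact h3.le.trans (pow_le_pow_right₀ ht
    (Finset.single_le_sum (f := D) (fun i _ => Nat.zero_le _) (Finset.mem_univ i)))

/-- If `a_1, …, a_k` belong to a Hardy field, have polynomial growth,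
`|a_i(t)|/log t → ∞` and `|a_i(t) - a_j(t)|/log t → ∞` for `i ≠ j`, then for every
weak-mixing invertible measure-preserving system (i.e. a system whose product with itself is
ergodic) and all bounded measurable `f_1, …, f_k`, the multiple ergodic averages converge in
`L²(μ)` to the product of the integrals. -/
theorem statement3 (H : HardyField) (k : ℕ) (hk : 0 < k)
    (a : Fin k → ℝ → ℝ) (haH : ∀ i, a i ∈ H.carrier)
    (hgrowth : ∀ i, PolynomialGrowth (a i))
    (hlog : ∀ i, Tendsto (fun t => |a i t| / Real.log t) atTop atTop)
    (hdiff : ∀ i j, i ≠ j → Tendsto (fun t => |a i t - a j t| / Real.log t) atTop atTop)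
    (X : Type*) [MeasurableSpace X] (μ : Measure X) [IsProbabilityMeasure μ]
    (T : ℤ → X → X) (hT : ∀ n : ℤ, MeasurePreserving (T n) μ μ)
    (hT0 : T 0 = id) (hTadd : ∀ m n : ℤ, T (m + n) = T m ∘ T n)
    (hWM : Ergodic (fun p : X × X => (T 1 p.1, T 1 p.2)) (μ.prod μ))
    (f : Fin k → X → ℝ) (hf_meas : ∀ i, Measurable (f i))
    (hf_bdd : ∀ i, ∃ C : ℝ, ∀ x, |f i x| ≤ C) :
    Tendsto (fun N : ℕ =>
      eLpNorm (fun x =>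
        (N : ℝ)⁻¹ * ∑ n ∈ Finset.Icc 1 N, ∏ i, f i (T ⌊a i (n : ℝ)⌋ x)
          - ∏ i, ∫ x, f i x ∂μ) 2 μ)
      atTop (𝓝 0) := by
  have hW : WM μ T := ⟨hT, hT0, hTadd, hWM⟩
  obtain ⟨d, η, hfam, hgen⟩ := exists_fam H a haH hgrowth
  choose C hC using hf_bdd
  -- the functions are scaled to be bounded by one
  set B : Fin k → ℝ := fun i => |C i| + 1 with hB
  have hB0 : ∀ i, 0 < B i := fun i => by positivity
  set g : Fin k → X → ℝ := fun i x => (B i)⁻¹ * f i x with hg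
  have hgA : ∀ i, Adm (g i) := by
    intro i
    refine ⟨(hf_meas i).const_mul _, fun x => ?_⟩
    simp only [hg]
    rw [abs_mul, abs_of_pos (inv_pos.2 (hB0 i)), inv_mul_le_iff₀ (hB0 i), mul_one]
    exact (hC i x).trans ((le_abs_self _).trans (by simp [hB]))
  have hfg : ∀ i x, f i x = B i * g i x := fun i x => by
    simp only [hg]; rw [mul_inv_cancel_left₀ (hB0 i).ne']
  set b : ℝ := ∏ i, B i with hb
  have hfun : ∀ N : ℕ, (fun x => (N : ℝ)⁻¹ * ∑ n ∈ Finset.Icc 1 N, ∏ i, f i (T ⌊a i (n : ℝ)⌋ x)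
      - ∏ i, ∫ x, f i x ∂μ) = fun x => b * (Av a T g N x - ∏ i, ∫ x, g i x ∂μ) := by
    intro N
    funext x
    have e1 : ∏ i, ∫ x, f i x ∂μ = b * ∏ i, ∫ x, g i x ∂μ := by
      rw [hb, ← Finset.prod_mul_distrib]
      refine Finset.prod_congr rfl fun i _ => ?_
      rw [← integral_const_mul]
      simp only [hfg]
    have e2 : ∀ n : ℕ, ∏ i, f i (T ⌊a i (n : ℝ)⌋ x) = b * ∏ i, g i (T ⌊a i (n : ℝ)⌋ x) := by
      intro n
      rw [hb, ← Finset.prod_mul_distrib]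
      exact Finset.prod_congr rfl fun i _ => hfg i _
    simp only [e2]
    rw [e1, ← Finset.mul_sum, Av, av, Nat.card_Icc, Nat.add_sub_cancel]
    ring
  have hmain := Av_tendsto hfam hgen hW hlog hdiff hgA
  have hmem : ∀ N : ℕ, MemLp (fun x => b * (Av a T g N x - ∏ i, ∫ x, g i x ∂μ)) 2 μ := by
    intro N
    have hA := Av_adm (a := a) hW hgA N
    refine MemLp.of_bound ((hA.1.sub_const _).const_mul b).aestronglyMeasurable
      (|b| * (1 + |∏ i, ∫ x, g i x ∂μ|)) (ae_of_all _ fun x => ?_)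
    rw [Real.norm_eq_abs, abs_mul]
    have h1 := abs_sub (Av a T g N x) (∏ i, ∫ x, g i x ∂μ)
    have h2 := hA.2 x
    gcongr
    linarith
  have heq : ∀ N : ℕ, eLpNorm (fun x => (N : ℝ)⁻¹ *
      ∑ n ∈ Finset.Icc 1 N, ∏ i, f i (T ⌊a i (n : ℝ)⌋ x) - ∏ i, ∫ x, f i x ∂μ) 2 μ =
      ENNReal.ofReal ((b ^ 2 * ∫ x, (Av a T g N x - ∏ i, ∫ x, g i x ∂μ) ^ 2 ∂μ) ^ (2 : ℝ)⁻¹) := by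
    intro N
    rw [hfun N, (hmem N).eLpNorm_eq_integral_rpow_norm (by norm_num) (by norm_num)]
    simp only [ENNReal.toReal_ofNat, Real.rpow_ofNat, Real.norm_eq_abs, sq_abs, mul_pow]
    rw [integral_const_mul]
  simp only [heq]
  rw [← ENNReal.ofReal_zero]
  refine ENNReal.tendsto_ofReal ?_
  have h1 := (hmain.const_mul (b ^ 2)).rpow_const (p := (2 : ℝ)⁻¹) (Or.inr (by norm_num))
  simpa using h1
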